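/- arXiv:2310.11694 — 2 statements merged into one kernel-verified Lean document; each statement's English description precedes it below -/
import Mathlib

section
/- There exist constants ε₀, ν₀ ∈ (0,1) and C > 0, independent of ν, k, λ and ε, such that for every 0 < ν ≤ ν₀, every 0 < ε ≤ ε₀, every k = (k₁,k₃) ∈ ℤ² with |k₁| ≥ 1, every λ ∈ ℝ, every F ∈ L²(I), and every solution w ∈ H¹(I) of the ε-modified Orr–Sommerfeld problem with Navier-slip boundary conditions and right-hand side F, one has ‖u‖_{L²} ≤ C (ν|k₁|)^{−1/2} ‖F‖_{H⁻¹_k}. -/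
open Real MeasureTheory

noncomputable section

/-- `|k| = sqrt (k₁² + k₃²)` for `k = (k₁,k₃) ∈ ℤ²`. -/
def kabs (k₁ k₃ : ℤ) : ℝ := Real.sqrt ((k₁ : ℝ) ^ 2 + (k₃ : ℝ) ^ 2)

/-- `‖g‖_{H¹_k} = (‖g'‖² + |k|²‖g‖²)^{1/2}`; for `g = φ` this is the `L²`
norm of the velocity `u = (∂_yφ, -i|k|φ)`. -/
def hk (k₁ k₃ : ℤ) (f : ℝ → ℂ) : ℝ :=
  Real.sqrt ((∫ y in (-1:ℝ)..1, ‖deriv f y‖ ^ 2) +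
    (kabs k₁ k₃) ^ 2 * ∫ y in (-1:ℝ)..1, ‖f y‖ ^ 2)

/-- The dual norm `‖F‖_{H⁻¹_k} = sup { |∫ F ḡ| : g ∈ H¹₀, ‖g‖_{H¹_k} ≤ 1 }`. -/
def hm1 (k₁ k₃ : ℤ) (F : ℝ → ℂ) : ℝ :=
  sSup { r : ℝ | ∃ g : ℝ → ℂ, ContDiff ℝ 1 g ∧ g (-1) = 0 ∧ g 1 = 0 ∧
      hk k₁ k₃ g ≤ 1 ∧ r = ‖∫ y in (-1:ℝ)..1, F y * (starRingEnd ℂ) (g y)‖ }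

/-- The `ε`-modified Orr–Sommerfeld problem with Navier-slip boundary
conditions: `-ν(∂_y²-|k|²)w + ik₁[(1-y²-λ)w + 2φ] - ε(ν|k₁|)^{1/2}w = F`
on `[-1,1]`, with `(∂_y²-|k|²)φ = w`, `φ(±1) = φ''(±1) = 0`. -/
def OSslipE (ν : ℝ) (k₁ k₃ : ℤ) (lam : ℂ) (ε : ℝ) (w φ F : ℝ → ℂ) : Prop :=
  ContDiff ℝ 2 w ∧ ContDiff ℝ 2 φ ∧
  (∀ y ∈ Set.Icc (-1:ℝ) 1,
    -(ν : ℂ) * (deriv (deriv w) y - ((kabs k₁ k₃ : ℝ) : ℂ) ^ 2 * w y) +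
      Complex.I * (k₁ : ℂ) * ((1 - (y : ℂ) ^ 2 - lam) * w y + 2 * φ y) -
      ((ε * Real.sqrt (ν * |(k₁ : ℝ)|) : ℝ) : ℂ) * w y = F y) ∧
  (∀ y ∈ Set.Icc (-1:ℝ) 1,
    deriv (deriv φ) y - ((kabs k₁ k₃ : ℝ) : ℂ) ^ 2 * φ y = w y) ∧
  φ (-1) = 0 ∧ φ 1 = 0 ∧ deriv (deriv φ) (-1) = 0 ∧ deriv (deriv φ) 1 = 0

/-!
Testing the equation with `w̄` gives `ν ‖w‖_{H¹_k} ≤ M := ‖F‖_{H⁻¹_k} + ε (ν |k₁|)^{1/2} ‖u‖`, so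
the Rayleigh residual `R = (1 - y² - λ) w + 2 φ` satisfies `|k₁| ‖R‖_{H⁻¹_k} ≤ 2 M`. It therefore
suffices to prove `‖u‖² ≲ ‖R‖_{H⁻¹_k} ‖w‖_{H¹_k}`, since for small `ε` the velocity term of `M` is
absorbed on the left. Real and imaginary parts decouple here. If `λ ≥ 1`, the bound follows by
testing `R` with `w`; otherwise rescaling moves the critical points to `±1`, on an interval
`[-L, L]`.

If the bound fails at unit energy, then, away from a thin critical layer, `w ≈ -2 φ / (1 - y²)`, and
`φ` is small at `±1`. Hence `∫ φ'² - 2 φ² / (1 - y²) + K² φ²` is almost nonpositive. Since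
`-∂² - 2 / (1 - y²)` is nonnegative with ground state `1 - y²` on `[-1, 1]`, both `K φ` and
`φ - φ(0) (1 - y²)₊` are small. If `K` is not small, then neither is `K φ`. If `K` is small, then
`L > 1`, and the corners of `(1 - y²)₊` at `±1` keep it from solving the Rayleigh equation, so
`φ(0)` must be small and with it `φ`, against the normalisation.
-/

namespace OrrSommerfeld

/-! ### Integrals of continuous functions -/

section ContinuousIntegrals

variable {a b : ℝ} {f g : ℝ → ℝ}

lemma integral_add_of_continuous (hf : Continuous f) (hg : Continuous g) :
    ∫ y in a..b, (f y + g y) = (∫ y in a..b, f y) + ∫ y in a..b, g y :=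
  intervalIntegral.integral_add (hf.intervalIntegrable _ _) (hg.intervalIntegrable _ _)

lemma integral_sub_of_continuous (hf : Continuous f) (hg : Continuous g) :
    ∫ y in a..b, (f y - g y) = (∫ y in a..b, f y) - ∫ y in a..b, g y :=
  intervalIntegral.integral_sub (hf.intervalIntegrable _ _) (hg.intervalIntegrable _ _)

lemma integral_add_adjacent_of_continuous (c : ℝ) (hf : Continuous f) :
    (∫ y in a..c, f y) + (∫ y in c..b, f y) = ∫ y in a..b, f y :=
  intervalIntegral.integral_add_adjacent_intervals (hf.intervalIntegrable _ _)
    (hf.intervalIntegrable _ _)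

lemma integral_mono_of_continuous (hab : a ≤ b) (hf : Continuous f) (hg : Continuous g)
    (h : ∀ y ∈ Set.Icc a b, f y ≤ g y) : ∫ y in a..b, f y ≤ ∫ y in a..b, g y :=
  intervalIntegral.integral_mono_on hab (hf.intervalIntegrable _ _) (hg.intervalIntegrable _ _) h

lemma integral_congr_Icc {E : Type*} [NormedAddCommGroup E] [NormedSpace ℝ E] {f g : ℝ → E}
    (hab : a ≤ b) (h : ∀ y ∈ Set.Icc a b, f y = g y) :
    ∫ y in a..b, f y = ∫ y in a..b, g y :=
  intervalIntegral.integral_congr fun y hy => h y (Set.uIcc_of_le hab ▸ hy)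

lemma integral_sq_nonneg (hab : a ≤ b) (f : ℝ → ℝ) : 0 ≤ ∫ y in a..b, f y ^ 2 :=
  intervalIntegral.integral_nonneg hab fun y _ => sq_nonneg (f y)

lemma integral_le_of_subinterval {c d : ℝ} (hac : a ≤ c) (hcd : c ≤ d) (hdb : d ≤ b)
    (hf : Continuous f) (h : ∀ y, 0 ≤ f y) : ∫ y in c..d, f y ≤ ∫ y in a..b, f y :=
  intervalIntegral.integral_mono_interval hac hcd hdb (.of_forall h) (hf.intervalIntegrable _ _)

lemma abs_integral_le_of_abs_le (hab : a ≤ b) (hg : Continuous g)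
    (h : ∀ y ∈ Set.Icc a b, |f y| ≤ g y) : |∫ y in a..b, f y| ≤ ∫ y in a..b, g y := by
  rw [← Real.norm_eq_abs]
  exact intervalIntegral.norm_integral_le_of_norm_le hab
    (.of_forall fun y hy => h y (Set.Ioc_subset_Icc_self hy)) (hg.intervalIntegrable _ _)

lemma integral_comp_neg_symm (f : ℝ → ℝ) (L : ℝ) :
    ∫ y in (-L)..L, f (-y) = ∫ y in (-L)..L, f y := by
  rw [intervalIntegral.integral_comp_neg, neg_neg]

lemma integral_symm_eq (hf : Continuous f) (L : ℝ) :
    ∫ y in (-L)..L, f y = (∫ y in (0 : ℝ)..L, f y) + ∫ y in (0 : ℝ)..L, f (-y) := by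
  rw [intervalIntegral.integral_comp_neg, neg_zero, add_comm,
    integral_add_adjacent_of_continuous 0 hf]

lemma integral_symm_eq_two_mul (hf : Continuous f) (heven : ∀ y, f (-y) = f y) (L : ℝ) :
    ∫ y in (-L)..L, f y = 2 * ∫ y in (0 : ℝ)..L, f y := by
  simp only [integral_symm_eq hf, heven, two_mul]

lemma integral_eq_sub_of_continuous_deriv {F : ℝ → ℝ} (hF : ∀ y, HasDerivAt F (f y) y)
    (hf : Continuous f) : ∫ y in a..b, f y = F b - F a :=
  intervalIntegral.integral_eq_sub_of_hasDerivAt (fun y _ => hF y) (hf.intervalIntegrable _ _)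

lemma hasDerivAt_of_contDiff {E : Type*} [NormedAddCommGroup E] [NormedSpace ℝ E] {f : ℝ → E}
    (hf : ContDiff ℝ 1 f) (y : ℝ) : HasDerivAt f (deriv f y) y :=
  (hf.differentiable one_ne_zero y).hasDerivAt

lemma contDiff_one_of_hasDerivAt {f f' : ℝ → ℝ} (hf : ∀ y, HasDerivAt f (f' y) y)
    (hf' : Continuous f') : ContDiff ℝ 1 f :=
  contDiff_one_iff_deriv.2 ⟨fun y => (hf y).differentiableAt, by rwa [deriv_eq hf]⟩

lemma contDiff_one_deriv {E : Type*} [NormedAddCommGroup E] [NormedSpace ℝ E] {f : ℝ → E}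
    (hf : ContDiff ℝ 2 f) : ContDiff ℝ 1 (deriv f) :=
  ((contDiff_succ_iff_deriv (n := 1)).1 hf).2.2

lemma sq_integral_mul_le (hab : a ≤ b) (hf : Continuous f) (hg : Continuous g) :
    (∫ y in a..b, f y * g y) ^ 2 ≤ (∫ y in a..b, f y ^ 2) * ∫ y in a..b, g y ^ 2 := by
  have quadratic_nonneg (x : ℝ) : 0 ≤ (∫ y in a..b, f y ^ 2) * (x * x)
      + (2 * ∫ y in a..b, f y * g y) * x + ∫ y in a..b, g y ^ 2 := by
    have expand : ∫ y in a..b, (f y * x + g y) ^ 2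
        = ∫ y in a..b, ((x * x) * f y ^ 2 + (2 * x) * (f y * g y) + g y ^ 2) := by
      congr 1; ext y; ring
    have h := integral_sq_nonneg hab fun y => f y * x + g y
    rw [expand, integral_add_of_continuous (by fun_prop) (by fun_prop),
      integral_add_of_continuous (by fun_prop) (by fun_prop)] at h
    simp only [intervalIntegral.integral_const_mul] at h
    linarith
  have h := discrim_le_zero quadratic_nonneg
  unfold discrim at h
  linarith

lemma abs_integral_mul_le {A B : ℝ} (hab : a ≤ b) (hf : Continuous f) (hg : Continuous g)
    (hA : 0 ≤ A) (hB : 0 ≤ B) (hfA : ∫ y in a..b, f y ^ 2 ≤ A ^ 2)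
    (hgB : ∫ y in a..b, g y ^ 2 ≤ B ^ 2) : |∫ y in a..b, f y * g y| ≤ A * B := by
  apply abs_le_of_sq_le_sq _ (by positivity)
  calc _ ≤ _ := sq_integral_mul_le hab hf hg
    _ ≤ A ^ 2 * B ^ 2 := mul_le_mul hfA hgB (integral_sq_nonneg hab g) (by positivity)
    _ = _ := by ring

lemma integral_sq_add_le {A B : ℝ} (hab : a ≤ b) (hf : Continuous f) (hg : Continuous g)
    (hA : 0 ≤ A) (hB : 0 ≤ B) (hfA : ∫ y in a..b, f y ^ 2 ≤ A ^ 2)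
    (hgB : ∫ y in a..b, g y ^ 2 ≤ B ^ 2) : ∫ y in a..b, (f y + g y) ^ 2 ≤ (A + B) ^ 2 := by
  have cross := le_of_abs_le (abs_integral_mul_le hab hf hg hA hB hfA hgB)
  have expand : ∫ y in a..b, (f y + g y) ^ 2
      = ∫ y in a..b, (f y ^ 2 + 2 * (f y * g y) + g y ^ 2) := by
    congr 1; ext y; ring
  rw [expand, integral_add_of_continuous (by fun_prop) (by fun_prop),
    integral_add_of_continuous (by fun_prop) (by fun_prop), intervalIntegral.integral_const_mul]
  linarith

lemma integral_sq_mul_le {Q : ℝ} (hab : a ≤ b) (hf : Continuous f) (hg : Continuous g)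
    (hQ : ∀ y ∈ Set.Icc a b, |f y| ≤ Q) :
    ∫ y in a..b, (f y * g y) ^ 2 ≤ Q ^ 2 * ∫ y in a..b, g y ^ 2 := by
  rw [← intervalIntegral.integral_const_mul]
  refine integral_mono_of_continuous hab (by fun_prop) (by fun_prop) fun y hy => ?_
  rw [mul_pow, ← sq_abs (f y)]
  gcongr
  exact hQ y hy

lemma sq_le_two_mul_of_integral_sq_le {A B z : ℝ} (hf : ContDiff ℝ 1 f) (hA : 0 ≤ A)
    (hB : 0 ≤ B) (hz : z ∈ Set.Icc a b) (h0 : f a = 0) (hfA : ∫ y in a..b, f y ^ 2 ≤ A ^ 2)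
    (hfB : ∫ y in a..b, deriv f y ^ 2 ≤ B ^ 2) : f z ^ 2 ≤ 2 * A * B := by
  have ftc : ∫ y in a..z, 2 * (f y * deriv f y) = f z ^ 2 - f a ^ 2 := by
    refine integral_eq_sub_of_continuous_deriv (F := fun y => f y ^ 2) (fun y => ?_)
      (by fun_prop)
    exact ((hasDerivAt_of_contDiff hf y).pow 2).congr_deriv (by norm_num; ring)
  rw [h0, intervalIntegral.integral_const_mul] at ftc
  have cauchy := abs_integral_mul_le hz.1 (f := f) (g := deriv f) (by fun_prop) (by fun_prop) hA hB
    ((integral_le_of_subinterval le_rfl hz.1 hz.2 (by fun_prop) fun y => sq_nonneg _).trans hfA)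
    ((integral_le_of_subinterval le_rfl hz.1 hz.2 (by fun_prop) fun y => sq_nonneg _).trans hfB)
  linarith [le_of_abs_le cauchy]

lemma sq_sub_le_mul_integral_sq_deriv (hab : a ≤ b) (hf : ContDiff ℝ 1 f) :
    (f b - f a) ^ 2 ≤ (b - a) * ∫ y in a..b, deriv f y ^ 2 := by
  have ftc : ∫ y in a..b, deriv f y = f b - f a :=
    integral_eq_sub_of_continuous_deriv (hasDerivAt_of_contDiff hf) (by fun_prop)
  have cauchy := sq_integral_mul_le (f := fun _ => (1 : ℝ)) (g := deriv f) hab (by fun_prop)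
    (by fun_prop)
  simpa [ftc] using cauchy

end ContinuousIntegrals

/-! ### Regularised critical-layer profiles -/

/-- The bump `s² / ((1 - y²)² + s²)` of width `s` around the critical points `y = ±1`. -/
def layer (s y : ℝ) : ℝ := s ^ 2 / ((1 - y ^ 2) ^ 2 + s ^ 2)

/-- The regularisation at scale `s` of the singular weight `1 / (1 - y²)`. -/
def regInv (s y : ℝ) : ℝ := (1 - y ^ 2) / ((1 - y ^ 2) ^ 2 + s ^ 2)

/-- The logarithmic potential whose derivative compares `regInv` at the scales `s` and `e`. -/
def logRatio (s e y : ℝ) : ℝ :=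
  log ((1 - y ^ 2) ^ 2 + e ^ 2) - log ((1 - y ^ 2) ^ 2 + s ^ 2)

section Profiles

variable {s e : ℝ}

lemma layer_denom_pos (hs : 0 < s) (y : ℝ) : 0 < (1 - y ^ 2) ^ 2 + s ^ 2 := by positivity

lemma contDiff_layer (hs : 0 < s) : ContDiff ℝ 1 (layer s) :=
  ContDiff.div (by fun_prop) (by fun_prop) fun y => (layer_denom_pos hs y).ne'

lemma contDiff_regInv (hs : 0 < s) : ContDiff ℝ 1 (regInv s) :=
  ContDiff.div (by fun_prop) (by fun_prop) fun y => (layer_denom_pos hs y).ne'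

lemma hasDerivAt_layer_denom (s y : ℝ) :
    HasDerivAt (fun y : ℝ => (1 - y ^ 2) ^ 2 + s ^ 2) (-4 * y * (1 - y ^ 2)) y :=
  ((((hasDerivAt_pow 2 y).const_sub 1).pow 2).add_const (s ^ 2)).congr_deriv (by norm_num; ring)

lemma deriv_regInv (hs : 0 < s) (y : ℝ) : deriv (regInv s) y =
    -2 * y * (s ^ 2 - (1 - y ^ 2) ^ 2) / ((1 - y ^ 2) ^ 2 + s ^ 2) ^ 2 :=
  ((((hasDerivAt_pow 2 y).const_sub 1).div (hasDerivAt_layer_denom s y)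
    (layer_denom_pos hs y).ne').congr_deriv (by congr 1; norm_num; ring)).deriv

lemma deriv_layer (hs : 0 < s) (y : ℝ) : deriv (layer s) y =
    4 * y * (1 - y ^ 2) * s ^ 2 / ((1 - y ^ 2) ^ 2 + s ^ 2) ^ 2 :=
  (((hasDerivAt_const y (s ^ 2)).div (hasDerivAt_layer_denom s y)
    (layer_denom_pos hs y).ne').congr_deriv (by congr 1; ring)).deriv

lemma hasDerivAt_logRatio (hs : 0 < s) (he : 0 < e) (y : ℝ) :
    HasDerivAt (logRatio s e) (4 * y * (regInv s y - regInv e y)) y := by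
  refine (((hasDerivAt_layer_denom e y).log (layer_denom_pos he y).ne').sub
    ((hasDerivAt_layer_denom s y).log (layer_denom_pos hs y).ne')).congr_deriv ?_
  have := layer_denom_pos hs y
  have := layer_denom_pos he y
  unfold regInv
  field_simp
  ring

lemma layer_nonneg (s y : ℝ) : 0 ≤ layer s y := by unfold layer; positivity

lemma layer_le_one (hs : 0 < s) (y : ℝ) : layer s y ≤ 1 := by
  unfold layer
  rw [div_le_one (layer_denom_pos hs y)]
  nlinarith [sq_nonneg (1 - y ^ 2)]

lemma layer_mono (hs : 0 < s) (hse : s ≤ e) (y : ℝ) : layer s y ≤ layer e y := by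
  have hsq : s ^ 2 ≤ e ^ 2 := by gcongr
  unfold layer
  rw [div_le_div_iff₀ (layer_denom_pos hs y) (layer_denom_pos (hs.trans_le hse) y)]
  nlinarith [mul_le_mul_of_nonneg_left hsq (sq_nonneg (1 - y ^ 2))]

lemma regInv_neg (s y : ℝ) : regInv s (-y) = regInv s y := by simp only [regInv, neg_sq]

lemma logRatio_neg (s e y : ℝ) : logRatio s e (-y) = logRatio s e y := by
  simp only [logRatio, neg_sq]

lemma one_sub_sq_mul_regInv (hs : 0 < s) (y : ℝ) :
    (1 - y ^ 2) * regInv s y = 1 - layer s y := by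
  have := (layer_denom_pos hs y).ne'
  unfold layer regInv
  field_simp
  ring

lemma regInv_mul_one_sub_sq_le_one (hs : 0 < s) (y : ℝ) : regInv s y * (1 - y ^ 2) ≤ 1 := by
  linarith [one_sub_sq_mul_regInv hs y, layer_nonneg s y]

lemma abs_one_sub_sq_mul_layer_le (hs : 0 < s) (y : ℝ) : |1 - y ^ 2| * layer s y ≤ s := by
  have h0 := layer_denom_pos hs y
  unfold layer
  rw [← mul_div_assoc, div_le_iff₀ h0]
  nlinarith [sq_nonneg (|1 - y ^ 2| - s), sq_abs (1 - y ^ 2), abs_nonneg (1 - y ^ 2)]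

lemma sq_mul_layer_le (hs : 0 < s) (hs1 : s ≤ 1) (y : ℝ) : y ^ 2 * layer s y ≤ 3 / 2 := by
  have hsq : s ^ 2 ≤ 1 := by nlinarith
  unfold layer
  rw [← mul_div_assoc, div_le_div_iff₀ (layer_denom_pos hs y) (by positivity)]
  nlinarith [sq_nonneg (y ^ 2 - 1 - s ^ 2), sq_nonneg (1 - y ^ 2 + s ^ 2 / 2),
    mul_nonneg (sq_nonneg s) (sub_nonneg.2 hsq)]

lemma abs_regInv_le (hs : 0 < s) (y : ℝ) : |regInv s y| ≤ 1 / (2 * s) := by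
  have h0 := layer_denom_pos hs y
  unfold regInv
  rw [abs_div, abs_of_pos h0, div_le_div_iff₀ h0 (by positivity)]
  nlinarith [sq_nonneg (|1 - y ^ 2| - s), sq_abs (1 - y ^ 2)]

lemma regInv_sq_le (hs : 0 < s) (y : ℝ) : regInv s y ^ 2 ≤ layer s y / s ^ 2 := by
  have gap : layer s y / s ^ 2 - regInv s y ^ 2 = s ^ 2 / ((1 - y ^ 2) ^ 2 + s ^ 2) ^ 2 := by
    unfold layer regInv; field_simp; ring
  have : 0 ≤ s ^ 2 / ((1 - y ^ 2) ^ 2 + s ^ 2) ^ 2 := by positivity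
  linarith

lemma deriv_regInv_sq_le (hs : 0 < s) (hs1 : s ≤ 1) (y : ℝ) :
    deriv (regInv s) y ^ 2 ≤ 6 * layer s y / s ^ 4 := by
  have gap : 4 * (y ^ 2 * layer s y) * layer s y / s ^ 4 - deriv (regInv s) y ^ 2
      = 16 * y ^ 2 * s ^ 2 * (1 - y ^ 2) ^ 2 / ((1 - y ^ 2) ^ 2 + s ^ 2) ^ 4 := by
    rw [deriv_regInv hs]; unfold layer; field_simp; ring
  have gap_nonneg : 0 ≤ 16 * y ^ 2 * s ^ 2 * (1 - y ^ 2) ^ 2 / ((1 - y ^ 2) ^ 2 + s ^ 2) ^ 4 := by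
    positivity
  calc deriv (regInv s) y ^ 2 ≤ 4 * (y ^ 2 * layer s y) * layer s y / s ^ 4 := by linarith
    _ ≤ 6 * layer s y / s ^ 4 := by
      gcongr
      · exact layer_nonneg s y
      · linarith [sq_mul_layer_le hs hs1 y]

lemma deriv_layer_sq_le (hs : 0 < s) (hs1 : s ≤ 1) (y : ℝ) :
    deriv (layer s) y ^ 2 ≤ 24 * layer s y ^ 2 / s ^ 2 := by
  have identity : deriv (layer s) y ^ 2
      = 16 * (y ^ 2 * layer s y) * (1 - layer s y) * layer s y ^ 2 / s ^ 2 := by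
    rw [deriv_layer hs]; unfold layer; field_simp; ring
  rw [identity]
  gcongr
  nlinarith [sq_mul_layer_le hs hs1 y, mul_nonneg (sq_nonneg y) (layer_nonneg s y),
    layer_nonneg s y, layer_le_one hs y]

lemma hasDerivAt_mul_arctan_div (hs : 0 < s) (a y : ℝ) :
    HasDerivAt (fun y => s * arctan ((y - a) / s)) (s ^ 2 / ((y - a) ^ 2 + s ^ 2)) y := by
  refine (((((hasDerivAt_id y).sub_const a).div_const s).arctan).const_mul s).congr_deriv ?_
  simp only [id]
  field_simp
  ring

lemma integral_lorentzian_le (hs : 0 < s) (a b c : ℝ) :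
    ∫ y in a..b, s ^ 2 / ((y - c) ^ 2 + s ^ 2) ≤ s * π := by
  rw [integral_eq_sub_of_continuous_deriv (hasDerivAt_mul_arctan_div hs c)
    (Continuous.div (by fun_prop) (by fun_prop) fun y => by positivity)]
  nlinarith [arctan_lt_pi_div_two ((b - c) / s), neg_pi_div_two_lt_arctan ((a - c) / s)]

lemma layer_le_lorentzian_of_nonneg (hs : 0 < s) {y : ℝ} (hy : 0 ≤ y) :
    layer s y ≤ s ^ 2 / ((y - 1) ^ 2 + s ^ 2) := by
  refine div_le_div_of_nonneg_left (by positivity) (by positivity) ?_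
  nlinarith [mul_nonneg (sq_nonneg (1 - y)) (by positivity : 0 ≤ y ^ 2 + 2 * y)]

lemma layer_le_lorentzian_add (hs : 0 < s) (y : ℝ) :
    layer s y ≤ s ^ 2 / ((y - 1) ^ 2 + s ^ 2) + s ^ 2 / ((y - (-1)) ^ 2 + s ^ 2) := by
  rcases le_total 0 y with hy | hy
  · exact (layer_le_lorentzian_of_nonneg hs hy).trans (le_add_of_nonneg_right (by positivity))
  · have h := layer_le_lorentzian_of_nonneg hs (neg_nonneg.2 hy)
    rw [show layer s (-y) = layer s y by simp only [layer, neg_sq],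
      show (-y - 1) ^ 2 = (y - (-1)) ^ 2 by ring] at h
    exact h.trans (le_add_of_nonneg_left (by positivity))

lemma integral_layer_le (hs : 0 < s) {a b : ℝ} (hab : a ≤ b) :
    ∫ y in a..b, layer s y ≤ 7 * s := by
  have lorentzian_cont (c : ℝ) : Continuous fun y : ℝ => s ^ 2 / ((y - c) ^ 2 + s ^ 2) :=
    Continuous.div (by fun_prop) (by fun_prop) fun y => by positivity
  have le_lorentzians := integral_mono_of_continuous hab (contDiff_layer hs).continuous
    ((lorentzian_cont 1).fun_add (lorentzian_cont (-1))) fun y _ => layer_le_lorentzian_add hs y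
  rw [integral_add_of_continuous (lorentzian_cont 1) (lorentzian_cont (-1))] at le_lorentzians
  nlinarith [integral_lorentzian_le hs a b 1, integral_lorentzian_le hs a b (-1), pi_lt_d2]

lemma logRatio_nonneg (hs : 0 < s) (hse : s ≤ e) (y : ℝ) : 0 ≤ logRatio s e y := by
  refine sub_nonneg.2 (log_le_log (layer_denom_pos hs y) ?_)
  gcongr

lemma logRatio_le (hs : 0 < s) (hse : s ≤ e) {y : ℝ} (hy : 1 - y ^ 2 ≠ 0) :
    logRatio s e y ≤ e ^ 2 / (1 - y ^ 2) ^ 2 := by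
  have hsp := layer_denom_pos hs y
  have hep := layer_denom_pos (hs.trans_le hse) y
  unfold logRatio
  rw [← log_div hep.ne' hsp.ne']
  refine (log_le_sub_one_of_pos (by positivity)).trans ?_
  rw [div_sub_one hsp.ne']
  gcongr <;> nlinarith [sq_nonneg s]

lemma continuous_logRatio (hs : 0 < s) (he : 0 < e) : Continuous (logRatio s e) :=
  continuous_iff_continuousAt.2 fun y => (hasDerivAt_logRatio hs he y).continuousAt

end Profiles

/-! ### Comparison of the regularised potentials -/

section RegInvComparison

variable {s e : ℝ}

lemma abs_cubic_mul_regInv_sub_le (hs : 0 < s) (hse : s ≤ e) {y : ℝ} (hy : 0 ≤ y) :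
    |(y ^ 3 + 3 * y - 4) / 3 * (4 * y * (regInv s y - regInv e y))|
      ≤ 8 / 3 * ((1 + y ^ 2) * layer e y) := by
  have he := hs.trans_le hse
  have layers := sub_nonneg.2 (layer_mono hs hse y)
  have factored : (1 + y) * |(y ^ 3 + 3 * y - 4) / 3 * (4 * y * (regInv s y - regInv e y))|
      = 4 / 3 * (y * (y ^ 2 + y + 4)) * (layer e y - layer s y) := by
    rw [← abs_of_nonneg
        (by positivity : 0 ≤ 4 / 3 * (y * (y ^ 2 + y + 4)) * (layer e y - layer s y)),
      ← abs_of_pos (by linarith : 0 < 1 + y), ← abs_mul, ← abs_neg]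
    congr 1
    linear_combination 4 / 3 * (y * (y ^ 2 + y + 4)) *
      (one_sub_sq_mul_regInv hs y - one_sub_sq_mul_regInv he y)
  refine le_of_mul_le_mul_left (factored.le.trans ?_) (by linarith : 0 < 1 + y)
  have weight : y * (y ^ 2 + y + 4) ≤ 2 * ((1 + y) * (1 + y ^ 2)) := by
    nlinarith [sq_nonneg (y - 1), pow_nonneg hy 3]
  calc _ ≤ 4 / 3 * (2 * ((1 + y) * (1 + y ^ 2))) * layer e y := by
        gcongr
        linarith [layer_nonneg s y]
    _ = _ := by ring

lemma cubic_mul_logRatio_sq_le (hs : 0 < s) (hse : s ≤ e) (he1 : e ≤ 1) {R : ℝ} (hR : 2 ≤ R) :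
    (R ^ 3 + 3 * R - 4) / 3 * logRatio s e R ^ 2 ≤ e := by
  have he := hs.trans_le hse
  have hR3 : 3 ≤ R ^ 2 - 1 := by nlinarith
  have decay : logRatio s e R ≤ e ^ 2 / (1 - R ^ 2) ^ 2 :=
    logRatio_le hs hse (by linarith)
  have cubic_le : (R ^ 3 + 3 * R - 4) / 3 ≤ (R ^ 2 - 1) ^ 2 := by nlinarith [sq_nonneg (R - 2)]
  have : 0 ≤ (R ^ 3 + 3 * R - 4) / 3 := by nlinarith
  calc _ ≤ (R ^ 2 - 1) ^ 2 * (e ^ 2 / (1 - R ^ 2) ^ 2) ^ 2 := by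
        have := logRatio_nonneg hs hse R
        gcongr
    _ = e ^ 4 / (R ^ 2 - 1) ^ 2 := by
        rw [← neg_sq (1 - R ^ 2), neg_sub]; field_simp
    _ ≤ e ^ 4 := div_le_self (by positivity) (by nlinarith)
    _ ≤ e := pow_le_of_le_one he.le he1 (by norm_num)

-- The multiplier `m = (y³ + 3y - 4) / 3` satisfies `m' = 1 + y²` and vanishes at `y = 1`, which
-- cancels the singularity of the derivative of `logRatio`.
lemma integral_weighted_logRatio_sq_le_half (hs : 0 < s) (hse : s ≤ e) (he1 : e ≤ 1) {R : ℝ}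
    (hR : 2 ≤ R) : ∫ y in (0 : ℝ)..R, (1 + y ^ 2) * logRatio s e y ^ 2 ≤ 512 * e := by
  have he := hs.trans_le hse
  have cΛ := continuous_logRatio hs he
  have cP := (contDiff_layer he).continuous
  have cH := (contDiff_regInv hs).continuous
  have cH' := (contDiff_regInv he).continuous
  set D : ℝ → ℝ := fun y => (1 + y ^ 2) * logRatio s e y ^ 2 +
    2 * logRatio s e y * ((y ^ 3 + 3 * y - 4) / 3 * (4 * y * (regInv s y - regInv e y))) with hD
  have cD : Continuous D := by fun_prop
  have ftc : ∫ y in (0 : ℝ)..R, D y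
      = (R ^ 3 + 3 * R - 4) / 3 * logRatio s e R ^ 2 + 4 / 3 * logRatio s e 0 ^ 2 := by
    rw [integral_eq_sub_of_continuous_deriv
      (F := fun y => (y ^ 3 + 3 * y - 4) / 3 * logRatio s e y ^ 2) (fun y => ?_) cD]
    · ring
    · refine ((((((hasDerivAt_id y).pow 3).add ((hasDerivAt_id y).const_mul 3)).sub_const
        4).div_const 3).mul ((hasDerivAt_logRatio hs he y).pow 2)).congr_deriv ?_
      simp [hD]; ring
  have absorb : ∫ y in (0 : ℝ)..R, (1 + y ^ 2) * logRatio s e y ^ 2 ≤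
      ∫ y in (0 : ℝ)..R,
        (D y + (1 / 2 * ((1 + y ^ 2) * logRatio s e y ^ 2) + 36 * layer e y)) := by
    refine integral_mono_of_continuous (by linarith) (by fun_prop) (by fun_prop) fun y hy => ?_
    have slope := (abs_le.1 (abs_cubic_mul_regInv_sub_le hs hse hy.1)).1
    have hΛ := logRatio_nonneg hs hse y
    have peak : (1 + y ^ 2) * layer e y ^ 2 ≤ 5 / 2 * layer e y := by
      nlinarith [sq_mul_layer_le he he1 y, layer_le_one he y, layer_nonneg e y]
    simp only [hD]
    nlinarith [mul_le_mul_of_nonneg_left slope hΛ,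
      mul_nonneg (by positivity : 0 ≤ 1 + y ^ 2) (sq_nonneg (3 * logRatio s e y - 16 * layer e y))]
  clear_value D
  rw [integral_add_of_continuous (by fun_prop) (by fun_prop),
    integral_add_of_continuous (by fun_prop) (by fun_prop), intervalIntegral.integral_const_mul,
    intervalIntegral.integral_const_mul, ftc] at absorb
  have at_zero : logRatio s e 0 ^ 2 ≤ e := by
    have h := logRatio_le hs hse (y := 0) (by norm_num)
    have h0 := logRatio_nonneg hs hse 0
    norm_num at h
    calc _ ≤ (e ^ 2) ^ 2 := by gcongr
      _ = e ^ 4 := by ring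
      _ ≤ e := pow_le_of_le_one he.le he1 (by norm_num)
  linarith [cubic_mul_logRatio_sq_le hs hse he1 hR, integral_layer_le he (by linarith : 0 ≤ R)]

lemma integral_weighted_logRatio_sq_le (hs : 0 < s) (hse : s ≤ e) (he1 : e ≤ 1) {L : ℝ}
    (hL : 0 ≤ L) : ∫ y in (-L)..L, (1 + y ^ 2) * logRatio s e y ^ 2 ≤ 1024 * e := by
  have cΛ := continuous_logRatio hs (hs.trans_le hse)
  calc _ ≤ ∫ y in (-(max L 2))..(max L 2), (1 + y ^ 2) * logRatio s e y ^ 2 :=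
        integral_le_of_subinterval (neg_le_neg (le_max_left _ _)) (by linarith) (le_max_left _ _)
          (by fun_prop) fun y => by positivity
    _ = 2 * ∫ y in (0 : ℝ)..(max L 2), (1 + y ^ 2) * logRatio s e y ^ 2 :=
        integral_symm_eq_two_mul (by fun_prop) (fun y => by rw [logRatio_neg, neg_sq]) _
    _ ≤ 1024 * e := by
        linarith [integral_weighted_logRatio_sq_le_half hs hse he1 (le_max_right L 2)]

lemma integral_four_mul_regInv_sub_mul {a b : ℝ} (hs : 0 < s) (he : 0 < e) {g : ℝ → ℝ}
    (hg : ContDiff ℝ 1 g) (ha : g a = 0) (hb : g b = 0) :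
    ∫ y in a..b, 4 * y * (regInv s y - regInv e y) * g y
      = -∫ y in a..b, logRatio s e y * deriv g y := by
  have cH := (contDiff_regInv hs).continuous
  have cH' := (contDiff_regInv he).continuous
  rw [intervalIntegral.integral_mul_deriv_eq_deriv_mul
    (fun y _ => hasDerivAt_logRatio hs he y) (fun y _ => hasDerivAt_of_contDiff hg y)
    ((by fun_prop : Continuous fun y => 4 * y * (regInv s y - regInv e y)).intervalIntegrable _ _)
    (hg.continuous_deriv_one.intervalIntegrable _ _), ha, hb]
  ring

lemma neg_integral_logRatio_mul_deriv_le {η L : ℝ} (hs : 0 < s) (hsη : s ≤ η ^ 2) (hη : 0 ≤ η)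
    (hη1 : η ≤ 1) (hL : 0 ≤ L) {f : ℝ → ℝ} (hf : ContDiff ℝ 1 f)
    (hf2 : ∀ y ∈ Set.Icc (-L) L, |f y| ≤ 2) (hf' : ∫ y in (-L)..L, deriv f y ^ 2 ≤ 1) :
    -∫ y in (-L)..L, logRatio s (η ^ 2) y * deriv (fun y => y * f y ^ 2) y ≤ 128 * η := by
  have cΛ := continuous_logRatio hs (hs.trans_le hsη)
  have hLL : -L ≤ L := by linarith
  have product_rule : deriv (fun y => y * f y ^ 2)
      = fun y => f y ^ 2 + y * (2 * f y * deriv f y) := by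
    funext y
    exact ((hasDerivAt_id y).mul ((hasDerivAt_of_contDiff hf y).pow 2)).deriv.trans (by simp)
  have cauchy : ∫ y in (-L)..L, |y * logRatio s (η ^ 2) y| * |deriv f y| ≤ 32 * η * 1 := by
    refine le_of_abs_le (abs_integral_mul_le hLL (by fun_prop) (by fun_prop)
      (by positivity) zero_le_one ?_ (by simpa only [sq_abs, one_pow] using hf'))
    refine (integral_mono_of_continuous hLL (by fun_prop) (by fun_prop) fun y _ => ?_).trans
      ((integral_weighted_logRatio_sq_le hs hsη (pow_le_one₀ hη hη1) hL).trans_eq (by ring))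
    rw [sq_abs, mul_pow]
    gcongr
    linarith
  rw [product_rule, ← intervalIntegral.integral_neg]
  calc _ ≤ ∫ y in (-L)..L, 4 * (|y * logRatio s (η ^ 2) y| * |deriv f y|) := by
        refine integral_mono_of_continuous hLL (by fun_prop) (by fun_prop) fun y hy => ?_
        have hΛ := mul_nonneg (logRatio_nonneg hs hsη y) (sq_nonneg (f y))
        calc _ ≤ |2 * (f y * (y * logRatio s (η ^ 2) y * deriv f y))| := by
              refine le_trans ?_ (neg_le_abs _)
              linarith
          _ = 2 * (|f y| * (|y * logRatio s (η ^ 2) y| * |deriv f y|)) := by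
              rw [abs_mul, abs_mul, abs_mul (y * _), abs_two]
          _ ≤ 2 * (2 * (|y * logRatio s (η ^ 2) y| * |deriv f y|)) := by gcongr; exact hf2 y hy
          _ = _ := by ring
    _ ≤ _ := by rw [intervalIntegral.integral_const_mul]; linarith

lemma integral_regInv_mul_sq_le {η L : ℝ} (hs : 0 < s) (hsη : s ≤ η ^ 2) (hη : 0 ≤ η)
    (hη1 : η ≤ 1) (hL : 0 ≤ L) {f : ℝ → ℝ} (hf : ContDiff ℝ 1 f) (hfL : f L = 0)
    (hfL' : f (-L) = 0) (hf2 : ∀ y ∈ Set.Icc (-L) L, |f y| ≤ 2)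
    (hf' : ∫ y in (-L)..L, deriv f y ^ 2 ≤ 1) :
    ∫ y in (-L)..L, regInv s y * f y ^ 2
      ≤ (∫ y in (-L)..L, regInv (η ^ 2) y * f y ^ 2) + 60 * η := by
  have he := hs.trans_le hsη
  have hLL : -L ≤ L := by linarith
  have cH := (contDiff_regInv hs).continuous
  have cH' := (contDiff_regInv he).continuous
  have cP := (contDiff_layer he).continuous
  have by_parts := integral_four_mul_regInv_sub_mul (a := -L) (b := L) hs he
    (by fun_prop : ContDiff ℝ 1 fun y => y * f y ^ 2) (by simp [hfL']) (by simp [hfL])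
  have pointwise : ∫ y in (-L)..L, regInv s y * f y ^ 2 ≤
      ∫ y in (-L)..L, ((regInv (η ^ 2) y * f y ^ 2 + 4 * layer (η ^ 2) y)
        + 1 / 4 * (4 * y * (regInv s y - regInv (η ^ 2) y) * (y * f y ^ 2))) := by
    refine integral_mono_of_continuous hLL (by fun_prop) (by fun_prop) fun y hy => ?_
    have hf4 : f y ^ 2 ≤ 4 := by nlinarith [hf2 y hy, abs_nonneg (f y), sq_abs (f y)]
    have split : regInv s y * f y ^ 2 = regInv (η ^ 2) y * f y ^ 2
        + (layer (η ^ 2) y - layer s y) * f y ^ 2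
        + 1 / 4 * (4 * y * (regInv s y - regInv (η ^ 2) y) * (y * f y ^ 2)) := by
      linear_combination f y ^ 2 * (one_sub_sq_mul_regInv hs y - one_sub_sq_mul_regInv he y)
    nlinarith [mul_nonneg (layer_nonneg s y) (sq_nonneg (f y)),
      mul_le_mul_of_nonneg_left hf4 (layer_nonneg (η ^ 2) y)]
  rw [integral_add_of_continuous (by fun_prop) (by fun_prop),
    integral_add_of_continuous (by fun_prop) (by fun_prop), intervalIntegral.integral_const_mul,
    intervalIntegral.integral_const_mul, by_parts] at pointwise
  nlinarith [integral_layer_le he hLL,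
    neg_integral_logRatio_mul_deriv_le hs hsη hη hη1 hL hf hf2 hf']

end RegInvComparison

/-! ### The ground state of the singular weight -/

section GroundState

variable {f h : ℝ → ℝ} {r : ℝ}

lemma continuous_sq_div_sub {a : ℝ} (hf : ContDiff ℝ 1 f) (ha : f a = 0) :
    Continuous fun y => f y ^ 2 / (y - a) := by
  have factored : (fun y => f y ^ 2 / (y - a)) = fun y => f y * dslope f a y := by
    funext y
    rcases eq_or_ne y a with rfl | hya
    · simp [ha]
    · rw [dslope_of_ne _ hya, slope_def_field, ha]; ring
  have slope_cont : Continuous (dslope f a) :=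
    continuousOn_univ.1 ((continuousOn_dslope Filter.univ_mem).2
      ⟨hf.continuous.continuousOn, hf.differentiable one_ne_zero a⟩)
  rw [factored]
  fun_prop

lemma continuousOn_sq_div_one_sub_sq (hf : ContDiff ℝ 1 f) (hr : r ≤ 1) (hfr : f r = 0) :
    ContinuousOn (fun y => f y ^ 2 / (1 - y ^ 2)) (Set.Icc 0 r) := by
  have factored : (fun y => f y ^ 2 / (1 - y ^ 2)) = fun y => -(f y ^ 2 / (y - 1)) / (1 + y) := by
    funext y
    rw [neg_div, div_div, ← div_neg]
    congr 1; ring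
  rcases hr.eq_or_lt with rfl | hr1
  · have := continuous_sq_div_sub hf hfr
    rw [factored]
    exact this.neg.continuousOn.div (by fun_prop) fun y hy => by linarith [hy.1]
  · have := hf.continuous
    exact ContinuousOn.div (by fun_prop) (by fun_prop) fun y hy => by nlinarith [hy.1, hy.2]

/-- The calibration `T` with `T' ≤ f'² - 2 f² / (1 - y²) - (2/3) (f' + 2 f(0) y)²` obtained by
completing the square around the ground state `f(0) (1 - y²)` of `-∂² - 2 / (1 - y²)` on `(0, 1)`
and its next eigenfunction `y (1 - y²)`. -/
def calibration (f : ℝ → ℝ) (y : ℝ) : ℝ :=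
  4 / 3 * f 0 ^ 2 * (y * (1 - y ^ 2)) - 8 / 3 * f 0 * (y * f y)
    + 1 / 3 * ((f y - f 0 * (1 - y ^ 2)) ^ 2 / y) - 2 / 3 * (y * (f y ^ 2 / (1 - y ^ 2)))

lemma continuousOn_calibration (hf : ContDiff ℝ 1 f) (hr : r ≤ 1) (hfr : f r = 0) :
    ContinuousOn (calibration f) (Set.Icc 0 r) := by
  have near_zero : Continuous fun y => (f y - f 0 * (1 - y ^ 2)) ^ 2 / y := by
    simpa using continuous_sq_div_sub (a := 0) (f := fun y => f y - f 0 * (1 - y ^ 2))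
      (by fun_prop) (by simp)
  have near_one := continuousOn_sq_div_one_sub_sq hf hr hfr
  have := hf.continuous
  exact ((by fun_prop : Continuous fun y => 4 / 3 * f 0 ^ 2 * (y * (1 - y ^ 2))
    - 8 / 3 * f 0 * (y * f y) + 1 / 3 * ((f y - f 0 * (1 - y ^ 2)) ^ 2 / y)).continuousOn).sub
    (continuousOn_const.mul (continuousOn_id.mul near_one))

lemma hasDerivAt_calibration (hf : ContDiff ℝ 1 f) {y : ℝ} (hy0 : y ≠ 0) (hy1 : 1 - y ^ 2 ≠ 0) :
    HasDerivAt (calibration f)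
      (deriv f y ^ 2 - 2 * (f y ^ 2 / (1 - y ^ 2)) - 2 / 3 * (deriv f y + 2 * f 0 * y) ^ 2
        - 1 / 3 * (deriv f y + 2 * f 0 * y
            - (f y - f 0 * (1 - y ^ 2)) * (1 / y - 2 * y / (1 - y ^ 2))) ^ 2) y := by
  have df := hasDerivAt_of_contDiff hf y
  have dV : HasDerivAt (fun y : ℝ => 1 - y ^ 2) (-(2 * y)) y := by
    simpa using (hasDerivAt_pow 2 y).const_sub 1
  refine ((((((hasDerivAt_id y).mul dV).const_mul (4 / 3 * f 0 ^ 2)).sub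
    (((hasDerivAt_id y).mul df).const_mul (8 / 3 * f 0))).add
    ((((df.sub (dV.const_mul (f 0))).pow 2).div (hasDerivAt_id y) hy0).const_mul (1 / 3))).sub
    (((hasDerivAt_id y).mul ((df.pow 2).div dV hy1)).const_mul (2 / 3))).congr_deriv ?_
  simp only [id_eq, Pi.sub_apply, Pi.pow_apply, Pi.div_apply]
  field_simp
  ring

lemma integral_defect_nonneg (hr0 : 0 ≤ r) (hr1 : r ≤ 1) (hf : ContDiff ℝ 1 f) (hh : Continuous h)
    (hh1 : ∀ y ∈ Set.Icc 0 r, h y * (1 - y ^ 2) ≤ 1) (hfr : f r = 0) :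
    0 ≤ ∫ y in (0 : ℝ)..r,
      (deriv f y ^ 2 - 2 * (h y * f y ^ 2) - 2 / 3 * (deriv f y + 2 * f 0 * y) ^ 2) := by
  have boundary : 0 ≤ calibration f r - calibration f 0 := by
    have : 0 ≤ 1 - r ^ 2 := by nlinarith
    simp only [calibration, hfr]
    norm_num
    positivity
  have integrand_cont : Continuous fun y =>
      deriv f y ^ 2 - 2 * (h y * f y ^ 2) - 2 / 3 * (deriv f y + 2 * f 0 * y) ^ 2 := by fun_prop
  refine boundary.trans (intervalIntegral.sub_le_integral_of_hasDeriv_right_of_le hr0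
    (continuousOn_calibration hf hr1 hfr) (fun y hy => ?_)
    (integrand_cont.integrableOn_Icc) (fun y hy => ?_)
    (g' := fun y => deriv f y ^ 2 - 2 * (f y ^ 2 / (1 - y ^ 2))
      - 2 / 3 * (deriv f y + 2 * f 0 * y) ^ 2 - 1 / 3 * (deriv f y + 2 * f 0 * y
        - (f y - f 0 * (1 - y ^ 2)) * (1 / y - 2 * y / (1 - y ^ 2))) ^ 2))
  · exact (hasDerivAt_calibration hf hy.1.ne' (by nlinarith [hy.1, hy.2])).hasDerivWithinAt
  · have hV : 0 < 1 - y ^ 2 := by nlinarith [hy.1, hy.2]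
    have weight_le : h y * f y ^ 2 ≤ f y ^ 2 / (1 - y ^ 2) := by
      rw [le_div_iff₀ hV]
      nlinarith [sq_nonneg (f y), hh1 y (Set.Ioo_subset_Icc_self hy)]
    have square := sq_nonneg (deriv f y + 2 * f 0 * y
        - (f y - f 0 * (1 - y ^ 2)) * (1 / y - 2 * y / (1 - y ^ 2)))
    linarith

/-- Subtracting `f(1) y²` restores the boundary condition at `y = 1`. -/
lemma defect_sub_sq_le {b e β y u v c H : ℝ} (he : 0 < e) (he1 : e ≤ 1) (hb1 : b ≤ 1)
    (hβ : |β| ≤ b) (hy : y ∈ Set.Icc (0 : ℝ) 1) (hu : |u| ≤ 2) (hc : |c| ≤ 2)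
    (hH : |H| ≤ 1 / (2 * e)) :
    (v - 2 * β * y) ^ 2 - 2 * (H * (u - β * y ^ 2) ^ 2) - 2 / 3 * (v - 2 * β * y + 2 * c * y) ^ 2
      ≤ v ^ 2 - 2 * (H * u ^ 2) - 2 / 3 * (v + 2 * c * y) ^ 2
        + (4 * b * v ^ 2 + 36 * (b / e)) := by
  have hb0 : 0 ≤ b := (abs_nonneg _).trans hβ
  have b_le : b ≤ b / e := by rw [le_div_iff₀ he]; nlinarith
  have y_le : |y| ≤ 1 := abs_le.2 ⟨by linarith [hy.1], hy.2⟩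
  have y2_le : y ^ 2 ≤ 1 := by nlinarith [hy.1, hy.2]
  have y4_le : y ^ 4 ≤ 1 := by nlinarith [sq_nonneg y]
  have β2_le : β ^ 2 ≤ b := by rw [← sq_abs]; nlinarith [abs_nonneg β]
  have potential : -(H * ((u - β * y ^ 2) ^ 2 - u ^ 2)) ≤ 5 / 2 * (b / e) := by
    have perturbation : |(u - β * y ^ 2) ^ 2 - u ^ 2| ≤ 5 * b := by
      calc _ = |y ^ 4 * β ^ 2 - 2 * y ^ 2 * (β * u)| := by congr 1; ring
        _ ≤ |y ^ 4 * β ^ 2| + |2 * y ^ 2 * (β * u)| := abs_sub _ _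
        _ = y ^ 4 * β ^ 2 + 2 * y ^ 2 * (|β| * |u|) := by
          rw [abs_mul (2 * y ^ 2), abs_of_nonneg (by positivity : 0 ≤ 2 * y ^ 2), abs_mul β,
            abs_of_nonneg (by positivity : 0 ≤ y ^ 4 * β ^ 2)]
        _ ≤ 1 * b + 2 * 1 * (b * 2) := by gcongr
        _ = 5 * b := by ring
    calc _ ≤ |H| * |(u - β * y ^ 2) ^ 2 - u ^ 2| := by rw [← abs_mul]; exact neg_le_abs _
      _ ≤ 1 / (2 * e) * (5 * b) := by gcongr
      _ = _ := by field_simp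
  have cross := (abs_le.1 (show |β * y * v| ≤ b * 1 * ((1 + v ^ 2) / 2) by
    rw [abs_mul, abs_mul]
    gcongr
    linarith [sq_nonneg (|v| - 1), sq_abs v])).1
  have at_zero : y ^ 2 * (β * c) ≤ 1 * (b * 2) := by
    calc _ ≤ y ^ 2 * (|β| * |c|) := by rw [← abs_mul]; gcongr; exact le_abs_self _
      _ ≤ _ := by gcongr
  have quadratic : y ^ 2 * β ^ 2 ≤ 1 * b := by gcongr
  nlinarith [mul_nonneg hb0 (sq_nonneg v)]

lemma integral_sq_deriv_add_le {b e : ℝ} (he : 0 < e) (he1 : e ≤ 1) (hf : ContDiff ℝ 1 f)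
    (hb1 : b ≤ 1) (hb : |f 1| ≤ b) (hf2 : ∀ y ∈ Set.Icc (0 : ℝ) 1, |f y| ≤ 2)
    (hf' : ∫ y in (0 : ℝ)..1, deriv f y ^ 2 ≤ 1) :
    2 / 3 * (∫ y in (0 : ℝ)..1, (deriv f y + 2 * f 0 * y) ^ 2) ≤
      (∫ y in (0 : ℝ)..1, deriv f y ^ 2) - 2 * (∫ y in (0 : ℝ)..1, regInv e y * f y ^ 2)
        + 40 * (b / e) := by
  have cH := (contDiff_regInv he).continuous
  have deriv_corrected : deriv (fun y => f y - f 1 * y ^ 2) = fun y => deriv f y - 2 * f 1 * y := by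
    funext y
    exact ((hasDerivAt_of_contDiff hf y).sub ((hasDerivAt_pow 2 y).const_mul (f 1))
      |>.congr_deriv (by norm_num; ring)).deriv
  have defect := integral_defect_nonneg (f := fun y => f y - f 1 * y ^ 2) zero_le_one le_rfl
    (by fun_prop) cH (fun y _ => regInv_mul_one_sub_sq_le_one he y) (by ring)
  simp only [deriv_corrected, zero_pow two_ne_zero, mul_zero, sub_zero] at defect
  have bound := defect.trans (integral_mono_of_continuous zero_le_one (by fun_prop) (by fun_prop)
    fun y hy => defect_sub_sq_le (b := b) he he1 hb1 hb hy (hf2 y hy) (hf2 0 (by simp))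
      (abs_regInv_le he y))
  have hb0 : 0 ≤ b := (abs_nonneg _).trans hb
  have b_le : b ≤ b / e := by rw [le_div_iff₀ he]; nlinarith
  rw [integral_add_of_continuous (by fun_prop) (by fun_prop),
    integral_add_of_continuous (by fun_prop) (by fun_prop),
    integral_sub_of_continuous (by fun_prop) (by fun_prop),
    integral_sub_of_continuous (by fun_prop) (by fun_prop)] at bound
  simp only [intervalIntegral.integral_const_mul, intervalIntegral.integral_const, sub_zero,
    one_smul] at bound
  nlinarith

end GroundState

/-! ### Weighted energy and stream functions -/

/-- The squared norm `‖g'‖² + K² ‖g‖²` on `[-L, L]`, so that `hk k₁ k₃ g = √(h1Sq 1 |k| g)`. -/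
def h1Sq {E : Type*} [NormedAddCommGroup E] [NormedSpace ℝ E] (L K : ℝ) (g : ℝ → E) : ℝ :=
  (∫ y in (-L)..L, ‖deriv g y‖ ^ 2) + K ^ 2 * ∫ y in (-L)..L, ‖g y‖ ^ 2

section Energy

variable {L K : ℝ} {f g m : ℝ → ℝ}

lemma h1Sq_nonneg {E : Type*} [NormedAddCommGroup E] [NormedSpace ℝ E] (hL : 0 ≤ L) (K : ℝ)
    (g : ℝ → E) : 0 ≤ h1Sq L K g := by
  have hLL : -L ≤ L := by linarith
  exact add_nonneg (integral_sq_nonneg hLL _) (mul_nonneg (sq_nonneg K) (integral_sq_nonneg hLL _))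

lemma h1Sq_eq_real (L K : ℝ) (g : ℝ → ℝ) :
    h1Sq L K g = (∫ y in (-L)..L, deriv g y ^ 2) + K ^ 2 * ∫ y in (-L)..L, g y ^ 2 := by
  simp only [h1Sq, norm_eq_abs, sq_abs]

lemma h1Sq_comp_neg (L K : ℝ) (g : ℝ → ℝ) : h1Sq L K (fun y => g (-y)) = h1Sq L K g := by
  simp only [h1Sq_eq_real, deriv_comp_neg, neg_sq]
  rw [integral_comp_neg_symm (fun y => deriv g y ^ 2), integral_comp_neg_symm fun y => g y ^ 2]

lemma integral_sq_deriv_le_h1Sq (hL : 0 ≤ L) (K : ℝ) (g : ℝ → ℝ) :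
    ∫ y in (-L)..L, deriv g y ^ 2 ≤ h1Sq L K g := by
  rw [h1Sq_eq_real]
  linarith [mul_nonneg (sq_nonneg K) (integral_sq_nonneg (by linarith : -L ≤ L) g)]

lemma sqrt_h1Sq_mul_le {A Q B : ℝ} (hL : 0 ≤ L) (hm : ContDiff ℝ 1 m) (hf : ContDiff ℝ 1 f)
    (hA : 0 ≤ A) (hQ : 0 ≤ Q) (hB : 0 ≤ B)
    (hmA : ∫ y in (-L)..L, (deriv m y * f y) ^ 2 ≤ A ^ 2)
    (hmQ : ∀ y ∈ Set.Icc (-L) L, |m y| ≤ Q) (hfB : h1Sq L K f ≤ B ^ 2) :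
    √(h1Sq L K fun y => m y * f y) ≤ A + Q * B := by
  have hLL : -L ≤ L := by linarith
  set b := √(∫ y in (-L)..L, deriv f y ^ 2)
  have hb : ∫ y in (-L)..L, deriv f y ^ 2 = b ^ 2 := (sq_sqrt (integral_sq_nonneg hLL _)).symm
  have hb0 : 0 ≤ b := sqrt_nonneg _
  have hbB : b ≤ B :=
    le_of_sq_le_sq (hb.symm.trans_le ((integral_sq_deriv_le_h1Sq hL K f).trans hfB)) hB
  have product_rule : deriv (fun y => m y * f y) = fun y => deriv m y * f y + m y * deriv f y := by
    funext y
    exact ((hasDerivAt_of_contDiff hm y).mul (hasDerivAt_of_contDiff hf y)).deriv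
  have slope : ∫ y in (-L)..L, (m y * deriv f y) ^ 2 ≤ (Q * b) ^ 2 := by
    rw [mul_pow, ← hb]
    exact integral_sq_mul_le hLL (by fun_prop) (by fun_prop) hmQ
  have triangle := integral_sq_add_le hLL (by fun_prop) (by fun_prop) hA (by positivity) hmA slope
  have mass := integral_sq_mul_le hLL hm.continuous hf.continuous hmQ
  rw [h1Sq_eq_real] at hfB
  rw [sqrt_le_left (by positivity), h1Sq_eq_real, product_rule]
  calc _ ≤ (A + Q * b) ^ 2 + K ^ 2 * (Q ^ 2 * ∫ y in (-L)..L, f y ^ 2) := by gcongr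
    _ ≤ A ^ 2 + 2 * A * (Q * b) + Q ^ 2 * B ^ 2 := by nlinarith [sq_nonneg Q]
    _ ≤ A ^ 2 + 2 * A * (Q * B) + Q ^ 2 * B ^ 2 := by gcongr
    _ = (A + Q * B) ^ 2 := by ring

lemma integral_deriv_deriv_sub_mul {𝕜 : Type*} [RCLike 𝕜] {a b : ℝ} {u g : ℝ → 𝕜} (K : ℝ)
    (hu : ContDiff ℝ 2 u) (hg : ContDiff ℝ 1 g) (ha : g a = 0) (hb : g b = 0) :
    ∫ y in a..b, (deriv (deriv u) y - K ^ 2 • u y) * g y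
      = -((∫ y in a..b, deriv u y * deriv g y) + K ^ 2 • ∫ y in a..b, u y * g y) := by
  have hu' := contDiff_one_deriv hu
  have by_parts := intervalIntegral.integral_mul_deriv_eq_deriv_mul (a := a) (b := b)
    (fun y _ => hasDerivAt_of_contDiff hu' y) (fun y _ => hasDerivAt_of_contDiff hg y)
    ((by fun_prop : Continuous (deriv (deriv u))).intervalIntegrable _ _)
    ((by fun_prop : Continuous (deriv g)).intervalIntegrable _ _)
  simp only [sub_mul, smul_mul_assoc]
  rw [intervalIntegral.integral_sub
    ((by fun_prop : Continuous fun y => deriv (deriv u) y * g y).intervalIntegrable _ _)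
    ((by fun_prop : Continuous fun y => K ^ 2 • (u y * g y)).intervalIntegrable _ _),
    intervalIntegral.integral_smul, by_parts, ha, hb]
  ring

lemma contDiff_conj {𝕜 : Type*} [RCLike 𝕜] {n : WithTop ℕ∞} {g : ℝ → 𝕜} (hg : ContDiff ℝ n g) :
    ContDiff ℝ n fun y => starRingEnd 𝕜 (g y) :=
  (RCLike.conjCLE (K := 𝕜)).contDiff.comp hg

lemma deriv_conj {𝕜 : Type*} [RCLike 𝕜] (g : ℝ → 𝕜) (y : ℝ) :
    deriv (fun y => starRingEnd 𝕜 (g y)) y = starRingEnd 𝕜 (deriv g y) :=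
  deriv.star

lemma integral_deriv_deriv_sub_mul_conj {𝕜 : Type*} [RCLike 𝕜] (K : ℝ) {u : ℝ → 𝕜}
    (hu : ContDiff ℝ 2 u) (hL' : u (-L) = 0) (hL : u L = 0) :
    ∫ y in (-L)..L, (deriv (deriv u) y - K ^ 2 • u y) * starRingEnd 𝕜 (u y)
      = ((-h1Sq L K u : ℝ) : 𝕜) := by
  rw [integral_deriv_deriv_sub_mul K hu (contDiff_conj (hu.of_le one_le_two)) (by simp [hL'])
    (by simp [hL])]
  simp only [deriv_conj, RCLike.mul_conj, ← RCLike.ofReal_pow, RCLike.intervalIntegral_ofReal,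
    RCLike.real_smul_eq_coe_mul, h1Sq]
  push_cast
  rfl

end Energy

/-- A stream function `φ` with vorticity `w` on `[-L, L]`, both vanishing at `±L`; real-valued
pairs are the real and imaginary parts of the complex ones in the Orr–Sommerfeld problem. -/
structure IsStreamPair {E : Type*} [NormedAddCommGroup E] [NormedSpace ℝ E] (L K : ℝ)
    (φ w : ℝ → E) : Prop where
  contDiff_stream : ContDiff ℝ 2 φ
  contDiff_vorticity : ContDiff ℝ 1 w
  deriv_deriv_eq : ∀ y ∈ Set.Icc (-L) L, deriv (deriv φ) y = w y + K ^ 2 • φ y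
  stream_right : φ L = 0
  stream_left : φ (-L) = 0
  vorticity_right : w L = 0
  vorticity_left : w (-L) = 0

/-- The Rayleigh residual `V w + 2 φ` has dual norm at most `N` on `[-L, L]`. -/
def ResidualLE (V : ℝ → ℝ) (L K N : ℝ) (φ w : ℝ → ℝ) : Prop :=
  ∀ g : ℝ → ℝ, ContDiff ℝ 1 g → g L = 0 → g (-L) = 0 →
    |∫ y in (-L)..L, (V y * w y + 2 * φ y) * g y| ≤ N * √(h1Sq L K g)

namespace IsStreamPair

variable {L K : ℝ}

lemma contDiff_one_stream {E : Type*} [NormedAddCommGroup E] [NormedSpace ℝ E] {φ w : ℝ → E}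
    (S : IsStreamPair L K φ w) : ContDiff ℝ 1 φ :=
  S.contDiff_stream.of_le one_le_two

lemma integral_vorticity_mul_eq {𝕜 : Type*} [RCLike 𝕜] {φ w : ℝ → 𝕜} (S : IsStreamPair L K φ w)
    (hL : 0 ≤ L) (g : ℝ → 𝕜) : ∫ y in (-L)..L, w y * g y
      = ∫ y in (-L)..L, (deriv (deriv φ) y - K ^ 2 • φ y) * g y :=
  integral_congr_Icc (by linarith) fun y hy => by rw [S.deriv_deriv_eq y hy, add_sub_cancel_right]

lemma integral_vorticity_mul_conj_stream {𝕜 : Type*} [RCLike 𝕜] {φ w : ℝ → 𝕜}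
    (S : IsStreamPair L K φ w) (hL : 0 ≤ L) :
    ∫ y in (-L)..L, w y * starRingEnd 𝕜 (φ y) = ((-h1Sq L K φ : ℝ) : 𝕜) := by
  rw [S.integral_vorticity_mul_eq hL, integral_deriv_deriv_sub_mul_conj K S.contDiff_stream
    S.stream_left S.stream_right]

variable {φ w : ℝ → ℝ}

lemma contDiff_deriv_stream (S : IsStreamPair L K φ w) : ContDiff ℝ 1 (deriv φ) :=
  contDiff_one_deriv S.contDiff_stream

lemma reflect (S : IsStreamPair L K φ w) :
    IsStreamPair L K (fun y => φ (-y)) (fun y => w (-y)) where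
  contDiff_stream := S.contDiff_stream.comp contDiff_neg
  contDiff_vorticity := S.contDiff_vorticity.comp contDiff_neg
  deriv_deriv_eq y hy := by
    have slope : deriv (fun y => φ (-y)) = fun y => -deriv φ (-y) := by
      funext y; exact deriv_comp_neg φ y
    rw [slope, deriv.fun_neg, deriv_comp_neg (deriv φ), neg_neg]
    exact S.deriv_deriv_eq (-y) ⟨by linarith [hy.2], by linarith [hy.1]⟩
  stream_right := S.stream_left
  stream_left := by simpa using S.stream_right
  vorticity_right := S.vorticity_left
  vorticity_left := by simpa using S.vorticity_right

lemma integral_vorticity_mul_stream (S : IsStreamPair L K φ w) (hL : 0 ≤ L) :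
    ∫ y in (-L)..L, w y * φ y = -h1Sq L K φ := by
  simpa using S.integral_vorticity_mul_conj_stream hL

end IsStreamPair

lemma ResidualLE.reflect {V : ℝ → ℝ} {L K N : ℝ} {φ w : ℝ → ℝ} (hV : ∀ y, V (-y) = V y)
    (R : ResidualLE V L K N φ w) :
    ResidualLE V L K N (fun y => φ (-y)) (fun y => w (-y)) := by
  intro g hg hgL hgL'
  have h := R (fun y => g (-y)) (hg.comp contDiff_neg) hgL' (by simpa using hgL)
  rw [h1Sq_comp_neg] at h
  rw [← integral_comp_neg_symm]
  simpa only [hV, neg_neg] using h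

/-! ### A priori bounds in the critical regime -/

/-- The hypothetical counterexample, rescaled so that the critical points are `±1`: unit energy,
critical-layer width `t²`, vorticity of size `ω² / t³` and residual of size `ω² t³`. The numerical
constants in the estimates below only matter through `ω` being small. -/
structure CriticalRegime (L K t ω : ℝ) (φ w : ℝ → ℝ) : Prop extends IsStreamPair L K φ w where
  length_pos : 0 < L
  wavenumber_pos : 0 < K
  one_le_mul : 1 ≤ K * L
  width_pos : 0 < t
  small_pos : 0 < ω
  small_le : ω ≤ 1 / 1000
  width_sq_le : t ^ 2 ≤ ω
  residual_le : ResidualLE (fun y => 1 - y ^ 2) L K (ω ^ 2 * t ^ 3) φ w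
  energy_eq : h1Sq L K φ = 1
  enstrophy_le : h1Sq L K w ≤ (ω ^ 2 / t ^ 3) ^ 2

namespace CriticalRegime

variable {L K t ω : ℝ} {φ w : ℝ → ℝ}

lemma reflect (S : CriticalRegime L K t ω φ w) :
    CriticalRegime L K t ω (fun y => φ (-y)) (fun y => w (-y)) :=
  { S with
    toIsStreamPair := S.toIsStreamPair.reflect
    residual_le := S.residual_le.reflect fun y => by rw [neg_sq]
    energy_eq := (h1Sq_comp_neg L K φ).trans S.energy_eq
    enstrophy_le := (h1Sq_comp_neg L K w).trans_le S.enstrophy_le }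

section APriori

variable (S : CriticalRegime L K t ω φ w)
include S

lemma neg_le_self : -L ≤ L := by linarith [S.length_pos]

lemma scale_pos : 0 < t ^ 2 := pow_pos S.width_pos 2

lemma scale_le_one : t ^ 2 ≤ 1 := S.width_sq_le.trans (by linarith [S.small_le])

lemma width_le_one : t ≤ 1 := (sq_le_one_iff₀ S.width_pos.le).1 S.scale_le_one

lemma residual_size_le_one : ω ^ 2 * t ^ 3 ≤ 1 :=
  mul_le_one₀ (pow_le_one₀ S.small_pos.le (by linarith [S.small_le])) (pow_nonneg S.width_pos.le 3)
    (pow_le_one₀ S.width_pos.le S.width_le_one)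

lemma residual_size_nonneg : 0 ≤ ω ^ 2 * t ^ 3 :=
  mul_nonneg (sq_nonneg ω) (pow_nonneg S.width_pos.le 3)

lemma enstrophy_size_nonneg : 0 ≤ ω ^ 2 / t ^ 3 :=
  div_nonneg (sq_nonneg ω) (pow_nonneg S.width_pos.le 3)

lemma continuous_stream : Continuous φ := S.contDiff_stream.continuous

lemma continuous_deriv_stream : Continuous (deriv φ) := S.contDiff_deriv_stream.continuous

lemma continuous_vorticity : Continuous w := S.contDiff_vorticity.continuous

lemma integral_sq_deriv_stream_le : ∫ y in (-L)..L, deriv φ y ^ 2 ≤ 1 :=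
  (integral_sq_deriv_le_h1Sq S.length_pos.le K φ).trans_eq S.energy_eq

lemma integral_sq_deriv_stream_le_of_subset {a b : ℝ} (ha : -L ≤ a) (hab : a ≤ b) (hb : b ≤ L) :
    ∫ y in a..b, deriv φ y ^ 2 ≤ 1 := by
  have := S.continuous_deriv_stream
  exact (integral_le_of_subinterval ha hab hb (by fun_prop) fun y => sq_nonneg _).trans
    S.integral_sq_deriv_stream_le

lemma abs_integral_residual_mul_le {m f : ℝ → ℝ} {A Q B : ℝ} (hm : ContDiff ℝ 1 m)
    (hf : ContDiff ℝ 1 f) (hfL : f L = 0) (hfL' : f (-L) = 0) (hA : 0 ≤ A) (hQ : 0 ≤ Q)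
    (hB : 0 ≤ B) (hmA : ∫ y in (-L)..L, (deriv m y * f y) ^ 2 ≤ A ^ 2)
    (hmQ : ∀ y ∈ Set.Icc (-L) L, |m y| ≤ Q) (hfB : h1Sq L K f ≤ B ^ 2) :
    |∫ y in (-L)..L, ((1 - y ^ 2) * w y + 2 * φ y) * (m y * f y)|
      ≤ ω ^ 2 * t ^ 3 * (A + Q * B) := by
  refine (S.residual_le _ (hm.mul hf) (by simp [hfL]) (by simp [hfL'])).trans ?_
  gcongr
  · exact S.residual_size_nonneg
  · exact sqrt_h1Sq_mul_le S.length_pos.le hm hf hA hQ hB hmA hmQ hfB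

lemma integral_sq_stream_le : ∫ y in (-L)..L, φ y ^ 2 ≤ 2 := by
  have c0 := S.continuous_stream
  have c1 := S.continuous_deriv_stream
  have c2 : Continuous (deriv (deriv φ)) := S.contDiff_deriv_stream.continuous_deriv_one
  have c3 := S.continuous_vorticity
  have tested := (abs_le.1 (S.residual_le φ S.contDiff_one_stream S.stream_right S.stream_left)).2
  rw [S.energy_eq, sqrt_one, mul_one] at tested
  set D : ℝ → ℝ := fun y =>
    (1 - y ^ 2) * deriv φ y ^ 2 + (1 - y ^ 2) * φ y * deriv (deriv φ) y + φ y ^ 2 with hD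
  have cD : Continuous D := by fun_prop
  have ftc : ∫ y in (-L)..L, D y = 0 := by
    rw [integral_eq_sub_of_continuous_deriv
      (F := fun y => (1 - y ^ 2) * (φ y * deriv φ y) + y * φ y ^ 2) (fun y => ?_) cD]
    · simp [S.stream_right, S.stream_left]
    · have dφ := hasDerivAt_of_contDiff S.contDiff_one_stream y
      refine ((((hasDerivAt_pow 2 y).const_sub 1).mul
        (dφ.mul (hasDerivAt_of_contDiff S.contDiff_deriv_stream y))).add
        ((hasDerivAt_id y).mul (dφ.pow 2))).congr_deriv ?_
      simp [hD]; ring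
  have pointwise : ∫ y in (-L)..L, φ y ^ 2 ≤ ∫ y in (-L)..L,
      ((((1 - y ^ 2) * w y + 2 * φ y) * φ y - D y) + (deriv φ y ^ 2 + K ^ 2 * φ y ^ 2)) := by
    refine integral_mono_of_continuous S.neg_le_self (by fun_prop) (by fun_prop) fun y hy => ?_
    simp only [hD, S.deriv_deriv_eq y hy, smul_eq_mul]
    linarith [mul_nonneg (sq_nonneg y) (sq_nonneg (deriv φ y)),
      mul_nonneg (sq_nonneg y) (mul_nonneg (sq_nonneg K) (sq_nonneg (φ y)))]
  have energy := S.energy_eq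
  rw [h1Sq_eq_real] at energy
  clear_value D
  rw [integral_add_of_continuous (by fun_prop) (by fun_prop),
    integral_sub_of_continuous (by fun_prop) (by fun_prop),
    integral_add_of_continuous (by fun_prop) (by fun_prop), intervalIntegral.integral_const_mul,
    energy, ftc] at pointwise
  linarith [S.residual_size_le_one]

lemma abs_stream_le {z : ℝ} (hz : z ∈ Set.Icc (-L) L) : |φ z| ≤ 2 := by
  have := sq_le_two_mul_of_integral_sq_le (A := 3 / 2) (B := 1) S.contDiff_one_stream (by norm_num)
    (by norm_num) hz S.stream_left (S.integral_sq_stream_le.trans (by norm_num))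
    (S.integral_sq_deriv_stream_le.trans (by norm_num))
  exact abs_le_of_sq_le_sq (by linarith) (by norm_num)

lemma integral_layer_mul_sq_stream_le :
    ∫ y in (-L)..L, layer (t ^ 2) y * φ y ^ 2 ≤ 28 * t ^ 2 := by
  have c0 := S.continuous_stream
  have cP := (contDiff_layer S.scale_pos).continuous
  calc _ ≤ ∫ y in (-L)..L, 4 * layer (t ^ 2) y := by
        refine integral_mono_of_continuous S.neg_le_self (by fun_prop) (by fun_prop) fun y hy => ?_
        have sq_le : φ y ^ 2 ≤ 4 := by
          nlinarith [S.abs_stream_le hy, abs_nonneg (φ y), sq_abs (φ y)]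
        nlinarith [layer_nonneg (t ^ 2) y]
    _ ≤ 28 * t ^ 2 := by
        rw [intervalIntegral.integral_const_mul]
        linarith [integral_layer_le S.scale_pos S.neg_le_self]

lemma integral_sq_mul_stream_le {q : ℝ → ℝ} {c : ℝ} (hq : Continuous q) (hc : 0 ≤ c)
    (hqc : ∀ y, q y ^ 2 ≤ c * layer (t ^ 2) y) :
    ∫ y in (-L)..L, (q y * φ y) ^ 2 ≤ c * (28 * t ^ 2) := by
  have c0 := S.continuous_stream
  have cP := (contDiff_layer S.scale_pos).continuous
  calc _ ≤ ∫ y in (-L)..L, c * (layer (t ^ 2) y * φ y ^ 2) := by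
        refine integral_mono_of_continuous S.neg_le_self (by fun_prop) (by fun_prop) fun y _ => ?_
        rw [mul_pow, ← mul_assoc]
        gcongr
        exact hqc y
    _ ≤ c * (28 * t ^ 2) := by
        rw [intervalIntegral.integral_const_mul]
        gcongr
        exact S.integral_layer_mul_sq_stream_le

/-! ### Vorticity bounds -/

lemma sq_vorticity_le {W z : ℝ} (hW : 0 ≤ W) (hwW : ∫ y in (-L)..L, w y ^ 2 ≤ W ^ 2)
    (hz : z ∈ Set.Icc (-L) L) : w z ^ 2 ≤ 2 * W * (ω ^ 2 / t ^ 3) :=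
  sq_le_two_mul_of_integral_sq_le S.contDiff_vorticity hW S.enstrophy_size_nonneg hz
    S.vorticity_left hwW ((integral_sq_deriv_le_h1Sq S.length_pos.le K w).trans S.enstrophy_le)

lemma integral_layer_mul_sq_vorticity_le {W : ℝ} (hW : 0 ≤ W)
    (hwW : ∫ y in (-L)..L, w y ^ 2 ≤ W ^ 2) :
    ∫ y in (-L)..L, layer (t ^ 2) y * w y ^ 2 ≤ 14 * ω ^ 2 * (W / t) := by
  have c3 := S.continuous_vorticity
  have cP := (contDiff_layer S.scale_pos).continuous
  have ht := S.width_pos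
  calc _ ≤ ∫ y in (-L)..L, 2 * W * (ω ^ 2 / t ^ 3) * layer (t ^ 2) y := by
        refine integral_mono_of_continuous S.neg_le_self (by fun_prop) (by fun_prop) fun y hy => ?_
        rw [mul_comm]
        gcongr
        · exact layer_nonneg _ _
        · exact S.sq_vorticity_le hW hwW hy
    _ ≤ 2 * W * (ω ^ 2 / t ^ 3) * (7 * t ^ 2) := by
        rw [intervalIntegral.integral_const_mul]
        gcongr
        exact integral_layer_le S.scale_pos S.neg_le_self
    _ = _ := by field_simp; ring

lemma abs_integral_regInv_mul_le {W : ℝ} (hW : 0 ≤ W) (hwW : ∫ y in (-L)..L, w y ^ 2 ≤ W ^ 2) :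
    |∫ y in (-L)..L, (regInv (t ^ 2) y * φ y) * w y| ≤ 6 * (W / t) := by
  have c0 := S.continuous_stream
  have cH := (contDiff_regInv S.scale_pos).continuous
  have ht := S.width_pos
  have weighted := S.integral_sq_mul_stream_le (c := 1 / (t ^ 2) ^ 2) cH (by positivity) fun y =>
    (regInv_sq_le S.scale_pos y).trans_eq (by ring)
  calc _ ≤ 6 / t * W := by
        refine abs_integral_mul_le S.neg_le_self (by fun_prop) S.continuous_vorticity
          (by positivity) hW (weighted.trans ?_) hwW
        calc _ = 28 / t ^ 2 := by field_simp
          _ ≤ _ := by rw [div_pow]; gcongr; norm_num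
    _ = _ := by ring

lemma abs_integral_residual_mul_regInv_vorticity_le {W : ℝ} (hW : 0 ≤ W)
    (hwW : ∫ y in (-L)..L, w y ^ 2 ≤ W ^ 2) :
    |∫ y in (-L)..L, ((1 - y ^ 2) * w y + 2 * φ y) * (regInv (t ^ 2) y * w y)|
      ≤ 3 * ω ^ 2 * (W / t) + ω ^ 4 / t ^ 2 := by
  have hs := S.scale_pos
  have ht := S.width_pos
  have cH' : Continuous (deriv (regInv (t ^ 2))) := (contDiff_regInv hs).continuous_deriv_one
  have slope : ∀ y ∈ Set.Icc (-L) L, |deriv (regInv (t ^ 2)) y| ≤ 3 / t ^ 4 := fun y _ => by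
    refine abs_le_of_sq_le_sq ((deriv_regInv_sq_le hs S.scale_le_one y).trans ?_) (by positivity)
    rw [div_pow, ← pow_mul, ← pow_mul]
    gcongr
    linarith [layer_le_one hs y]
  have mass : ∫ y in (-L)..L, (deriv (regInv (t ^ 2)) y * w y) ^ 2 ≤ (3 / t ^ 4 * W) ^ 2 := by
    rw [mul_pow]
    exact (integral_sq_mul_le S.neg_le_self cH' S.continuous_vorticity slope).trans (by gcongr)
  have tested := S.abs_integral_residual_mul_le (Q := 1 / (2 * t ^ 2)) (contDiff_regInv hs)
    S.contDiff_vorticity S.vorticity_right S.vorticity_left (by positivity) (by positivity)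
    S.enstrophy_size_nonneg mass (fun y _ => abs_regInv_le hs y) S.enstrophy_le
  calc _ ≤ _ := tested
    _ = 3 * ω ^ 2 * (W / t) + ω ^ 4 / t ^ 2 / 2 := by field_simp
    _ ≤ 3 * ω ^ 2 * (W / t) + ω ^ 4 / t ^ 2 := by linarith [show 0 ≤ ω ^ 4 / t ^ 2 by positivity]

lemma integral_sq_vorticity_le : ∫ y in (-L)..L, w y ^ 2 ≤ (14 / t) ^ 2 := by
  have c0 := S.continuous_stream
  have c3 := S.continuous_vorticity
  have hs := S.scale_pos
  have ht := S.width_pos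
  have cP := (contDiff_layer hs).continuous
  have cH := (contDiff_regInv hs).continuous
  set W := √(∫ y in (-L)..L, w y ^ 2)
  have hW0 : 0 ≤ W := sqrt_nonneg _
  have hW : ∫ y in (-L)..L, w y ^ 2 = W ^ 2 := (sq_sqrt (integral_sq_nonneg S.neg_le_self _)).symm
  have tested := (abs_le.1 (S.abs_integral_residual_mul_regInv_vorticity_le hW0 hW.le)).2
  have expand : ∫ y in (-L)..L, ((1 - y ^ 2) * w y + 2 * φ y) * (regInv (t ^ 2) y * w y)
      = ∫ y in (-L)..L, ((w y ^ 2 - layer (t ^ 2) y * w y ^ 2)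
          + 2 * ((regInv (t ^ 2) y * φ y) * w y)) := by
    congr 1; ext y; linear_combination w y ^ 2 * one_sub_sq_mul_regInv hs y
  rw [expand, integral_add_of_continuous (by fun_prop) (by fun_prop),
    integral_sub_of_continuous (by fun_prop) (by fun_prop), intervalIntegral.integral_const_mul,
    hW] at tested
  have layer_part := S.integral_layer_mul_sq_vorticity_le hW0 hW.le
  have stream_part := (abs_le.1 (S.abs_integral_regInv_mul_le hW0 hW.le)).1
  have quadratic : W ^ 2 ≤ 13 * (W / t) + 1 / t ^ 2 := by
    have small : ω ^ 2 ≤ 1 / 1000 := by nlinarith [S.small_pos, S.small_le]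
    have ratio_nonneg : 0 ≤ W / t := by positivity
    have : ω ^ 4 / t ^ 2 ≤ 1 / t ^ 2 := by gcongr; nlinarith [sq_nonneg ω]
    nlinarith
  have scaled : (W * t) ^ 2 ≤ 13 * (W * t) + 1 := by
    calc _ = W ^ 2 * t ^ 2 := mul_pow ..
      _ ≤ (13 * (W / t) + 1 / t ^ 2) * t ^ 2 := by gcongr
      _ = _ := by field_simp
  rw [hW]
  gcongr
  rw [le_div_iff₀ ht]
  nlinarith

lemma abs_vorticity_le {z : ℝ} (hz : z ∈ Set.Icc (-L) L) : |w z| ≤ 6 * ω / t ^ 2 := by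
  have ht := S.width_pos
  have hω := S.small_pos
  refine abs_le_of_sq_le_sq ?_ (by positivity)
  calc w z ^ 2 ≤ 2 * (14 / t) * (ω ^ 2 / t ^ 3) :=
        S.sq_vorticity_le (by positivity) S.integral_sq_vorticity_le hz
    _ = 28 * ω ^ 2 / t ^ 4 := by field_simp; norm_num
    _ ≤ 36 * ω ^ 2 / t ^ 4 := by gcongr; norm_num
    _ = _ := by ring

lemma abs_integral_layer_mul_vorticity_mul_le {a b Q : ℝ} {q : ℝ → ℝ} (ha : -L ≤ a) (hab : a ≤ b)
    (hb : b ≤ L) (hQ0 : 0 ≤ Q) (hQ : ∀ y ∈ Set.Icc a b, |q y| ≤ Q) :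
    |∫ y in a..b, layer (t ^ 2) y * w y * q y| ≤ 42 * ω * Q := by
  have hs := S.scale_pos
  have ht := S.width_pos
  have hω := S.small_pos
  have cP := (contDiff_layer hs).continuous
  calc _ ≤ ∫ y in a..b, (6 * ω / t ^ 2 * Q) * layer (t ^ 2) y := by
        refine abs_integral_le_of_abs_le hab (by fun_prop) fun y hy => ?_
        have hP := layer_nonneg (t ^ 2) y
        rw [abs_mul, abs_mul, abs_of_nonneg hP, mul_assoc, mul_comm]
        gcongr
        · exact S.abs_vorticity_le ⟨ha.trans hy.1, hy.2.trans hb⟩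
        · exact hQ y hy
    _ ≤ (6 * ω / t ^ 2 * Q) * (7 * t ^ 2) := by
        rw [intervalIntegral.integral_const_mul]
        gcongr
        exact integral_layer_le hs hab
    _ = _ := by field_simp; ring

end APriori

end CriticalRegime

namespace CriticalRegime

variable {L K t ω : ℝ} {φ w : ℝ → ℝ}

section

variable (S : CriticalRegime L K t ω φ w)
include S

/-! ### Weighted energy identity -/

lemma abs_integral_residual_mul_sq_layer_stream_le :
    |∫ y in (-L)..L, ((1 - y ^ 2) * w y + 2 * φ y) * (layer (t ^ 2) y ^ 2 * φ y)| ≤ ω * t ^ 2 := by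
  have hs := S.scale_pos
  have ht := S.width_pos
  have hω := S.small_pos
  have cP := contDiff_layer hs
  have cP' : Continuous (deriv (layer (t ^ 2))) := cP.continuous_deriv_one
  have slope : deriv (fun y => layer (t ^ 2) y ^ 2)
      = fun y => 2 * layer (t ^ 2) y * deriv (layer (t ^ 2)) y := by
    funext y
    exact ((hasDerivAt_of_contDiff cP y).pow 2).deriv.trans (by norm_num)
  have slope_le : ∀ y, deriv (fun y => layer (t ^ 2) y ^ 2) y ^ 2
      ≤ 96 / t ^ 4 * layer (t ^ 2) y := fun y => by
    have P0 := layer_nonneg (t ^ 2) y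
    have P3 : layer (t ^ 2) y ^ 3 ≤ 1 := pow_le_one₀ P0 (layer_le_one hs y)
    rw [slope]
    calc _ = 4 * layer (t ^ 2) y ^ 2 * deriv (layer (t ^ 2)) y ^ 2 := by ring
      _ ≤ 4 * layer (t ^ 2) y ^ 2 * (24 * layer (t ^ 2) y ^ 2 / (t ^ 2) ^ 2) := by
          gcongr
          exact deriv_layer_sq_le hs S.scale_le_one y
      _ = 96 / t ^ 4 * (layer (t ^ 2) y * layer (t ^ 2) y ^ 3) := by ring
      _ ≤ 96 / t ^ 4 * (layer (t ^ 2) y * 1) := by gcongr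
      _ = _ := by ring
  have mass : ∫ y in (-L)..L, (deriv (fun y => layer (t ^ 2) y ^ 2) y * φ y) ^ 2
      ≤ (52 / t) ^ 2 := by
    refine (S.integral_sq_mul_stream_le (by rw [slope]; fun_prop) (by positivity) slope_le).trans ?_
    calc _ = 2688 / t ^ 2 := by field_simp; norm_num
      _ ≤ _ := by rw [div_pow]; gcongr; norm_num
  have tested := S.abs_integral_residual_mul_le (B := 1) (Q := 1) (cP.pow 2) S.contDiff_one_stream
    S.stream_right S.stream_left (by positivity) zero_le_one zero_le_one mass
    (fun y _ => by
      rw [abs_of_nonneg (sq_nonneg _)]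
      exact pow_le_one₀ (layer_nonneg _ _) (layer_le_one hs y))
    (by rw [S.energy_eq, one_pow])
  calc _ ≤ _ := tested
    _ = ω ^ 2 * t ^ 2 * (52 + t) := by field_simp
    _ ≤ ω * (1 / 1000) * t ^ 2 * (52 + 1) := by
        rw [sq ω]
        gcongr
        exacts [S.small_le, S.width_le_one]
    _ ≤ ω * t ^ 2 := by nlinarith [mul_pos hω hs]

lemma integral_sq_layer_mul_sq_stream_le :
    ∫ y in (-L)..L, layer (t ^ 2) y ^ 2 * φ y ^ 2 ≤ 50 * ω * t ^ 2 := by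
  have c0 := S.continuous_stream
  have c3 := S.continuous_vorticity
  have hs := S.scale_pos
  have ht := S.width_pos
  have hω := S.small_pos
  have cP := (contDiff_layer hs).continuous
  have tested := (abs_le.1 S.abs_integral_residual_mul_sq_layer_stream_le).2
  have expand : ∫ y in (-L)..L, ((1 - y ^ 2) * w y + 2 * φ y) * (layer (t ^ 2) y ^ 2 * φ y)
      = ∫ y in (-L)..L, (layer (t ^ 2) y * w y * ((1 - y ^ 2) * layer (t ^ 2) y * φ y)
          + 2 * (layer (t ^ 2) y ^ 2 * φ y ^ 2)) := by
    congr 1; ext y; ring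
  rw [expand, integral_add_of_continuous (by fun_prop) (by fun_prop),
    intervalIntegral.integral_const_mul] at tested
  have vorticity_part := (abs_le.1 (S.abs_integral_layer_mul_vorticity_mul_le (Q := t ^ 2 * 2)
    (q := fun y => (1 - y ^ 2) * layer (t ^ 2) y * φ y) le_rfl S.neg_le_self le_rfl
    (by positivity) fun y hy => by
      rw [abs_mul, abs_mul, abs_of_nonneg (layer_nonneg _ _)]
      gcongr
      exacts [abs_one_sub_sq_mul_layer_le hs y, S.abs_stream_le hy])).1
  nlinarith [mul_pos hω hs]

lemma sq_stream_one_le (hL : 1 ≤ L) : φ 1 ^ 2 ≤ 2502 * ω := by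
  have c0 := S.continuous_stream
  have hs := S.scale_pos
  have hs1 := S.scale_le_one
  have hω := S.small_pos
  have cP := (contDiff_layer hs).continuous
  have near_one : ∫ y in (1 - t ^ 2)..1, φ 1 ^ 2 ≤
      ∫ y in (1 - t ^ 2)..1, (50 * (layer (t ^ 2) y ^ 2 * φ y ^ 2) + 2 * t ^ 2) := by
    refine integral_mono_of_continuous (by linarith) (by fun_prop) (by fun_prop) fun y hy => ?_
    have layer_ge : 1 / 5 ≤ layer (t ^ 2) y := by
      have : (1 - y ^ 2) ^ 2 ≤ (2 * t ^ 2) ^ 2 := by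
        apply pow_le_pow_left₀ <;> nlinarith [hy.1, hy.2]
      unfold layer
      rw [div_le_div_iff₀ (by norm_num) (layer_denom_pos hs y)]
      linarith
    have oscillation : (φ 1 - φ y) ^ 2 ≤ t ^ 2 := by
      refine (sq_sub_le_mul_integral_sq_deriv hy.2 S.contDiff_one_stream).trans ?_
      have := S.integral_sq_deriv_stream_le_of_subset (by linarith [hy.1]) hy.2 hL
      nlinarith [hy.1, hy.2]
    have : 1 / 25 ≤ layer (t ^ 2) y ^ 2 := by nlinarith
    nlinarith [sq_nonneg (φ 1 - 2 * φ y), sq_nonneg (φ y)]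
  have restrict := integral_le_of_subinterval (a := -L) (b := L) (c := 1 - t ^ 2) (d := 1)
    (f := fun y => layer (t ^ 2) y ^ 2 * φ y ^ 2) (by linarith) (by linarith) hL (by fun_prop)
    fun y => by positivity
  rw [intervalIntegral.integral_const, integral_add_of_continuous (by fun_prop) (by fun_prop),
    intervalIntegral.integral_const, intervalIntegral.integral_const_mul, smul_eq_mul,
    smul_eq_mul, sub_sub_cancel] at near_one
  have := S.integral_sq_layer_mul_sq_stream_le
  have := S.width_sq_le
  exact le_of_mul_le_mul_right (a := t ^ 2) (by nlinarith) hs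

lemma abs_integral_residual_mul_regInv_stream_le :
    |∫ y in (-L)..L, ((1 - y ^ 2) * w y + 2 * φ y) * (regInv (t ^ 2) y * φ y)| ≤ ω := by
  have hs := S.scale_pos
  have ht := S.width_pos
  have hω := S.small_pos
  have mass : ∫ y in (-L)..L, (deriv (regInv (t ^ 2)) y * φ y) ^ 2 ≤ (13 / t ^ 3) ^ 2 := by
    refine (S.integral_sq_mul_stream_le (c := 6 / (t ^ 2) ^ 4)
      (contDiff_regInv hs).continuous_deriv_one (by positivity) fun y =>
      (deriv_regInv_sq_le hs S.scale_le_one y).trans_eq (by ring)).trans ?_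
    calc _ = 168 / (t ^ 3) ^ 2 := by field_simp; norm_num
      _ ≤ _ := by rw [div_pow]; gcongr; norm_num
  have tested := S.abs_integral_residual_mul_le (Q := 1 / (2 * t ^ 2)) (B := 1) (contDiff_regInv hs)
    S.contDiff_one_stream S.stream_right S.stream_left (by positivity) (by positivity) zero_le_one
    mass (fun y _ => abs_regInv_le hs y) (by rw [S.energy_eq, one_pow])
  calc _ ≤ _ := tested
    _ = ω ^ 2 * (13 + t / 2) := by field_simp
    _ ≤ ω * (1 / 1000) * (13 + 1 / 2) := by
        rw [sq ω]
        gcongr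
        exacts [S.small_le, S.width_le_one]
    _ ≤ ω := by linarith

lemma one_le_integral_regInv :
    1 ≤ 2 * (∫ y in (-L)..L, regInv (t ^ 2) y * φ y ^ 2) + 100 * ω := by
  have c0 := S.continuous_stream
  have c3 := S.continuous_vorticity
  have hs := S.scale_pos
  have cP := (contDiff_layer hs).continuous
  have cH := (contDiff_regInv hs).continuous
  have tested := (abs_le.1 S.abs_integral_residual_mul_regInv_stream_le).1
  have expand : ∫ y in (-L)..L, ((1 - y ^ 2) * w y + 2 * φ y) * (regInv (t ^ 2) y * φ y)
      = ∫ y in (-L)..L, ((w y * φ y - layer (t ^ 2) y * w y * φ y)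
          + 2 * (regInv (t ^ 2) y * φ y ^ 2)) := by
    congr 1; ext y; linear_combination w y * φ y * one_sub_sq_mul_regInv hs y
  rw [expand, integral_add_of_continuous (by fun_prop) (by fun_prop),
    integral_sub_of_continuous (by fun_prop) (by fun_prop), intervalIntegral.integral_const_mul,
    S.integral_vorticity_mul_stream S.length_pos.le, S.energy_eq] at tested
  have layer_part := (abs_le.1 (S.abs_integral_layer_mul_vorticity_mul_le (q := φ) le_rfl
    S.neg_le_self le_rfl zero_le_two fun y hy => S.abs_stream_le hy)).1
  linarith [S.small_pos]

lemma one_le_integral_regInv_add {η : ℝ} (htη : t ^ 2 ≤ η ^ 2) (hη : 0 ≤ η) (hη1 : η ≤ 1) :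
    1 ≤ 2 * (∫ y in (-L)..L, regInv (η ^ 2) y * φ y ^ 2) + (100 * ω + 120 * η) := by
  have := S.one_le_integral_regInv
  have := integral_regInv_mul_sq_le S.scale_pos htη hη hη1 S.length_pos.le S.contDiff_one_stream
    S.stream_right S.stream_left (fun y hy => S.abs_stream_le hy) S.integral_sq_deriv_stream_le
  linarith

/-! ### Spectral gap -/

lemma integral_regInv_le_integral_sq_deriv_of_length_le_one {e : ℝ} (he : 0 < e) (hL : L ≤ 1) :
    2 * (∫ y in (0 : ℝ)..L, regInv e y * φ y ^ 2) ≤ ∫ y in (0 : ℝ)..L, deriv φ y ^ 2 := by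
  have c0 := S.continuous_stream
  have c1 := S.continuous_deriv_stream
  have cH := (contDiff_regInv he).continuous
  have gap := integral_defect_nonneg S.length_pos.le hL S.contDiff_one_stream cH
    (fun y _ => regInv_mul_one_sub_sq_le_one he y) S.stream_right
  rw [integral_sub_of_continuous (by fun_prop) (by fun_prop),
    integral_sub_of_continuous (by fun_prop) (by fun_prop), intervalIntegral.integral_const_mul,
    intervalIntegral.integral_const_mul] at gap
  linarith [integral_sq_nonneg S.length_pos.le fun y => deriv φ y + 2 * φ 0 * y]

end

/-- The energy of `φ` on `[0, L]` not accounted for by the ground state `φ 0 * (1 - y ^ 2)`. -/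
def halfDefect (L : ℝ) (φ : ℝ → ℝ) : ℝ :=
  2 / 3 * (∫ y in (0 : ℝ)..1, (deriv φ y + 2 * φ 0 * y) ^ 2) + ∫ y in (1 : ℝ)..L, deriv φ y ^ 2

lemma halfDefect_nonneg (hL : 1 ≤ L) (φ : ℝ → ℝ) : 0 ≤ halfDefect L φ :=
  add_nonneg (mul_nonneg (by norm_num) (integral_sq_nonneg zero_le_one _)) (integral_sq_nonneg hL _)

lemma halfDefect_le (S : CriticalRegime L K t ω φ w) {e b : ℝ} (he : 0 < e) (he1 : e ≤ 1)
    (hL : 1 ≤ L) (hb0 : 0 ≤ b) (hb1 : b ≤ 1) (hb : 2502 * ω ≤ b ^ 2) :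
    halfDefect L φ ≤ (∫ y in (0 : ℝ)..L, deriv φ y ^ 2)
      - 2 * (∫ y in (0 : ℝ)..L, regInv e y * φ y ^ 2) + 40 * (b / e) := by
  have c0 := S.continuous_stream
  have c1 := S.continuous_deriv_stream
  have cH := (contDiff_regInv he).continuous
  have gap := integral_sq_deriv_add_le he he1 S.contDiff_one_stream hb1
    (abs_le_of_sq_le_sq ((S.sq_stream_one_le hL).trans hb) hb0)
    (fun y hy => S.abs_stream_le ⟨by linarith [hy.1], by linarith [hy.2]⟩)
    (S.integral_sq_deriv_stream_le_of_subset (by linarith) zero_le_one hL)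
  have outer : ∫ y in (1 : ℝ)..L, regInv e y * φ y ^ 2 ≤ 0 := by
    refine (integral_mono_of_continuous hL (by fun_prop) continuous_const fun y hy => ?_).trans_eq
      intervalIntegral.integral_zero
    have : regInv e y ≤ 0 := div_nonpos_of_nonpos_of_nonneg (by nlinarith [hy.1]) (by positivity)
    exact mul_nonpos_of_nonpos_of_nonneg this (sq_nonneg _)
  have split_slope := integral_add_adjacent_of_continuous (a := 0) (b := L) 1
    (by fun_prop : Continuous fun y => deriv φ y ^ 2)
  have split_weight := integral_add_adjacent_of_continuous (a := 0) (b := L) 1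
    (by fun_prop : Continuous fun y => regInv e y * φ y ^ 2)
  unfold halfDefect
  linarith

lemma half_line_energy_gap_add_le (S : CriticalRegime L K t ω φ w) {η : ℝ}
    (htη : t ^ 2 ≤ η ^ 2) (hη : 0 ≤ η) (hη1 : η ≤ 1) :
    ((∫ y in (0 : ℝ)..L, deriv φ y ^ 2) - 2 * ∫ y in (0 : ℝ)..L, regInv (η ^ 2) y * φ y ^ 2)
      + ((∫ y in (0 : ℝ)..L, deriv (fun x => φ (-x)) y ^ 2)
          - 2 * ∫ y in (0 : ℝ)..L, regInv (η ^ 2) y * φ (-y) ^ 2)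
      + K ^ 2 * (∫ y in (-L)..L, φ y ^ 2) ≤ 100 * ω + 120 * η := by
  have c0 := S.continuous_stream
  have c1 := S.continuous_deriv_stream
  have cH := (contDiff_regInv (S.scale_pos.trans_le htη)).continuous
  have weighted := S.one_le_integral_regInv_add htη hη hη1
  have energy := S.energy_eq
  rw [h1Sq_eq_real, integral_symm_eq (by fun_prop : Continuous fun y => deriv φ y ^ 2)] at energy
  rw [integral_symm_eq (by fun_prop : Continuous fun y => regInv (η ^ 2) y * φ y ^ 2)] at weighted
  simp only [regInv_neg] at weighted
  simp only [deriv_comp_neg, neg_sq]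
  linarith

lemma wavenumber_sq_mul_le_of_length_le_one (S : CriticalRegime L K t ω φ w) {η : ℝ}
    (htη : t ^ 2 ≤ η ^ 2) (hη : 0 ≤ η) (hη1 : η ≤ 1) (hL : L ≤ 1) :
    K ^ 2 * (∫ y in (-L)..L, φ y ^ 2) ≤ 100 * ω + 120 * η := by
  have he := S.scale_pos.trans_le htη
  linarith [S.half_line_energy_gap_add_le htη hη hη1,
    S.integral_regInv_le_integral_sq_deriv_of_length_le_one he hL,
    S.reflect.integral_regInv_le_integral_sq_deriv_of_length_le_one he hL]

lemma halfDefect_add_le (S : CriticalRegime L K t ω φ w) {η b : ℝ} (htη : t ^ 2 ≤ η ^ 2)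
    (hη : 0 ≤ η) (hη1 : η ≤ 1) (hL : 1 ≤ L) (hb0 : 0 ≤ b) (hb1 : b ≤ 1) (hb : 2502 * ω ≤ b ^ 2) :
    halfDefect L φ + halfDefect L (fun y => φ (-y)) + K ^ 2 * (∫ y in (-L)..L, φ y ^ 2)
      ≤ 100 * ω + 120 * η + 80 * (b / η ^ 2) := by
  have he := S.scale_pos.trans_le htη
  have he1 : η ^ 2 ≤ 1 := pow_le_one₀ hη hη1
  linarith [S.half_line_energy_gap_add_le htη hη hη1, S.halfDefect_le he he1 hL hb0 hb1 hb,
    S.reflect.halfDefect_le he he1 hL hb0 hb1 hb]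

end CriticalRegime

/-! ### The ground state violates the Rayleigh equation -/

section Bump

lemma hasDerivAt_max_zero_sq (x : ℝ) : HasDerivAt (fun x : ℝ => max 0 x ^ 2) (2 * max 0 x) x := by
  have away_from_zero (y : ℝ) (hy : y ≠ 0) :
      HasDerivAt (fun x : ℝ => max 0 x ^ 2) (2 * max 0 y) y := by
    rcases lt_or_gt_of_ne hy with neg | pos
    · rw [max_eq_left neg.le, mul_zero]
      refine (hasDerivAt_const y (0 : ℝ)).congr_of_eventuallyEq ?_
      filter_upwards [Iio_mem_nhds neg] with z hz
      rw [max_eq_left (le_of_lt hz), zero_pow two_ne_zero]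
    · rw [max_eq_right pos.le]
      refine ((hasDerivAt_pow 2 y).congr_of_eventuallyEq ?_).congr_deriv (by norm_num)
      filter_upwards [Ioi_mem_nhds pos] with z hz
      rw [max_eq_right (le_of_lt hz)]
  rcases eq_or_ne x 0 with rfl | hx
  · exact hasDerivAt_of_hasDerivAt_of_ne (g := fun x : ℝ => 2 * max 0 x) away_from_zero
      (by fun_prop) (by fun_prop)
  · exact away_from_zero x hx

/-- A test function on `[-2, 2]`. The double zeros at `±2` make its extension by zero `C¹`, and
the double zero at `0` lets one factor out `y`, as the derivative of `logRatio` does. -/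
def bump (y : ℝ) : ℝ := y ^ 2 * (4 - y ^ 2) ^ 2

/-- The extension of `bump` by zero outside `[-2, 2]`. -/
def bumpExt (y : ℝ) : ℝ := y ^ 2 * max 0 (4 - y ^ 2) ^ 2

lemma sq_le_four {y : ℝ} (hy : y ∈ Set.Icc (-2 : ℝ) 2) : y ^ 2 ≤ 4 := by
  nlinarith [hy.1, hy.2]

lemma continuous_bump : Continuous bump := by unfold bump; fun_prop

lemma bump_nonneg (y : ℝ) : 0 ≤ bump y := by unfold bump; positivity

lemma bump_le_sixteen_mul {y : ℝ} (hy : y ^ 2 ≤ 4) : bump y ≤ 16 * y ^ 2 := by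
  have : (4 - y ^ 2) ^ 2 ≤ 4 ^ 2 := pow_le_pow_left₀ (by linarith) (by linarith [sq_nonneg y]) 2
  unfold bump
  nlinarith [sq_nonneg y]

lemma abs_bump_le {y : ℝ} (hy : y ∈ Set.Icc (-2 : ℝ) 2) : |bump y| ≤ 64 := by
  rw [abs_of_nonneg (bump_nonneg y)]
  linarith [bump_le_sixteen_mul (sq_le_four hy), sq_le_four hy]

lemma bumpExt_eq {y : ℝ} (hy : y ∈ Set.Icc (-2 : ℝ) 2) : bumpExt y = bump y := by
  rw [bumpExt, bump, max_eq_right (by linarith [sq_le_four hy])]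

lemma bumpExt_eq_zero {y : ℝ} (hy : 4 ≤ y ^ 2) : bumpExt y = 0 := by
  simp [bumpExt, max_eq_left (by linarith : 4 - y ^ 2 ≤ 0)]

lemma hasDerivAt_bumpExt (y : ℝ) : HasDerivAt bumpExt
    (y * (max 0 (4 - y ^ 2) * (2 * max 0 (4 - y ^ 2) - 4 * y ^ 2))) y := by
  have inner := (hasDerivAt_max_zero_sq (4 - y ^ 2)).comp y ((hasDerivAt_pow 2 y).const_sub 4)
  refine ((hasDerivAt_pow 2 y).mul inner).congr_deriv ?_
  simp only [Function.comp_apply]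
  push_cast
  ring

lemma contDiff_bumpExt : ContDiff ℝ 1 bumpExt :=
  contDiff_one_of_hasDerivAt hasDerivAt_bumpExt (by fun_prop)

lemma deriv_bumpExt_eq_zero {y : ℝ} (hy : 4 ≤ y ^ 2) : deriv bumpExt y = 0 := by
  simp [(hasDerivAt_bumpExt y).deriv, max_eq_left (by linarith : 4 - y ^ 2 ≤ 0)]

lemma abs_deriv_bumpExt_le {y : ℝ} (hy : y ∈ Set.Icc (-2 : ℝ) 2) : |deriv bumpExt y| ≤ 128 := by
  have hy2 := sq_le_four hy
  have hy0 := sq_nonneg y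
  rw [(hasDerivAt_bumpExt y).deriv, max_eq_right (by linarith), abs_mul, abs_mul]
  have outer : |y| ≤ 2 := abs_le.2 hy
  have product : |4 - y ^ 2| * |2 * (4 - y ^ 2) - 4 * y ^ 2| ≤ 4 * 16 := by
    gcongr <;> exact abs_le.2 ⟨by linarith, by linarith⟩
  calc _ ≤ (2 : ℝ) * (4 * 16) := by gcongr
    _ = 128 := by norm_num

lemma integral_eq_of_support {L : ℝ} (hL : 2 ≤ L) {f : ℝ → ℝ} (hf : Continuous f)
    (h : ∀ y, 4 ≤ y ^ 2 → f y = 0) : ∫ y in (-L)..L, f y = ∫ y in (-2 : ℝ)..2, f y := by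
  have left : ∫ y in (-L)..(-2), f y = 0 := by
    rw [integral_congr_Icc (by linarith) fun y hy => h y (by nlinarith [hy.2]),
      intervalIntegral.integral_zero]
  have right : ∫ y in (2 : ℝ)..L, f y = 0 := by
    rw [integral_congr_Icc hL fun y hy => h y (by nlinarith [hy.1]),
      intervalIntegral.integral_zero]
  linarith [integral_add_adjacent_of_continuous (a := -L) (b := L) (-2) hf,
    integral_add_adjacent_of_continuous (a := -2) (b := L) 2 hf]

lemma h1Sq_bumpExt_le {L K : ℝ} (hL : 2 ≤ L) (hK0 : 0 ≤ K) (hK : K ≤ 1 / 2) :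
    h1Sq L K bumpExt ≤ 300 ^ 2 := by
  have cf := contDiff_bumpExt
  have slope : ∫ y in (-2 : ℝ)..2, deriv bumpExt y ^ 2 ≤ ∫ _ in (-2 : ℝ)..2, 128 ^ 2 :=
    integral_mono_of_continuous (by norm_num) (by fun_prop) continuous_const fun y hy => by
      rw [← sq_abs]; gcongr; exact abs_deriv_bumpExt_le hy
  have mass : ∫ y in (-2 : ℝ)..2, bumpExt y ^ 2 ≤ ∫ _ in (-2 : ℝ)..2, 64 ^ 2 :=
    integral_mono_of_continuous (by norm_num) (by fun_prop) continuous_const fun y hy => by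
      rw [← sq_abs, bumpExt_eq hy]; gcongr; exact abs_bump_le hy
  rw [h1Sq_eq_real,
    integral_eq_of_support hL (by fun_prop) fun y hy => by simp [deriv_bumpExt_eq_zero hy],
    integral_eq_of_support hL (by fun_prop) fun y hy => by simp [bumpExt_eq_zero hy]]
  have : K ^ 2 * ∫ y in (-2 : ℝ)..2, bumpExt y ^ 2 ≤ (1 / 2) ^ 2 * ∫ _ in (-2 : ℝ)..2, 64 ^ 2 := by
    gcongr
    exact integral_sq_nonneg (by norm_num) _
  norm_num at this slope
  linarith

lemma integral_sq_deriv_regInv_mul_bumpExt_le {t : ℝ} (ht : 0 < t) (ht1 : t ^ 2 ≤ 1) :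
    ∫ y in (-2 : ℝ)..2, (deriv (regInv (t ^ 2)) y * bumpExt y) ^ 2 ≤ (415 / t ^ 3) ^ 2 := by
  have hs : 0 < t ^ 2 := by positivity
  have cP := (contDiff_layer hs).continuous
  have cH := contDiff_regInv hs
  have cf := contDiff_bumpExt
  calc _ ≤ ∫ y in (-2 : ℝ)..2, 64 ^ 2 * 6 / (t ^ 2) ^ 4 * layer (t ^ 2) y := by
        refine integral_mono_of_continuous (by norm_num) (by fun_prop) (by fun_prop)
          fun y hy => ?_
        have slope := deriv_regInv_sq_le hs ht1 y
        have mass : bumpExt y ^ 2 ≤ 64 ^ 2 := by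
          rw [← sq_abs, bumpExt_eq hy]; gcongr; exact abs_bump_le hy
        have := layer_nonneg (t ^ 2) y
        rw [mul_pow]
        calc _ ≤ 6 * layer (t ^ 2) y / (t ^ 2) ^ 4 * 64 ^ 2 := by gcongr
          _ = 64 ^ 2 * 6 / (t ^ 2) ^ 4 * layer (t ^ 2) y := by ring
    _ = 64 ^ 2 * 6 / (t ^ 2) ^ 4 * ∫ y in (-2 : ℝ)..2, layer (t ^ 2) y :=
        intervalIntegral.integral_const_mul _ _
    _ ≤ 64 ^ 2 * 6 / (t ^ 2) ^ 4 * (7 * t ^ 2) := by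
        gcongr; exact integral_layer_le hs (by norm_num)
    _ = 172032 / (t ^ 3) ^ 2 := by field_simp; norm_num
    _ ≤ (415 / t ^ 3) ^ 2 := by rw [div_pow]; gcongr; norm_num

/-- The Rayleigh operator `g'' - K² g + 2 g / (1 - y²)`, regularized at scale `e` and applied
to `g = bump`. -/
def rayleighBump (K e y : ℝ) : ℝ :=
  (32 - 96 * y ^ 2 + 30 * y ^ 4) - K ^ 2 * bump y + 2 * regInv e y * bump y

variable {K e : ℝ}

lemma continuous_rayleighBump (K : ℝ) (he : 0 < e) : Continuous (rayleighBump K e) := by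
  have cH := (contDiff_regInv he).continuous
  have cb := continuous_bump
  unfold rayleighBump
  fun_prop

lemma abs_rayleighBump_le (hK : K ^ 2 ≤ 1 / 4) (he : 0 < e) (he1 : e ≤ 1 / 1000) {y : ℝ}
    (hy : y ∈ Set.Icc (-2 : ℝ) 2) : |rayleighBump K e y| ≤ 1000 / e := by
  have hy2 := sq_le_four hy
  have hb := abs_bump_le hy
  have large : 1000 ≤ 1 / e := by rw [le_div_iff₀ he]; linarith
  have polynomial : |32 - 96 * y ^ 2 + 30 * y ^ 4| ≤ 600 :=
    abs_le.2 ⟨by nlinarith [sq_nonneg (y ^ 2 - 8 / 5)], by nlinarith [sq_nonneg y]⟩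
  have potential : |K ^ 2 * bump y| ≤ 1 / 4 * 64 := by
    rw [abs_mul, abs_of_nonneg (sq_nonneg K)]; gcongr
  have singular : |2 * regInv e y * bump y| ≤ 2 * (1 / (2 * e)) * 64 := by
    rw [abs_mul, abs_mul, abs_of_pos (zero_lt_two' ℝ)]
    gcongr
    exact abs_regInv_le he y
  calc |rayleighBump K e y| ≤ 600 + 1 / 4 * 64 + 2 * (1 / (2 * e)) * 64 :=
        (abs_add_le _ _).trans (add_le_add ((abs_sub _ _).trans (add_le_add polynomial potential))
          singular)
    _ = 616 + 64 * (1 / e) := by rw [← one_div_mul_one_div]; ring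
    _ ≤ 1000 * (1 / e) := by linarith
    _ = 1000 / e := by ring

lemma integral_deriv_deriv_mul_bump_sub {u u' u'' : ℝ → ℝ} (hu : ∀ y, HasDerivAt u (u' y) y)
    (hu' : ∀ y, HasDerivAt u' (u'' y) y) (hu'' : Continuous u'') (a b : ℝ) :
    ∫ y in a..b, (u'' y * bump y - u y * (32 - 96 * y ^ 2 + 30 * y ^ 4))
      = (u' b * bump b - u b * (32 * b - 32 * b ^ 3 + 6 * b ^ 5))
        - (u' a * bump a - u a * (32 * a - 32 * a ^ 3 + 6 * a ^ 5)) := by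
  have cu : Continuous u := continuous_iff_continuousAt.2 fun y => (hu y).continuousAt
  have cb := continuous_bump
  have bump_deriv (y : ℝ) : HasDerivAt bump (32 * y - 32 * y ^ 3 + 6 * y ^ 5) y := by
    refine ((hasDerivAt_pow 2 y).mul (((hasDerivAt_pow 2 y).const_sub 4).pow 2)).congr_deriv ?_
    simp only [Pi.pow_apply]
    push_cast
    ring
  have slope_deriv (y : ℝ) : HasDerivAt (fun y : ℝ => 32 * y - 32 * y ^ 3 + 6 * y ^ 5)
      (32 - 96 * y ^ 2 + 30 * y ^ 4) y := by
    refine ((((hasDerivAt_id y).const_mul 32).sub ((hasDerivAt_pow 3 y).const_mul 32)).add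
      ((hasDerivAt_pow 5 y).const_mul 6)).congr_deriv ?_
    push_cast
    ring
  exact integral_eq_sub_of_continuous_deriv (fun y =>
    (((hu' y).mul (bump_deriv y)).sub ((hu y).mul (slope_deriv y))).congr_deriv (by ring))
    (by fun_prop)

lemma integral_one_sub_sq_mul_deriv_deriv_bump_add :
    ∫ y in (-1 : ℝ)..1, ((1 - y ^ 2) * (32 - 96 * y ^ 2 + 30 * y ^ 4) + 2 * bump y) = 36 := by
  have green := integral_deriv_deriv_mul_bump_sub (u := fun y => 1 - y ^ 2)
    (u' := fun y => -(2 * y)) (u'' := fun _ => -(2 * 1))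
    (fun y => ((hasDerivAt_pow 2 y).const_sub 1).congr_deriv (by norm_num))
    (fun y => ((hasDerivAt_id y).const_mul 2).neg) continuous_const (-1) 1
  rw [← neg_inj, ← intervalIntegral.integral_neg]
  convert green using 1
  · congr 1; ext y; ring
  · norm_num [bump]

lemma integral_one_sub_sq_mul_rayleighBump_ge (hK : K ^ 2 ≤ 1 / 4) (he : 0 < e)
    (he1 : e ≤ 1 / 1000) : 27 ≤ ∫ y in (-1 : ℝ)..1, (1 - y ^ 2) * rayleighBump K e y := by
  have cP := (contDiff_layer he).continuous
  have cb := continuous_bump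
  have cq := continuous_rayleighBump K he
  calc (27 : ℝ) ≤ 36 - (8 + 32 * ∫ y in (-1 : ℝ)..1, layer e y) := by
        linarith [integral_layer_le he (a := -1) (b := 1) (by norm_num)]
    _ = ∫ y in (-1 : ℝ)..1, (((1 - y ^ 2) * (32 - 96 * y ^ 2 + 30 * y ^ 4) + 2 * bump y)
          - (4 + 32 * layer e y)) := by
        rw [integral_sub_of_continuous (by fun_prop) (by fun_prop),
          integral_one_sub_sq_mul_deriv_deriv_bump_add,
          integral_add_of_continuous (by fun_prop) (by fun_prop),
          intervalIntegral.integral_const, intervalIntegral.integral_const_mul]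
        norm_num
    _ ≤ ∫ y in (-1 : ℝ)..1, (1 - y ^ 2) * rayleighBump K e y := by
        refine integral_mono_of_continuous (by norm_num) (by fun_prop) (by fun_prop)
          fun y hy => ?_
        have hy2 : y ^ 2 ≤ 1 := (sq_le_one_iff_abs_le_one y).2 (abs_le.2 hy)
        have hb0 := bump_nonneg y
        have hb : bump y ≤ 16 := by linarith [bump_le_sixteen_mul (by linarith : y ^ 2 ≤ 4)]
        have expand : (1 - y ^ 2) * rayleighBump K e y
            = (1 - y ^ 2) * (32 - 96 * y ^ 2 + 30 * y ^ 4) + 2 * bump y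
              - (K ^ 2 * ((1 - y ^ 2) * bump y) + 2 * (layer e y * bump y)) := by
          unfold rayleighBump
          linear_combination 2 * bump y * one_sub_sq_mul_regInv he y
        have damping : K ^ 2 * ((1 - y ^ 2) * bump y) ≤ 1 / 4 * 16 :=
          mul_le_mul hK (by nlinarith [sq_nonneg y]) (mul_nonneg (by linarith) hb0) (by norm_num)
        have layer_part : layer e y * bump y ≤ layer e y * 16 :=
          mul_le_mul_of_nonneg_left hb (layer_nonneg e y)
        linarith

lemma integral_max_zero_one_sub_sq_mul {q : ℝ → ℝ} (hq : Continuous q) :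
    ∫ y in (-2 : ℝ)..2, max 0 (1 - y ^ 2) * q y = ∫ y in (-1 : ℝ)..1, (1 - y ^ 2) * q y := by
  have cont : Continuous fun y => max 0 (1 - y ^ 2) * q y := by fun_prop
  have vanish {a b : ℝ} (hab : a ≤ b) (h : ∀ y ∈ Set.Icc a b, 1 ≤ y ^ 2) :
      ∫ y in a..b, max 0 (1 - y ^ 2) * q y = 0 := by
    rw [integral_congr_Icc (g := fun _ => 0) hab fun y hy => by
      rw [max_eq_left (by linarith [h y hy]), zero_mul], intervalIntegral.integral_zero]
  have left := vanish (by norm_num : (-2 : ℝ) ≤ -1) fun y hy => by nlinarith [hy.2]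
  have right := vanish (by norm_num : (1 : ℝ) ≤ 2) fun y hy => by nlinarith [hy.1]
  have middle := integral_congr_Icc (f := fun y => max 0 (1 - y ^ 2) * q y)
    (g := fun y => (1 - y ^ 2) * q y) (by norm_num : (-1 : ℝ) ≤ 1) fun y hy => by
      rw [max_eq_right (by nlinarith [hy.1, hy.2])]
  linarith [integral_add_adjacent_of_continuous (a := -2) (b := 2) (-1) cont,
    integral_add_adjacent_of_continuous (a := -1) (b := 2) 1 cont]

lemma abs_mul_le_abs_integral_mul_rayleighBump {φ : ℝ → ℝ} {c ς : ℝ} (hφ : Continuous φ)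
    (hK : K ^ 2 ≤ 1 / 4) (he : 0 < e) (he1 : e ≤ 1 / 1000)
    (hς : ∀ y ∈ Set.Icc (-2 : ℝ) 2, |φ y - c * max 0 (1 - y ^ 2)| ≤ ς) :
    27 * |c| ≤ |∫ y in (-2 : ℝ)..2, φ y * rayleighBump K e y| + 4000 * ς / e := by
  have cq := continuous_rayleighBump K he
  have hς0 : 0 ≤ ς := (abs_nonneg _).trans (hς 0 (by norm_num))
  have remainder : |∫ y in (-2 : ℝ)..2, (φ y - c * max 0 (1 - y ^ 2)) * rayleighBump K e y|
      ≤ 4000 * ς / e :=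
    calc _ ≤ ∫ _ in (-2 : ℝ)..2, ς * (1000 / e) :=
          abs_integral_le_of_abs_le (by norm_num) continuous_const fun y hy => by
            rw [abs_mul]
            exact mul_le_mul (hς y hy) (abs_rayleighBump_le hK he he1 hy) (abs_nonneg _) hς0
      _ = 4000 * ς / e := by rw [intervalIntegral.integral_const, smul_eq_mul]; ring
  set I := ∫ y in (-1 : ℝ)..1, (1 - y ^ 2) * rayleighBump K e y with hI
  have split : ∫ y in (-2 : ℝ)..2, (φ y - c * max 0 (1 - y ^ 2)) * rayleighBump K e y
      = (∫ y in (-2 : ℝ)..2, φ y * rayleighBump K e y) - c * I := by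
    rw [hI, ← integral_max_zero_one_sub_sq_mul cq, ← intervalIntegral.integral_const_mul,
      ← integral_sub_of_continuous (by fun_prop) (by fun_prop)]
    congr 1; ext y; ring
  have lower : 27 ≤ I := integral_one_sub_sq_mul_rayleighBump_ge hK he he1
  set J := ∫ y in (-2 : ℝ)..2, φ y * rayleighBump K e y
  rw [split, abs_sub_comm] at remainder
  calc 27 * |c| ≤ |c * I| := by
        rw [abs_mul, abs_of_pos (by linarith : 0 < I), mul_comm]; gcongr
    _ ≤ |J| + 4000 * ς / e := by linarith [abs_sub_abs_le_abs_sub (c * I) J]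

end Bump

namespace CriticalRegime

variable {L K t ω : ℝ} {φ w : ℝ → ℝ} (S : CriticalRegime L K t ω φ w)

include S

lemma two_le_length (hK : K ≤ 1 / 2) : 2 ≤ L := by
  nlinarith [S.one_le_mul, S.length_pos]

lemma abs_integral_residual_mul_regInv_mul_bump_le (hK : K ≤ 1 / 2) :
    |∫ y in (-2 : ℝ)..2, ((1 - y ^ 2) * w y + 2 * φ y) * (regInv (t ^ 2) y * bump y)| ≤ ω := by
  have hL := S.two_le_length hK
  have hL4 : 4 ≤ L ^ 2 := by nlinarith
  have hs := S.scale_pos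
  have ht := S.width_pos
  have cH := contDiff_regInv hs
  have cf := contDiff_bumpExt
  have c0 := S.continuous_stream
  have c3 := S.continuous_vorticity
  have mass : ∫ y in (-L)..L, (deriv (regInv (t ^ 2)) y * bumpExt y) ^ 2 ≤ (415 / t ^ 3) ^ 2 := by
    rw [integral_eq_of_support hL (by fun_prop) fun y hy => by simp [bumpExt_eq_zero hy]]
    exact integral_sq_deriv_regInv_mul_bumpExt_le ht S.scale_le_one
  have tested := S.abs_integral_residual_mul_le (Q := 1 / (2 * t ^ 2)) cH cf (bumpExt_eq_zero hL4)
    (bumpExt_eq_zero (by rwa [neg_sq])) (by positivity) (by positivity) (by norm_num) mass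
    (fun y _ => abs_regInv_le hs y) (h1Sq_bumpExt_le hL S.wavenumber_pos.le hK)
  rw [integral_eq_of_support hL (by fun_prop) fun y hy => by simp [bumpExt_eq_zero hy],
    integral_congr_Icc (by norm_num) fun y hy => by rw [bumpExt_eq hy]] at tested
  have hω := S.small_pos
  calc _ ≤ _ := tested
    _ = ω ^ 2 * (415 + 150 * t) := by field_simp; ring
    _ ≤ ω ^ 2 * (415 + 150 * 1) := by gcongr; exact S.width_le_one
    _ ≤ ω := by nlinarith [S.small_le]

lemma integral_sq_deriv_bump_div_mul_stream_le (hL : 2 ≤ L) :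
    ∫ y in (-2 : ℝ)..2, deriv (fun y => y * (4 - y ^ 2) ^ 2 * φ y) y ^ 2 ≤ 128 ^ 2 := by
  have c0 := S.contDiff_one_stream
  have c1 := S.continuous_deriv_stream
  have product_rule : deriv (fun y => y * (4 - y ^ 2) ^ 2 * φ y)
      = fun y => (4 - y ^ 2) * (4 - 5 * y ^ 2) * φ y + y * (4 - y ^ 2) ^ 2 * deriv φ y := by
    funext y
    refine ((((hasDerivAt_id y).mul (((hasDerivAt_pow 2 y).const_sub 4).pow 2)).mul
      (hasDerivAt_of_contDiff c0 y)).congr_deriv ?_).deriv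
    simp only [Pi.pow_apply, Pi.mul_apply, id]
    push_cast
    ring
  have slope_bound : ∀ y ∈ Set.Icc (-2 : ℝ) 2, |(4 - y ^ 2) * (4 - 5 * y ^ 2)| ≤ 4 * 16 := by
    intro y hy
    have hy2 := sq_le_four hy
    rw [abs_mul]
    gcongr <;> exact abs_le.2 ⟨by linarith, by linarith [sq_nonneg y]⟩
  have size_bound : ∀ y ∈ Set.Icc (-2 : ℝ) 2, |y * (4 - y ^ 2) ^ 2| ≤ 2 * 4 ^ 2 := by
    intro y hy
    rw [abs_mul, abs_pow]
    gcongr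
    · exact abs_le.2 hy
    · exact abs_le.2 ⟨by linarith [sq_le_four hy], by linarith [sq_nonneg y]⟩
  have mass := (integral_le_of_subinterval (by linarith : -L ≤ -2) (by norm_num) hL
    (by fun_prop : Continuous fun y => φ y ^ 2) fun y => sq_nonneg _).trans S.integral_sq_stream_le
  have energy := S.integral_sq_deriv_stream_le_of_subset (by linarith : -L ≤ -2) (by norm_num) hL
  rw [product_rule]
  refine (integral_sq_add_le (A := 96) (B := 32) (by norm_num) (by fun_prop) (by fun_prop)
    (by norm_num) (by norm_num) ?_ ?_).trans (by norm_num)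
  · exact (integral_sq_mul_le (by norm_num) (by fun_prop) (by fun_prop) slope_bound).trans
      (by linarith)
  · exact (integral_sq_mul_le (by norm_num) (by fun_prop) (by fun_prop) size_bound).trans
      (by linarith)

lemma abs_integral_regInv_sub_mul_bump_mul_stream_le (hL : 2 ≤ L) {η : ℝ} (htη : t ^ 2 ≤ η ^ 2)
    (hη : 0 ≤ η) (hη1 : η ≤ 1) :
    |∫ y in (-2 : ℝ)..2, (regInv (t ^ 2) y - regInv (η ^ 2) y) * (bump y * φ y)| ≤ 1024 * η := by
  have hs := S.scale_pos
  have he := hs.trans_le htη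
  have c0 := S.contDiff_one_stream
  have cΛ := continuous_logRatio hs he
  have cg : ContDiff ℝ 1 fun y => y * (4 - y ^ 2) ^ 2 * φ y := by fun_prop
  have by_parts := integral_four_mul_regInv_sub_mul (a := -2) (b := 2) hs he cg (by norm_num)
    (by norm_num)
  have log_mass : ∫ y in (-2 : ℝ)..2, logRatio (t ^ 2) (η ^ 2) y ^ 2 ≤ (32 * η) ^ 2 := by
    have weighted := integral_weighted_logRatio_sq_le hs htη (pow_le_one₀ hη hη1) zero_le_two
    refine (integral_mono_of_continuous (by norm_num) (by fun_prop) (by fun_prop) fun y _ =>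
      ?_).trans (weighted.trans_eq (by ring))
    linarith [mul_nonneg (sq_nonneg y) (sq_nonneg (logRatio (t ^ 2) (η ^ 2) y))]
  have cs := abs_integral_mul_le (by norm_num) cΛ cg.continuous_deriv_one (by positivity)
    (by norm_num) log_mass (S.integral_sq_deriv_bump_div_mul_stream_le hL)
  have factor : ∫ y in (-2 : ℝ)..2,
        4 * y * (regInv (t ^ 2) y - regInv (η ^ 2) y) * (y * (4 - y ^ 2) ^ 2 * φ y)
      = 4 * ∫ y in (-2 : ℝ)..2, (regInv (t ^ 2) y - regInv (η ^ 2) y) * (bump y * φ y) := by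
    rw [← intervalIntegral.integral_const_mul]
    congr 1; ext y; unfold bump; ring
  rw [← abs_neg, ← by_parts, factor, abs_mul, abs_of_pos (zero_lt_four' ℝ)] at cs
  linarith

lemma integral_residual_mul_regInv_mul_bump (hL : 2 ≤ L) {e : ℝ} (he : 0 < e) :
    ∫ y in (-2 : ℝ)..2, ((1 - y ^ 2) * w y + 2 * φ y) * (regInv (t ^ 2) y * bump y)
      = (∫ y in (-2 : ℝ)..2, φ y * rayleighBump K e y)
        + 2 * (∫ y in (-2 : ℝ)..2, (regInv (t ^ 2) y - regInv e y) * (bump y * φ y))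
        - ∫ y in (-2 : ℝ)..2, layer (t ^ 2) y * w y * bump y := by
  have hs := S.scale_pos
  have c0 := S.continuous_stream
  have c3 := S.continuous_vorticity
  have c2 : Continuous (deriv (deriv φ)) := S.contDiff_deriv_stream.continuous_deriv_one
  have cb := continuous_bump
  have cP := (contDiff_layer hs).continuous
  have cH := (contDiff_regInv hs).continuous
  have cHe := (contDiff_regInv he).continuous
  have cq := continuous_rayleighBump K he
  have green := integral_deriv_deriv_mul_bump_sub (hasDerivAt_of_contDiff S.contDiff_one_stream)
    (hasDerivAt_of_contDiff S.contDiff_deriv_stream) c2 (-2) 2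
  have boundary : (deriv φ 2 * bump 2 - φ 2 * (32 * 2 - 32 * 2 ^ 3 + 6 * 2 ^ 5))
      - (deriv φ (-2) * bump (-2) - φ (-2) * (32 * (-2) - 32 * (-2) ^ 3 + 6 * (-2) ^ 5)) = 0 := by
    norm_num [bump]
  have expand : ∫ y in (-2 : ℝ)..2, ((1 - y ^ 2) * w y + 2 * φ y) * (regInv (t ^ 2) y * bump y)
      = ∫ y in (-2 : ℝ)..2,
          ((deriv (deriv φ) y * bump y - φ y * (32 - 96 * y ^ 2 + 30 * y ^ 4))
            + φ y * rayleighBump K e y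
            + 2 * ((regInv (t ^ 2) y - regInv e y) * (bump y * φ y))
            - layer (t ^ 2) y * w y * bump y) := by
    refine integral_congr_Icc (by norm_num) fun y hy => ?_
    rw [S.deriv_deriv_eq y ⟨by linarith [hy.1], by linarith [hy.2]⟩, smul_eq_mul, rayleighBump]
    linear_combination w y * bump y * one_sub_sq_mul_regInv hs y
  rw [expand, integral_sub_of_continuous (by fun_prop) (by fun_prop),
    integral_add_of_continuous (by fun_prop) (by fun_prop),
    integral_add_of_continuous (by fun_prop) (by fun_prop), intervalIntegral.integral_const_mul,
    green, boundary, zero_add]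

lemma abs_ground_state_coefficient_le (hK : K ≤ 1 / 2) {η ς c : ℝ} (htη : t ^ 2 ≤ η ^ 2)
    (hη : 0 ≤ η) (hη1 : η ^ 2 ≤ 1 / 1000)
    (hς : ∀ y ∈ Set.Icc (-2 : ℝ) 2, |φ y - c * max 0 (1 - y ^ 2)| ≤ ς) :
    27 * |c| ≤ 3000 * ω + 2048 * η + 4000 * ς / η ^ 2 := by
  have hL := S.two_le_length hK
  have he := S.scale_pos.trans_le htη
  have residual := S.abs_integral_residual_mul_regInv_mul_bump_le hK
  rw [S.integral_residual_mul_regInv_mul_bump hL he] at residual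
  have rescaling := S.abs_integral_regInv_sub_mul_bump_mul_stream_le hL htη hη (by nlinarith)
  have layer_part := S.abs_integral_layer_mul_vorticity_mul_le (a := -2) (b := 2) (by linarith)
    (by norm_num) hL (by norm_num) fun y hy => abs_bump_le hy
  have lower := abs_mul_le_abs_integral_mul_rayleighBump S.continuous_stream
    (by nlinarith [S.wavenumber_pos] : K ^ 2 ≤ 1 / 4) he hη1 hς
  have upper : |∫ y in (-2 : ℝ)..2, φ y * rayleighBump K (η ^ 2) y| ≤ 3000 * ω + 2048 * η := by
    have := S.small_pos
    rw [abs_le] at residual rescaling layer_part ⊢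
    constructor <;> linarith
  linarith

end CriticalRegime

/-! ### The contradiction -/

/-- A value of the small parameter `ω` up to which a `CriticalRegime` is contradictory; far from
optimal. -/
def smallness : ℝ := (1 / 10 ^ 245) ^ 2

namespace CriticalRegime

variable {L K t ω : ℝ} {φ w : ℝ → ℝ}

section

variable (S : CriticalRegime L K t ω φ w)
include S

lemma sq_stream_sub_le_of_le_one {τ y : ℝ} (hτ0 : 0 ≤ τ) (hτ1 : τ ≤ 1)
    (hτ : ∫ y in (0 : ℝ)..1, (deriv φ y + 2 * φ 0 * y) ^ 2 ≤ 3 / 2 * τ ^ 2) (hy0 : 0 ≤ y)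
    (hy1 : y ≤ 1) : (φ y - φ 0 * (1 - y ^ 2)) ^ 2 ≤ 3 * τ := by
  have c1 := S.continuous_deriv_stream
  set g : ℝ → ℝ := fun y => φ y - φ 0 * (1 - y ^ 2) with hg
  have slope : deriv g = fun y => deriv φ y + 2 * φ 0 * y := by
    funext y
    refine (((hasDerivAt_of_contDiff S.contDiff_one_stream y).sub
      (((hasDerivAt_pow 2 y).const_sub 1).const_mul (φ 0))).congr_deriv ?_).deriv
    norm_num; ring
  have gap := sq_sub_le_mul_integral_sq_deriv (f := g) hy0
    (S.contDiff_one_stream.sub (by fun_prop))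
  have restrict : ∫ x in (0 : ℝ)..y, deriv g x ^ 2 ≤ 3 / 2 * τ ^ 2 := by
    rw [slope]
    exact (integral_le_of_subinterval le_rfl hy0 hy1 (by fun_prop) fun _ => sq_nonneg _).trans hτ
  have start : g 0 = 0 := by simp [hg]
  rw [start, sub_zero, sub_zero] at gap
  nlinarith

lemma sq_stream_le_of_one_le {τ y : ℝ} (hτ0 : 0 ≤ τ)
    (hτ : ∫ y in (1 : ℝ)..L, deriv φ y ^ 2 ≤ τ ^ 2) (hy1 : 1 ≤ y) (hyL : y ≤ L) :
    φ y ^ 2 ≤ 3 * τ := by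
  have c0 := S.continuous_stream
  have c1 := S.continuous_deriv_stream
  have ftc : ∫ x in y..L, 2 * (φ x * deriv φ x) = -φ y ^ 2 := by
    rw [integral_eq_sub_of_continuous_deriv (F := fun x => φ x ^ 2) (fun x => ?_) (by fun_prop)]
    · simp [S.stream_right]
    · refine ((hasDerivAt_of_contDiff S.contDiff_one_stream x).pow 2).congr_deriv ?_
      norm_num; ring
  rw [intervalIntegral.integral_const_mul] at ftc
  have cauchy_schwarz := abs_integral_mul_le hyL c0 c1 (A := 3 / 2) (by norm_num) hτ0
    (((integral_le_of_subinterval (by linarith [S.length_pos] : -L ≤ y) hyL le_rfl (by fun_prop)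
      fun _ => sq_nonneg _).trans S.integral_sq_stream_le).trans (by norm_num))
    ((integral_le_of_subinterval hy1 hyL le_rfl (by fun_prop) fun _ => sq_nonneg _).trans hτ)
  linarith [(abs_le.1 cauchy_schwarz).1]

lemma sq_stream_sub_le_of_halfDefect_le {τ y : ℝ} (hτ0 : 0 ≤ τ) (hτ1 : τ ≤ 1) (hL : 1 ≤ L)
    (hτ : halfDefect L φ ≤ τ ^ 2) (hy : y ∈ Set.Icc 0 L) :
    (φ y - φ 0 * max 0 (1 - y ^ 2)) ^ 2 ≤ 3 * τ := by
  have inner_nonneg := integral_sq_nonneg zero_le_one fun y => deriv φ y + 2 * φ 0 * y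
  have outer_nonneg := integral_sq_nonneg hL (deriv φ)
  unfold halfDefect at hτ
  rcases le_total y 1 with hy1 | hy1
  · rw [max_eq_right (by nlinarith [hy.1])]
    exact S.sq_stream_sub_le_of_le_one hτ0 hτ1 (by linarith) hy.1 hy1
  · rw [max_eq_left (by nlinarith), mul_zero, sub_zero]
    exact S.sq_stream_le_of_one_le hτ0 (by linarith) hy1 hy.2

lemma abs_stream_sub_le {τ ς y : ℝ} (hτ0 : 0 ≤ τ) (hτ1 : τ ≤ 1) (hς : 0 ≤ ς)
    (hτς : 3 * τ ≤ ς ^ 2) (hL : 1 ≤ L) (hright : halfDefect L φ ≤ τ ^ 2)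
    (hleft : halfDefect L (fun y => φ (-y)) ≤ τ ^ 2) (hy : y ∈ Set.Icc (-L) L) :
    |φ y - φ 0 * max 0 (1 - y ^ 2)| ≤ ς := by
  refine abs_le_of_sq_le_sq (le_trans ?_ hτς) hς
  rcases le_total 0 y with hy0 | hy0
  · exact S.sq_stream_sub_le_of_halfDefect_le hτ0 hτ1 hL hright ⟨hy0, hy.2⟩
  · simpa using S.reflect.sq_stream_sub_le_of_halfDefect_le hτ0 hτ1 hL hleft (y := -y)
      ⟨by linarith, by linarith [hy.1]⟩

lemma two_fifths_le_integral_regInv (hω : ω ≤ smallness) :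
    2 / 5 ≤ ∫ y in (-L)..L, regInv ((1 / 10 ^ 3) ^ 2) y * φ y ^ 2 := by
  have := S.one_le_integral_regInv_add (η := 1 / 10 ^ 3)
    (S.width_sq_le.trans (hω.trans (by norm_num [smallness]))) (by norm_num) (by norm_num)
  have : ω ≤ 1 / 10 ^ 4 := hω.trans (by norm_num [smallness])
  linarith

lemma lt_wavenumber_sq_mul (hω : ω ≤ smallness) (hK : 1 / 2 ≤ K) :
    1 / 10 ^ 78 < K ^ 2 * ∫ y in (-L)..L, φ y ^ 2 := by
  have c0 := S.continuous_stream
  have hη : (0 : ℝ) < (1 / 10 ^ 3) ^ 2 := by norm_num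
  have cH := (contDiff_regInv hη).continuous
  have upper : ∫ y in (-L)..L, regInv ((1 / 10 ^ 3) ^ 2) y * φ y ^ 2
      ≤ ∫ y in (-L)..L, 10 ^ 6 * φ y ^ 2 := by
    refine integral_mono_of_continuous S.neg_le_self (by fun_prop) (by fun_prop) fun y _ => ?_
    gcongr
    exact (le_abs_self _).trans ((abs_regInv_le hη y).trans (by norm_num))
  rw [intervalIntegral.integral_const_mul] at upper
  have lower := S.two_fifths_le_integral_regInv hω
  have mass_nonneg := integral_sq_nonneg S.neg_le_self φ
  have : (1 / 2) ^ 2 * (∫ y in (-L)..L, φ y ^ 2) ≤ K ^ 2 * ∫ y in (-L)..L, φ y ^ 2 := by gcongr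
  linarith

lemma exists_lt_abs_stream (hω : ω ≤ smallness) (hL : 1 ≤ L) :
    ∃ y ∈ Set.Icc (-1 : ℝ) 1, 2 / 10 ^ 4 < |φ y| := by
  by_contra! small
  have c0 := S.continuous_stream
  have hη : (0 : ℝ) < (1 / 10 ^ 3) ^ 2 := by norm_num
  have cH := (contDiff_regInv hη).continuous
  have cF : Continuous fun y => regInv ((1 / 10 ^ 3) ^ 2) y * φ y ^ 2 := by fun_prop
  have outer {a b : ℝ} (hab : a ≤ b) (h : ∀ y ∈ Set.Icc a b, 1 ≤ y ^ 2) :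
      ∫ y in a..b, regInv ((1 / 10 ^ 3) ^ 2) y * φ y ^ 2 ≤ 0 := by
    refine (integral_mono_of_continuous hab cF continuous_const fun y hy => ?_).trans_eq
      intervalIntegral.integral_zero
    have : regInv ((1 / 10 ^ 3) ^ 2) y ≤ 0 :=
      div_nonpos_of_nonpos_of_nonneg (by linarith [h y hy]) (by positivity)
    exact mul_nonpos_of_nonpos_of_nonneg this (sq_nonneg _)
  have inner : ∫ y in (-1 : ℝ)..1, regInv ((1 / 10 ^ 3) ^ 2) y * φ y ^ 2
      ≤ ∫ _ in (-1 : ℝ)..1, (1 / 50 : ℝ) := by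
    refine integral_mono_of_continuous (by norm_num) cF continuous_const fun y hy => ?_
    have weight := (le_abs_self _).trans (abs_regInv_le hη y)
    calc _ ≤ 1 / (2 * (1 / 10 ^ 3) ^ 2) * (2 / 10 ^ 4 : ℝ) ^ 2 := by
          rw [← sq_abs (φ y)]
          gcongr
          exact small y hy
      _ ≤ 1 / 50 := by norm_num
  rw [intervalIntegral.integral_const, smul_eq_mul] at inner
  have lower := S.two_fifths_le_integral_regInv hω
  rw [← integral_add_adjacent_of_continuous (-1) cF,
    ← integral_add_adjacent_of_continuous (a := -1) 1 cF] at lower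
  have left := outer (by linarith : -L ≤ -1) fun y hy => by nlinarith [hy.2]
  have right := outer hL fun y hy => by nlinarith [hy.1]
  linarith

lemma exists_lt_abs_stream_sub (hω : ω ≤ smallness) (hK : K ≤ 1 / 2) (c : ℝ) :
    ∃ y ∈ Set.Icc (-L) L, 1 / 10 ^ 19 < |φ y - c * max 0 (1 - y ^ 2)| := by
  by_contra! close
  have hL := S.two_le_length hK
  obtain ⟨y, hy, large⟩ := S.exists_lt_abs_stream hω (by linarith)
  have coefficient := S.abs_ground_state_coefficient_le hK (η := 1 / 10 ^ 6) (c := c)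
    (S.width_sq_le.trans (hω.trans (by norm_num [smallness]))) (by norm_num) (by norm_num)
    fun y hy => close y ⟨by linarith [hy.1], by linarith [hy.2]⟩
  have : ω ≤ 1 / 10 ^ 10 := hω.trans (by norm_num [smallness])
  have coefficient_le : |c| ≤ 1 / 10 ^ 4 := by norm_num at coefficient ⊢; linarith
  have profile_le : |max 0 (1 - y ^ 2)| ≤ 1 := by
    rw [abs_of_nonneg (le_max_left _ _)]
    exact max_le zero_le_one (by linarith [sq_nonneg y])
  have : |c * max 0 (1 - y ^ 2)| ≤ 1 / 10 ^ 4 * 1 := by rw [abs_mul]; gcongr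
  have := close y ⟨by linarith [hy.1], by linarith [hy.2]⟩
  have := abs_sub_abs_le_abs_sub (φ y) (c * max 0 (1 - y ^ 2))
  linarith

end

lemma wavenumber_sq_mul_and_halfDefect_le (S : CriticalRegime L K t ω φ w) (hω : ω ≤ smallness) :
    K ^ 2 * (∫ y in (-L)..L, φ y ^ 2) ≤ 1 / 10 ^ 78 ∧ (1 ≤ L → halfDefect L φ ≤ 1 / 10 ^ 78 ∧
      halfDefect L (fun y => φ (-y)) ≤ 1 / 10 ^ 78) := by
  have width : t ^ 2 ≤ (1 / 10 ^ 81) ^ 2 := S.width_sq_le.trans (hω.trans (by norm_num [smallness]))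
  have small : 100 * ω + 120 * (1 / 10 ^ 81) + 80 * (1 / 10 ^ 243 / (1 / 10 ^ 81) ^ 2)
      ≤ 1 / 10 ^ 78 := by
    norm_num [smallness] at hω ⊢
    linarith
  have mass_nonneg := mul_nonneg (sq_nonneg K) (integral_sq_nonneg S.neg_le_self φ)
  have end_value : 2502 * ω ≤ (1 / 10 ^ 243) ^ 2 := by
    norm_num [smallness] at hω ⊢
    linarith
  have of_one_le (hL : 1 ≤ L) := (S.halfDefect_add_le width (by norm_num) (by norm_num) hL
    (b := 1 / 10 ^ 243) (by norm_num) (by norm_num) end_value).trans small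
  refine ⟨?_, fun hL => ⟨?_, ?_⟩⟩
  · rcases le_total L 1 with hL | hL
    · have := S.wavenumber_sq_mul_le_of_length_le_one width (by norm_num) (by norm_num) hL
      linarith
    · linarith [of_one_le hL, halfDefect_nonneg hL φ, halfDefect_nonneg hL fun y => φ (-y)]
  · linarith [of_one_le hL, halfDefect_nonneg hL fun y => φ (-y)]
  · linarith [of_one_le hL, halfDefect_nonneg hL φ]

theorem smallness_lt (S : CriticalRegime L K t ω φ w) : smallness < ω := by
  by_contra! hω
  obtain ⟨mass, defects⟩ := S.wavenumber_sq_mul_and_halfDefect_le hω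
  rcases le_total (1 / 2) K with hK | hK
  · exact (S.lt_wavenumber_sq_mul hω hK).not_ge mass
  · have hL : 1 ≤ L := one_le_two.trans (S.two_le_length hK)
    obtain ⟨y, hy, far⟩ := S.exists_lt_abs_stream_sub hω hK (φ 0)
    refine far.not_ge (S.abs_stream_sub_le (τ := 1 / 10 ^ 39) (by norm_num) (by norm_num)
      (by norm_num) (by norm_num) hL ((defects hL).1.trans ?_) ((defects hL).2.trans ?_) hy)
    all_goals norm_num

end CriticalRegime

/-! ### Scaling to the critical regime -/

lemma norm_integral_deriv_deriv_sub_mul_le {𝕜 : Type*} [RCLike 𝕜] {L K : ℝ} {u g : ℝ → 𝕜}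
    (hL : 0 ≤ L) (hu : ContDiff ℝ 2 u) (hg : ContDiff ℝ 1 g) (hgL : g L = 0) (hgL' : g (-L) = 0) :
    ‖∫ y in (-L)..L, (deriv (deriv u) y - K ^ 2 • u y) * g y‖
      ≤ √(h1Sq L K u) * √(h1Sq L K g) := by
  have hLL : -L ≤ L := by linarith
  have c1 : Continuous (deriv u) := (contDiff_one_deriv hu).continuous
  have c2 : Continuous (deriv g) := hg.continuous_deriv_one
  have product_le {f h : ℝ → 𝕜} (hf : Continuous f) (hh : Continuous h) :
      ‖∫ y in (-L)..L, f y * h y‖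
        ≤ √(∫ y in (-L)..L, ‖f y‖ ^ 2) * √(∫ y in (-L)..L, ‖h y‖ ^ 2) := by
    refine (intervalIntegral.norm_integral_le_integral_norm hLL).trans ?_
    simp only [norm_mul]
    exact (le_abs_self _).trans (abs_integral_mul_le hLL hf.norm hh.norm (sqrt_nonneg _)
      (sqrt_nonneg _) (sq_sqrt (integral_sq_nonneg hLL _)).ge
      (sq_sqrt (integral_sq_nonneg hLL _)).ge)
  have cauchy_schwarz (a b c d : ℝ) :
      a * b + K ^ 2 * (c * d) ≤ √(a ^ 2 + K ^ 2 * c ^ 2) * √(b ^ 2 + K ^ 2 * d ^ 2) := by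
    rw [← sqrt_mul (by positivity)]
    exact le_sqrt_of_sq_le (by linarith [sq_nonneg (K * (a * d - b * c))])
  rw [integral_deriv_deriv_sub_mul K hu hg hgL' hgL, norm_neg]
  calc _ ≤ ‖∫ y in (-L)..L, deriv u y * deriv g y‖ + K ^ 2 * ‖∫ y in (-L)..L, u y * g y‖ := by
        refine (norm_add_le _ _).trans_eq ?_
        rw [norm_smul, norm_of_nonneg (sq_nonneg K)]
    _ ≤ _ := add_le_add (product_le c1 c2)
        (mul_le_mul_of_nonneg_left (product_le hu.continuous hg.continuous) (sq_nonneg K))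
    _ ≤ _ := cauchy_schwarz _ _ _ _
    _ = √(h1Sq L K u) * √(h1Sq L K g) := by
        simp only [sq_sqrt (integral_sq_nonneg hLL _), h1Sq]

lemma h1Sq_const_mul {𝕜 : Type*} [RCLike 𝕜] (L K : ℝ) (c : 𝕜) (g : ℝ → 𝕜) :
    h1Sq L K (fun y => c * g y) = ‖c‖ ^ 2 * h1Sq L K g := by
  simp only [h1Sq, deriv_const_mul_field, norm_mul, mul_pow, intervalIntegral.integral_const_mul]
  ring

lemma h1Sq_conj {𝕜 : Type*} [RCLike 𝕜] (L K : ℝ) (g : ℝ → 𝕜) :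
    h1Sq L K (fun y => starRingEnd 𝕜 (g y)) = h1Sq L K g := by
  simp only [h1Sq, deriv_conj, RCLike.norm_conj]

lemma deriv_clm_apply_comp {E E' : Type*} [NormedAddCommGroup E] [NormedSpace ℝ E]
    [NormedAddCommGroup E'] [NormedSpace ℝ E'] (c : E →L[ℝ] E') {f : ℝ → E} (hf : ContDiff ℝ 1 f) :
    deriv (fun y => c (f y)) = fun y => c (deriv f y) :=
  funext fun y => (c.hasFDerivAt.comp_hasDerivAt y (hasDerivAt_of_contDiff hf y)).deriv

lemma h1Sq_comp_mul {a : ℝ} (ha : a ≠ 0) (L K : ℝ) (g : ℝ → ℝ) :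
    h1Sq L K (fun y => g (a * y)) = a * h1Sq (a * L) (K / a) g := by
  have dilate (f : ℝ → ℝ) :
      ∫ y in (-L)..L, f (a * y) ^ 2 = a⁻¹ * ∫ y in (-(a * L))..(a * L), f y ^ 2 := by
    rw [intervalIntegral.integral_comp_mul_left (fun y => f y ^ 2) ha, mul_neg, smul_eq_mul]
  have slope (y : ℝ) : deriv (fun y => g (a * y)) y = a * deriv g (a * y) :=
    deriv_comp_mul_left a g y
  simp only [h1Sq_eq_real, slope, mul_pow, intervalIntegral.integral_const_mul, dilate]
  field_simp

namespace IsStreamPair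

variable {L K : ℝ}

lemma map {E E' : Type*} [NormedAddCommGroup E] [NormedSpace ℝ E] [NormedAddCommGroup E']
    [NormedSpace ℝ E'] {φ w : ℝ → E} (S : IsStreamPair L K φ w) (c : E →L[ℝ] E') :
    IsStreamPair L K (fun y => c (φ y)) (fun y => c (w y)) where
  contDiff_stream := c.contDiff.comp S.contDiff_stream
  contDiff_vorticity := c.contDiff.comp S.contDiff_vorticity
  deriv_deriv_eq y hy := by
    simp only [deriv_clm_apply_comp c S.contDiff_one_stream,
      deriv_clm_apply_comp c (contDiff_one_deriv S.contDiff_stream), S.deriv_deriv_eq y hy,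
      map_add, map_smul]
  stream_right := by rw [S.stream_right, map_zero]
  stream_left := by rw [S.stream_left, map_zero]
  vorticity_right := by rw [S.vorticity_right, map_zero]
  vorticity_left := by rw [S.vorticity_left, map_zero]

lemma norm_integral_vorticity_mul_le {𝕜 : Type*} [RCLike 𝕜] {φ w g : ℝ → 𝕜}
    (S : IsStreamPair L K φ w) (hL : 0 ≤ L) (hg : ContDiff ℝ 1 g) (hgL : g L = 0)
    (hgL' : g (-L) = 0) : ‖∫ y in (-L)..L, w y * g y‖ ≤ √(h1Sq L K φ) * √(h1Sq L K g) := by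
  rw [S.integral_vorticity_mul_eq hL]
  exact norm_integral_deriv_deriv_sub_mul_le hL S.contDiff_stream hg hgL hgL'

lemma integral_sq_vorticity_le {𝕜 : Type*} [RCLike 𝕜] {φ w : ℝ → 𝕜} (S : IsStreamPair L K φ w)
    (hL : 0 ≤ L) : ∫ y in (-L)..L, ‖w y‖ ^ 2 ≤ √(h1Sq L K φ) * √(h1Sq L K w) := by
  have tested := S.norm_integral_vorticity_mul_le hL (contDiff_conj S.contDiff_vorticity)
    (by simp [S.vorticity_right]) (by simp [S.vorticity_left])
  simp only [RCLike.mul_conj, ← RCLike.ofReal_pow, RCLike.intervalIntegral_ofReal, h1Sq_conj,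
    RCLike.norm_ofReal] at tested
  exact (le_abs_self _).trans tested

variable {N : ℝ} {φ w : ℝ → ℝ}

lemma const_mul (S : IsStreamPair L K φ w) (c : ℝ) :
    IsStreamPair L K (fun y => c * φ y) (fun y => c * w y) :=
  S.map (ContinuousLinearMap.mul ℝ ℝ c)

lemma comp_mul {a : ℝ} (ha : 0 < a) (S : IsStreamPair (a * L) (K / a) φ w) :
    IsStreamPair L K (fun y => φ (a * y)) (fun y => a ^ 2 * w (a * y)) where
  contDiff_stream := S.contDiff_stream.comp (by fun_prop)
  contDiff_vorticity := contDiff_const.mul (S.contDiff_vorticity.comp (by fun_prop))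
  deriv_deriv_eq y hy := by
    have slope : deriv (fun y => φ (a * y)) = fun y => a * deriv φ (a * y) := by
      funext y; exact deriv_comp_mul_left a φ y
    rw [slope, deriv_const_mul_field, deriv_comp_mul_left, S.deriv_deriv_eq (a * y)
      ⟨by rw [← mul_neg]; gcongr; exact hy.1, by gcongr; exact hy.2⟩]
    simp only [smul_eq_mul]
    field_simp
  stream_right := S.stream_right
  stream_left := by simpa using S.stream_left
  vorticity_right := by simp [S.vorticity_right]
  vorticity_left := by simp [S.vorticity_left]

lemma two_mul_h1Sq_stream_le {V : ℝ → ℝ} {v : ℝ} (S : IsStreamPair L K φ w) (hL : 0 ≤ L)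
    (hV : Continuous V) (hv : ∀ y, V y ≤ v) (R : ResidualLE V L K N φ w) :
    2 * h1Sq L K φ ≤ N * √(h1Sq L K w) + v * ∫ y in (-L)..L, w y ^ 2 := by
  have c0 := S.contDiff_stream.continuous
  have c3 := S.contDiff_vorticity.continuous
  have pointwise : ∫ y in (-L)..L, (V y * w y + 2 * φ y) * w y
      ≤ ∫ y in (-L)..L, (v * w y ^ 2 + 2 * (w y * φ y)) :=
    integral_mono_of_continuous (by linarith) (by fun_prop) (by fun_prop) fun y _ => by
      linarith [mul_le_mul_of_nonneg_right (hv y) (sq_nonneg (w y))]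
  rw [integral_add_of_continuous (by fun_prop) (by fun_prop), intervalIntegral.integral_const_mul,
    intervalIntegral.integral_const_mul, S.integral_vorticity_mul_stream hL] at pointwise
  linarith [(abs_le.1 (R w S.contDiff_vorticity S.vorticity_right S.vorticity_left)).1]

end IsStreamPair

namespace ResidualLE

variable {L K N : ℝ} {V φ w : ℝ → ℝ}

lemma mono {N' : ℝ} (R : ResidualLE V L K N φ w) (h : N ≤ N') : ResidualLE V L K N' φ w :=
  fun g hg hgL hgL' => (R g hg hgL hgL').trans (by gcongr)

lemma const_mul (R : ResidualLE V L K N φ w) (c : ℝ) :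
    ResidualLE V L K (|c| * N) (fun y => c * φ y) (fun y => c * w y) := by
  intro g hg hgL hgL'
  calc _ = |c * ∫ y in (-L)..L, (V y * w y + 2 * φ y) * g y| := by
        rw [← intervalIntegral.integral_const_mul]
        congr 3; ext y; ring
    _ ≤ |c| * (N * √(h1Sq L K g)) := by
        rw [abs_mul]
        gcongr
        exact R g hg hgL hgL'
    _ = |c| * N * √(h1Sq L K g) := by ring

lemma comp_mul {a : ℝ} (ha : 0 < a) (R : ResidualLE V (a * L) (K / a) N φ w) :
    ResidualLE (fun y => V (a * y) / a ^ 2) L K (a⁻¹ * (√a)⁻¹ * N) (fun y => φ (a * y))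
      (fun y => a ^ 2 * w (a * y)) := by
  intro g hg hgL hgL'
  have tested := R (fun y => g (a⁻¹ * y)) (hg.comp (by fun_prop)) (by simpa [ha.ne'] using hgL)
    (by simpa [ha.ne'] using hgL')
  rw [h1Sq_comp_mul (inv_ne_zero ha.ne'), inv_mul_cancel_left₀ ha.ne', div_inv_eq_mul,
    div_mul_cancel₀ _ ha.ne', sqrt_mul (by positivity), sqrt_inv] at tested
  have dilate := intervalIntegral.integral_comp_mul_left (a := -L) (b := L)
    (fun y => (V y * w y + 2 * φ y) * g (a⁻¹ * y)) ha.ne'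
  rw [mul_neg, smul_eq_mul] at dilate
  calc _ = |a⁻¹ * ∫ y in (-(a * L))..(a * L), (V y * w y + 2 * φ y) * g (a⁻¹ * y)| := by
        rw [← dilate]
        congr 2; ext y
        rw [inv_mul_cancel_left₀ ha.ne']
        field_simp
    _ ≤ a⁻¹ * (N * ((√a)⁻¹ * √(h1Sq L K g))) := by
        rw [abs_mul, abs_of_pos (inv_pos.2 ha)]
        gcongr
    _ = _ := by ring

end ResidualLE

lemma smallness_pos : 0 < smallness := by norm_num [smallness]

lemma smallness_le : smallness ≤ 1 / 1000 := by norm_num [smallness]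

lemma smallness_pow_four_le_of_h1Sq_eq_one {L K N : ℝ} {φ w : ℝ → ℝ} (S : IsStreamPair L K φ w)
    (hL : 0 < L) (hK : 0 < K) (hKL : 1 ≤ K * L)
    (R : ResidualLE (fun y => 1 - y ^ 2) L K N φ w) (hφ : h1Sq L K φ = 1) :
    smallness ^ 4 ≤ N * √(h1Sq L K w) := by
  by_contra! small
  have ω0 := smallness_pos
  have ω1 := smallness_le
  have ω4 : smallness ^ 4 < 1 := pow_lt_one₀ ω0.le (by linarith) (by norm_num)
  set M := √(h1Sq L K w)
  have enstrophy : h1Sq L K w = M ^ 2 := (sq_sqrt (h1Sq_nonneg hL.le K w)).symm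
  have M1 : 1 < M := by
    have tested := S.two_mul_h1Sq_stream_le hL.le (v := 1) (by fun_prop)
      (fun y => by linarith [sq_nonneg y]) R
    have := S.integral_sq_vorticity_le hL.le
    simp only [hφ, sqrt_one, one_mul, norm_eq_abs, sq_abs] at this
    linarith
  have M0 : 0 < M := one_pos.trans M1
  obtain ⟨t, ht, ht3⟩ : ∃ t : ℝ, 0 < t ∧ t ^ 3 = smallness ^ 2 / M :=
    ⟨(smallness ^ 2 / M) ^ ((3 : ℕ) : ℝ)⁻¹, by positivity,
      rpow_inv_natCast_pow (by positivity) (by norm_num)⟩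
  have width : t ^ 2 ≤ smallness := by
    have : t ^ 3 ≤ smallness ^ 2 := ht3.trans_le (div_le_self (sq_nonneg _) M1.le)
    refine le_of_pow_le_pow_left₀ (n := 3) (by norm_num) ω0.le ?_
    calc (t ^ 2) ^ 3 = (t ^ 3) ^ 2 := by ring
      _ ≤ (smallness ^ 2) ^ 2 := by gcongr
      _ = smallness ^ 3 * smallness := by ring
      _ ≤ smallness ^ 3 := mul_le_of_le_one_right (by positivity) (by linarith)
  have residual : N ≤ smallness ^ 2 * t ^ 3 := by
    rw [ht3, ← mul_div_assoc, le_div_iff₀ M0]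
    linarith
  have regime : CriticalRegime L K t smallness φ w :=
    { S with
      length_pos := hL
      wavenumber_pos := hK
      one_le_mul := hKL
      width_pos := ht
      small_pos := ω0
      small_le := ω1
      width_sq_le := width
      residual_le := R.mono residual
      energy_eq := hφ
      enstrophy_le := by rw [enstrophy, ht3]; field_simp; exact le_rfl }
  exact regime.smallness_lt.false

lemma smallness_pow_four_mul_h1Sq_le {L K N : ℝ} {φ w : ℝ → ℝ} (S : IsStreamPair L K φ w)
    (hL : 0 < L) (hK : 0 < K) (hKL : 1 ≤ K * L) (hN : 0 ≤ N)
    (R : ResidualLE (fun y => 1 - y ^ 2) L K N φ w) :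
    smallness ^ 4 * h1Sq L K φ ≤ N * √(h1Sq L K w) := by
  set E := h1Sq L K φ
  have hE0 : 0 ≤ E := h1Sq_nonneg hL.le K φ
  rcases hE0.eq_or_lt with hzero | hpos
  · rw [← hzero, mul_zero]
    positivity
  set c := (√E)⁻¹ with hc
  have hcE : c ^ 2 * E = 1 := by rw [hc, inv_pow, sq_sqrt hE0, inv_mul_cancel₀ hpos.ne']
  have hc0 : 0 ≤ c := by positivity
  have normalised := smallness_pow_four_le_of_h1Sq_eq_one (S.const_mul c) hL hK hKL (R.const_mul c)
    (by rw [h1Sq_const_mul, norm_eq_abs, sq_abs, hcE])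
  rw [h1Sq_const_mul, norm_of_nonneg hc0, sqrt_mul (sq_nonneg c), sqrt_sq hc0,
    abs_of_nonneg hc0] at normalised
  calc smallness ^ 4 * E ≤ c * N * (c * √(h1Sq L K w)) * E := by gcongr
    _ = N * √(h1Sq L K w) * (c ^ 2 * E) := by ring
    _ = _ := by rw [hcE, mul_one]

/-- Rescaling `y` by the distance `a = √(1 - lam)` from the centre to the critical points moves
them to `±1`. -/
theorem smallness_pow_four_mul_h1Sq_stream_le {κ lam N : ℝ} {φ w : ℝ → ℝ}
    (S : IsStreamPair 1 κ φ w) (hκ : 1 ≤ κ) (hN : 0 ≤ N)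
    (R : ResidualLE (fun y => 1 - y ^ 2 - lam) 1 κ N φ w) :
    smallness ^ 4 * h1Sq 1 κ φ ≤ N * √(h1Sq 1 κ w) := by
  rcases le_or_gt 1 lam with hlam | hlam
  · have tested := S.two_mul_h1Sq_stream_le zero_le_one (v := 0) (by fun_prop)
      (fun y => by linarith [sq_nonneg y]) R
    have energy := h1Sq_nonneg zero_le_one κ φ
    have : smallness ^ 4 ≤ 1 := pow_le_one₀ smallness_pos.le (by linarith [smallness_le])
    nlinarith
  obtain ⟨a, ha, ha2⟩ : ∃ a : ℝ, 0 < a ∧ a ^ 2 = 1 - lam :=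
    ⟨√(1 - lam), sqrt_pos.2 (by linarith), sq_sqrt (by linarith)⟩
  have hL : a * a⁻¹ = 1 := mul_inv_cancel₀ ha.ne'
  have hK : κ * a / a = κ := mul_div_cancel_right₀ κ ha.ne'
  have potential : (fun y => (1 - (a * y) ^ 2 - lam) / a ^ 2) = fun y => 1 - y ^ 2 := by
    funext y
    rw [div_eq_iff (by positivity)]
    linear_combination -ha2
  have S' : IsStreamPair a⁻¹ (κ * a) (fun y => φ (a * y)) fun y => a ^ 2 * w (a * y) :=
    IsStreamPair.comp_mul ha (by rwa [hL, hK])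
  have R' := ResidualLE.comp_mul (L := a⁻¹) (K := κ * a) (N := N) (φ := φ) (w := w) ha
    (by rwa [hL, hK])
  rw [potential] at R'
  have rescaled := smallness_pow_four_mul_h1Sq_le S' (by positivity) (by positivity)
    (by rwa [mul_assoc, hL, mul_one]) (by positivity) R'
  rw [h1Sq_const_mul, norm_of_nonneg (sq_nonneg a), h1Sq_comp_mul ha.ne', h1Sq_comp_mul ha.ne',
    hL, hK, sqrt_mul (by positivity), sqrt_sq (by positivity), sqrt_mul ha.le] at rescaled
  refine le_of_mul_le_mul_left ?_ ha
  calc _ = smallness ^ 4 * (a * h1Sq 1 κ φ) := by ring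
    _ ≤ _ := rescaled
    _ = _ := by field_simp

/-! ### Duality and the complex problem -/

lemma one_le_kabs {k₁ : ℤ} (hk₁ : 1 ≤ |k₁|) (k₃ : ℤ) : 1 ≤ kabs k₁ k₃ := by
  have : (1 : ℝ) ≤ (k₁ : ℝ) ^ 2 := by rw [one_le_sq_iff_one_le_abs]; exact_mod_cast hk₁
  exact le_sqrt_of_sq_le (by linarith [sq_nonneg (k₃ : ℝ)])

lemma hm1_nonneg (k₁ k₃ : ℤ) (F : ℝ → ℂ) : 0 ≤ hm1 k₁ k₃ F := by
  refine Real.sSup_nonneg ?_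
  rintro _ ⟨g, -, -, -, -, rfl⟩
  exact norm_nonneg _

lemma hk_nonneg (k₁ k₃ : ℤ) (g : ℝ → ℂ) : 0 ≤ hk k₁ k₃ g := sqrt_nonneg _

lemma sq_hk (k₁ k₃ : ℤ) (g : ℝ → ℂ) : hk k₁ k₃ g ^ 2 = h1Sq 1 (kabs k₁ k₃) g :=
  sq_sqrt (h1Sq_nonneg zero_le_one _ g)

lemma hk_conj (k₁ k₃ : ℤ) (g : ℝ → ℂ) : hk k₁ k₃ (fun y => starRingEnd ℂ (g y)) = hk k₁ k₃ g :=
  congrArg sqrt (h1Sq_conj 1 (kabs k₁ k₃) g)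

section Duality

variable {k₁ k₃ : ℤ} {F g : ℝ → ℂ}

lemma hk_const_mul {c : ℝ} (hc : 0 ≤ c) (g : ℝ → ℂ) :
    hk k₁ k₃ (fun y => c * g y) = c * hk k₁ k₃ g := by
  have scaled := h1Sq_const_mul 1 (kabs k₁ k₃) (c : ℂ) g
  rw [Complex.norm_of_nonneg hc] at scaled
  calc hk k₁ k₃ (fun y => c * g y) = √(c ^ 2 * h1Sq 1 (kabs k₁ k₃) g) := congrArg sqrt scaled
    _ = c * hk k₁ k₃ g := by rw [sqrt_mul (sq_nonneg c), sqrt_sq hc]; rfl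

lemma integral_sq_le_sq_hk (hκ : 1 ≤ kabs k₁ k₃) (g : ℝ → ℂ) :
    ∫ y in (-1 : ℝ)..1, ‖g y‖ ^ 2 ≤ hk k₁ k₃ g ^ 2 := by
  have slope := integral_sq_nonneg (by norm_num : (-1 : ℝ) ≤ 1) fun y => ‖deriv g y‖
  have mass := integral_sq_nonneg (by norm_num : (-1 : ℝ) ≤ 1) fun y => ‖g y‖
  rw [sq_hk, h1Sq]
  linarith [le_mul_of_one_le_left mass (one_le_pow₀ hκ (n := 2))]

lemma norm_integral_mul_conj_le_hm1 (hκ : 1 ≤ kabs k₁ k₃) (hF : ContinuousOn F (Set.Icc (-1) 1))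
    (hg : ContDiff ℝ 1 g) (hgL' : g (-1) = 0) (hgL : g 1 = 0) (hg1 : hk k₁ k₃ g ≤ 1) :
    ‖∫ y in (-1 : ℝ)..1, F y * starRingEnd ℂ (g y)‖ ≤ hm1 k₁ k₃ F := by
  obtain ⟨B, hB⟩ := isCompact_Icc.exists_bound_of_continuousOn hF
  refine le_csSup ⟨∫ y in (-1 : ℝ)..1, (B ^ 2 + 1), ?_⟩ ⟨g, hg, hgL', hgL, hg1, rfl⟩
  rintro _ ⟨h, hh, -, -, hh1, rfl⟩
  have hc := hh.continuous
  have mass : ∫ y in (-1 : ℝ)..1, ‖h y‖ ^ 2 ≤ 1 :=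
    (integral_sq_le_sq_hk hκ h).trans (pow_le_one₀ (hk_nonneg _ _ h) hh1)
  calc ‖∫ y in (-1 : ℝ)..1, F y * starRingEnd ℂ (h y)‖
      ≤ ∫ y in (-1 : ℝ)..1, (B ^ 2 + ‖h y‖ ^ 2) := by
        refine intervalIntegral.norm_integral_le_of_norm_le (by norm_num)
          (.of_forall fun y hy => ?_) ((by fun_prop : Continuous _).intervalIntegrable _ _)
        rw [norm_mul, RCLike.norm_conj]
        have := hB y (Set.Ioc_subset_Icc_self hy)
        nlinarith [sq_nonneg (‖F y‖ - ‖h y‖), norm_nonneg (F y), norm_nonneg (h y)]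
    _ ≤ ∫ y in (-1 : ℝ)..1, (B ^ 2 + 1) := by
        rw [integral_add_of_continuous (by fun_prop) (by fun_prop)]
        simp only [intervalIntegral.integral_const, smul_eq_mul]
        linarith

lemma norm_integral_mul_le_hm1_mul_hk (hκ : 1 ≤ kabs k₁ k₃)
    (hF : ContinuousOn F (Set.Icc (-1) 1)) (hg : ContDiff ℝ 1 g) (hgL : g 1 = 0)
    (hgL' : g (-1) = 0) :
    ‖∫ y in (-1 : ℝ)..1, F y * g y‖ ≤ hm1 k₁ k₃ F * hk k₁ k₃ g := by
  set I := ‖∫ y in (-1 : ℝ)..1, F y * g y‖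
  have scaled {c : ℝ} (hc : 0 ≤ c) (hc1 : c * hk k₁ k₃ g ≤ 1) : c * I ≤ hm1 k₁ k₃ F := by
    refine le_trans (le_of_eq ?_) (norm_integral_mul_conj_le_hm1 hκ hF
      (g := fun y => c * starRingEnd ℂ (g y)) (contDiff_const.mul (contDiff_conj hg))
      (by simp [hgL']) (by simp [hgL]) (by rwa [hk_const_mul hc, hk_conj]))
    simp only [map_mul, Complex.conj_ofReal, Complex.conj_conj, mul_left_comm (F _)]
    rw [intervalIntegral.integral_const_mul, norm_mul, Complex.norm_of_nonneg hc]
  have hk0 := hk_nonneg k₁ k₃ g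
  rcases hk0.eq_or_lt with hzero | hpos
  · rw [← hzero, mul_zero]
    by_contra! hI
    have := scaled (c := (hm1 k₁ k₃ F + 1) / I)
      (div_nonneg (by linarith [hm1_nonneg k₁ k₃ F]) hI.le) (by rw [← hzero]; simp)
    rw [div_mul_cancel₀ _ hI.ne'] at this
    linarith
  · have := scaled (inv_nonneg.2 hk0) (inv_mul_cancel₀ hpos.ne').le
    rwa [inv_mul_le_iff₀ hpos, mul_comm] at this

end Duality

lemma h1Sq_eq_re_add_im {L K : ℝ} {f : ℝ → ℂ} (hf : ContDiff ℝ 1 f) :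
    h1Sq L K f = h1Sq L K (fun y => (f y).re) + h1Sq L K fun y => (f y).im := by
  have c0 := hf.continuous
  have c1 := hf.continuous_deriv_one
  have split {h : ℝ → ℂ} (hh : Continuous h) : ∫ y in (-L)..L, ‖h y‖ ^ 2
      = (∫ y in (-L)..L, (h y).re ^ 2) + ∫ y in (-L)..L, (h y).im ^ 2 := by
    rw [← integral_add_of_continuous (by fun_prop) (by fun_prop)]
    simp only [Complex.sq_norm, Complex.normSq_apply, ← sq]
  have slope_re := deriv_clm_apply_comp Complex.reCLM hf
  have slope_im := deriv_clm_apply_comp Complex.imCLM hf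
  simp only [Complex.reCLM_apply, Complex.imCLM_apply] at slope_re slope_im
  rw [h1Sq_eq_real, h1Sq_eq_real, slope_re, slope_im, h1Sq, split c0, split c1]
  ring

lemma h1Sq_ofReal {L K : ℝ} {g : ℝ → ℝ} (hg : ContDiff ℝ 1 g) :
    h1Sq L K (fun y => (g y : ℂ)) = h1Sq L K g := by
  have slope := deriv_clm_apply_comp Complex.ofRealCLM hg
  simp only [Complex.ofRealCLM_apply] at slope
  simp only [h1Sq, slope, Complex.norm_real]

lemma residualLE_map {κ lam N : ℝ} {φ w : ℝ → ℂ} (S : IsStreamPair 1 κ φ w)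
    (hR : ∀ g : ℝ → ℂ, ContDiff ℝ 1 g → g 1 = 0 → g (-1) = 0 →
      ‖∫ y in (-1 : ℝ)..1, ((1 - (y : ℂ) ^ 2 - lam) * w y + 2 * φ y) * g y‖ ≤ N * √(h1Sq 1 κ g))
    {c : ℂ →L[ℝ] ℝ} (hc : ∀ z, |c z| ≤ ‖z‖) :
    ResidualLE (fun y => 1 - y ^ 2 - lam) 1 κ N (fun y => c (φ y)) fun y => c (w y) := by
  intro g hg hgL hgL'
  have c0 := S.contDiff_stream.continuous
  have c1 := S.contDiff_vorticity.continuous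
  have c2 := hg.continuous
  have pointwise (y : ℝ) : ((1 - y ^ 2 - lam) * c (w y) + 2 * c (φ y)) * g y
      = c (((1 - (y : ℂ) ^ 2 - lam) * w y + 2 * φ y) * (g y : ℂ)) := by
    have real_combination : ((1 - (y : ℂ) ^ 2 - lam) * w y + 2 * φ y) * (g y : ℂ)
        = (g y * (1 - y ^ 2 - lam)) • w y + (2 * g y) • φ y := by
      simp only [Complex.real_smul]
      push_cast
      ring
    rw [real_combination, map_add, map_smul, map_smul, smul_eq_mul, smul_eq_mul]
    ring
  simp only [pointwise]
  rw [c.intervalIntegral_comp_comm ((by fun_prop : Continuous _).intervalIntegrable _ _),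
    ← h1Sq_ofReal hg]
  exact (hc _).trans (hR (fun y => g y) (Complex.ofRealCLM.contDiff.comp hg) (by simp [hgL])
    (by simp [hgL']))

lemma smallness_pow_four_mul_h1Sq_stream_le_complex {κ lam N : ℝ} {φ w : ℝ → ℂ}
    (S : IsStreamPair 1 κ φ w) (hκ : 1 ≤ κ) (hN : 0 ≤ N)
    (hR : ∀ g : ℝ → ℂ, ContDiff ℝ 1 g → g 1 = 0 → g (-1) = 0 →
      ‖∫ y in (-1 : ℝ)..1, ((1 - (y : ℂ) ^ 2 - lam) * w y + 2 * φ y) * g y‖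
        ≤ N * √(h1Sq 1 κ g)) :
    smallness ^ 4 * h1Sq 1 κ φ ≤ 2 * (N * √(h1Sq 1 κ w)) := by
  have split_w := h1Sq_eq_re_add_im (L := 1) (K := κ) S.contDiff_vorticity
  have re_w := h1Sq_nonneg zero_le_one κ fun y => (w y).re
  have im_w := h1Sq_nonneg zero_le_one κ fun y => (w y).im
  have re_le := smallness_pow_four_mul_h1Sq_stream_le (S.map Complex.reCLM) hκ hN
    (residualLE_map S hR Complex.abs_re_le_norm)
  have im_le := smallness_pow_four_mul_h1Sq_stream_le (S.map Complex.imCLM) hκ hN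
    (residualLE_map S hR Complex.abs_im_le_norm)
  simp only [Complex.reCLM_apply, Complex.imCLM_apply] at re_le im_le
  calc smallness ^ 4 * h1Sq 1 κ φ
      = smallness ^ 4 * h1Sq 1 κ (fun y => (φ y).re)
        + smallness ^ 4 * h1Sq 1 κ (fun y => (φ y).im) := by
        rw [h1Sq_eq_re_add_im S.contDiff_one_stream, mul_add]
    _ ≤ N * √(h1Sq 1 κ fun y => (w y).re) + N * √(h1Sq 1 κ fun y => (w y).im) :=
        add_le_add re_le im_le
    _ ≤ N * √(h1Sq 1 κ w) + N * √(h1Sq 1 κ w) := by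
        gcongr <;> linarith
    _ = 2 * (N * √(h1Sq 1 κ w)) := by ring

section OrrSommerfeldProblem

variable {ν ε lam : ℝ} {k₁ k₃ : ℤ} {w φ F : ℝ → ℂ}

lemma isStreamPair_of_OSslipE (P : OSslipE ν k₁ k₃ lam ε w φ F) :
    IsStreamPair 1 (kabs k₁ k₃) φ w := by
  obtain ⟨hw, hφ, -, eq, hφL', hφL, hφ''L', hφ''L⟩ := P
  refine ⟨hφ, hw.of_le one_le_two, fun y hy => ?_, hφL, hφL', ?_, ?_⟩
  · rw [← eq y hy, Complex.real_smul, Complex.ofReal_pow, sub_add_cancel]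
  · rw [← eq 1 (by norm_num), hφ''L, hφL, mul_zero, sub_zero]
  · rw [← eq (-1) (by norm_num), hφ''L', hφL', mul_zero, sub_zero]

lemma continuousOn_forcing (P : OSslipE ν k₁ k₃ lam ε w φ F) :
    ContinuousOn F (Set.Icc (-1) 1) := by
  obtain ⟨hw, hφ, eq, -⟩ := P
  have c0 := hw.continuous
  have c1 := hφ.continuous
  have c2 : Continuous (deriv (deriv w)) := (contDiff_one_deriv hw).continuous_deriv_one
  exact ContinuousOn.congr (by fun_prop) fun y hy => (eq y hy).symm

lemma integral_forcing_mul (P : OSslipE ν k₁ k₃ lam ε w φ F) {g : ℝ → ℂ} (hg : Continuous g) :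
    ∫ y in (-1 : ℝ)..1, F y * g y
      = -ν * (∫ y in (-1 : ℝ)..1, (deriv (deriv w) y - kabs k₁ k₃ ^ 2 • w y) * g y)
        + Complex.I * k₁ * (∫ y in (-1 : ℝ)..1, ((1 - (y : ℂ) ^ 2 - lam) * w y + 2 * φ y) * g y)
        - (ε * √(ν * |(k₁ : ℝ)|) : ℝ) * ∫ y in (-1 : ℝ)..1, w y * g y := by
  obtain ⟨hw, hφ, eq, -⟩ := P
  have c0 := hw.continuous
  have c1 := hφ.continuous
  have c2 : Continuous (deriv (deriv w)) := (contDiff_one_deriv hw).continuous_deriv_one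
  have integrable {f : ℝ → ℂ} (hf : Continuous f) : IntervalIntegrable f volume (-1) 1 :=
    hf.intervalIntegrable _ _
  simp only [← intervalIntegral.integral_const_mul]
  rw [← intervalIntegral.integral_add (integrable (by fun_prop)) (integrable (by fun_prop)),
    ← intervalIntegral.integral_sub (integrable (by fun_prop)) (integrable (by fun_prop))]
  refine integral_congr_Icc (by norm_num) fun y hy => ?_
  rw [← eq y hy, Complex.real_smul]
  push_cast
  ring

/-- The transport term drops out: `∫ (1 - y² - lam) |w|²` and `∫ φ w̄ = -‖u‖²` are real. -/
lemma re_integral_forcing_mul_conj (P : OSslipE ν k₁ k₃ lam ε w φ F) :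
    (∫ y in (-1 : ℝ)..1, F y * starRingEnd ℂ (w y)).re
      = ν * h1Sq 1 (kabs k₁ k₃) w
        - ε * √(ν * |(k₁ : ℝ)|) * ∫ y in (-1 : ℝ)..1, ‖w y‖ ^ 2 := by
  have S := isStreamPair_of_OSslipE P
  have c0 := S.contDiff_stream.continuous
  have c1 := S.contDiff_vorticity.continuous
  have mass : ∫ y in (-1 : ℝ)..1, w y * starRingEnd ℂ (w y)
      = ((∫ y in (-1 : ℝ)..1, ‖w y‖ ^ 2 : ℝ) : ℂ) := by
    simp only [Complex.mul_conj', ← Complex.ofReal_pow, intervalIntegral.integral_ofReal]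
  have cross : ∫ y in (-1 : ℝ)..1, φ y * starRingEnd ℂ (w y)
      = ((-h1Sq 1 (kabs k₁ k₃) φ : ℝ) : ℂ) := by
    have stream : ∫ y in (-1 : ℝ)..1, w y * starRingEnd ℂ (φ y)
        = ((-h1Sq 1 (kabs k₁ k₃) φ : ℝ) : ℂ) := S.integral_vorticity_mul_conj_stream zero_le_one
    rw [← Complex.conj_ofReal, ← stream, ← intervalIntegral.intervalIntegral_conj]
    simp only [map_mul, Complex.conj_conj, mul_comm]
  have transport : ∫ y in (-1 : ℝ)..1,
      ((1 - (y : ℂ) ^ 2 - lam) * w y + 2 * φ y) * starRingEnd ℂ (w y)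
      = (((∫ y in (-1 : ℝ)..1, (1 - y ^ 2 - lam) * ‖w y‖ ^ 2)
        + 2 * -h1Sq 1 (kabs k₁ k₃) φ : ℝ) : ℂ) := by
    rw [Complex.ofReal_add, Complex.ofReal_mul, ← cross, ← intervalIntegral.integral_ofReal,
      ← intervalIntegral.integral_const_mul, ← intervalIntegral.integral_add
        ((by fun_prop : Continuous _).intervalIntegrable _ _)
        ((by fun_prop : Continuous _).intervalIntegrable _ _)]
    refine integral_congr_Icc (by norm_num) fun y _ => ?_
    push_cast
    rw [← Complex.mul_conj']
    ring
  rw [integral_forcing_mul P (by fun_prop), transport, mass,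
    integral_deriv_deriv_sub_mul_conj _ P.1 S.vorticity_left S.vorticity_right]
  simp [-Complex.ofReal_add]

lemma nu_mul_hk_vorticity_le (P : OSslipE ν k₁ k₃ lam ε w φ F) (hk₁ : 1 ≤ |k₁|) :
    ν * hk k₁ k₃ w ≤ hm1 k₁ k₃ F + |ε| * √(ν * |(k₁ : ℝ)|) * hk k₁ k₃ φ := by
  have S := isStreamPair_of_OSslipE P
  set q := √(ν * |(k₁ : ℝ)|)
  have hq : 0 ≤ q := sqrt_nonneg _
  have enstrophy : ∫ y in (-1 : ℝ)..1, ‖w y‖ ^ 2 ≤ hk k₁ k₃ φ * hk k₁ k₃ w :=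
    S.integral_sq_vorticity_le zero_le_one
  have mass := integral_sq_nonneg (by norm_num : (-1 : ℝ) ≤ 1) fun y => ‖w y‖
  have forcing : (∫ y in (-1 : ℝ)..1, F y * starRingEnd ℂ (w y)).re
      ≤ hm1 k₁ k₃ F * hk k₁ k₃ w :=
    (Complex.re_le_norm _).trans <| (norm_integral_mul_le_hm1_mul_hk (one_le_kabs hk₁ k₃)
      (continuousOn_forcing P) (contDiff_conj S.contDiff_vorticity) (by simp [S.vorticity_right])
      (by simp [S.vorticity_left])).trans_eq
      (by rw [hk_conj])
  rw [re_integral_forcing_mul_conj P, ← sq_hk] at forcing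
  have hE := hk_nonneg k₁ k₃ φ
  rcases (hk_nonneg k₁ k₃ w).eq_or_lt with hzero | hpos
  · rw [← hzero, mul_zero]
    have := hm1_nonneg k₁ k₃ F
    positivity
  refine le_of_mul_le_mul_right ?_ hpos
  calc ν * hk k₁ k₃ w * hk k₁ k₃ w
      ≤ hm1 k₁ k₃ F * hk k₁ k₃ w + ε * q * ∫ y in (-1 : ℝ)..1, ‖w y‖ ^ 2 := by linarith
    _ ≤ hm1 k₁ k₃ F * hk k₁ k₃ w + |ε| * q * (hk k₁ k₃ φ * hk k₁ k₃ w) := by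
        gcongr
        exact le_abs_self ε
    _ = (hm1 k₁ k₃ F + |ε| * q * hk k₁ k₃ φ) * hk k₁ k₃ w := by ring

lemma norm_integral_residual_mul_le (P : OSslipE ν k₁ k₃ lam ε w φ F) (hν : 0 ≤ ν)
    (hk₁ : 1 ≤ |k₁|) {g : ℝ → ℂ} (hg : ContDiff ℝ 1 g) (hgL : g 1 = 0) (hgL' : g (-1) = 0) :
    |(k₁ : ℝ)| * ‖∫ y in (-1 : ℝ)..1, ((1 - (y : ℂ) ^ 2 - lam) * w y + 2 * φ y) * g y‖
      ≤ 2 * (hm1 k₁ k₃ F + |ε| * √(ν * |(k₁ : ℝ)|) * hk k₁ k₃ φ) * hk k₁ k₃ g := by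
  have S := isStreamPair_of_OSslipE P
  set q := √(ν * |(k₁ : ℝ)|)
  set residual := ∫ y in (-1 : ℝ)..1, ((1 - (y : ℂ) ^ 2 - lam) * w y + 2 * φ y) * g y
  set viscous := ∫ y in (-1 : ℝ)..1, (deriv (deriv w) y - kabs k₁ k₃ ^ 2 • w y) * g y
  set damping := ∫ y in (-1 : ℝ)..1, w y * g y
  have hq : 0 ≤ q := sqrt_nonneg _
  have hg0 := hk_nonneg k₁ k₃ g
  have forcing := norm_integral_mul_le_hm1_mul_hk (one_le_kabs hk₁ k₃) (continuousOn_forcing P)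
    hg hgL hgL'
  have viscous_le : ‖viscous‖ ≤ hk k₁ k₃ w * hk k₁ k₃ g :=
    norm_integral_deriv_deriv_sub_mul_le zero_le_one P.1 hg hgL hgL'
  have damping_le : ‖damping‖ ≤ hk k₁ k₃ φ * hk k₁ k₃ g :=
    S.norm_integral_vorticity_mul_le zero_le_one hg hgL hgL'
  have solved : Complex.I * k₁ * residual
      = (∫ y in (-1 : ℝ)..1, F y * g y) + ν * viscous + (ε * q : ℝ) * damping := by
    rw [integral_forcing_mul P hg.continuous]
    ring
  calc |(k₁ : ℝ)| * ‖residual‖ = ‖Complex.I * k₁ * residual‖ := by simp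
    _ ≤ ‖∫ y in (-1 : ℝ)..1, F y * g y‖ + ν * ‖viscous‖ + |ε| * q * ‖damping‖ := by
        rw [solved]
        refine norm_add₃_le.trans_eq ?_
        rw [norm_mul, norm_mul, Complex.norm_of_nonneg hν, Complex.norm_real, norm_mul,
          norm_of_nonneg hq, norm_eq_abs]
    _ ≤ hm1 k₁ k₃ F * hk k₁ k₃ g + ν * (hk k₁ k₃ w * hk k₁ k₃ g)
        + |ε| * q * (hk k₁ k₃ φ * hk k₁ k₃ g) := by gcongr
    _ = (hm1 k₁ k₃ F + ν * hk k₁ k₃ w + |ε| * q * hk k₁ k₃ φ) * hk k₁ k₃ g := by ring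
    _ ≤ 2 * (hm1 k₁ k₃ F + |ε| * q * hk k₁ k₃ φ) * hk k₁ k₃ g := by
        gcongr
        linarith [nu_mul_hk_vorticity_le P hk₁]

lemma smallness_sq_mul_hk_stream_le (P : OSslipE ν k₁ k₃ lam ε w φ F) (hν : 0 ≤ ν)
    (hk₁ : 1 ≤ |k₁|) :
    smallness ^ 2 * (√(ν * |(k₁ : ℝ)|) * hk k₁ k₃ φ)
      ≤ 2 * (hm1 k₁ k₃ F + |ε| * √(ν * |(k₁ : ℝ)|) * hk k₁ k₃ φ) := by
  have S := isStreamPair_of_OSslipE P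
  have viscous := nu_mul_hk_vorticity_le P hk₁
  have residual (g : ℝ → ℂ) (hg : ContDiff ℝ 1 g) := norm_integral_residual_mul_le P hν hk₁ hg
  set q := √(ν * |(k₁ : ℝ)|) with hq
  set Q := hm1 k₁ k₃ F + |ε| * q * hk k₁ k₃ φ
  have hk₁' : 0 < |(k₁ : ℝ)| := by exact_mod_cast one_pos.trans_le hk₁
  have hM := hk_nonneg k₁ k₃ w
  have hQ : 0 ≤ Q := (by positivity : 0 ≤ ν * hk k₁ k₃ w).trans viscous
  have core : smallness ^ 4 * hk k₁ k₃ φ ^ 2 ≤ 2 * (2 * Q / |(k₁ : ℝ)| * hk k₁ k₃ w) := by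
    rw [sq_hk]
    refine smallness_pow_four_mul_h1Sq_stream_le_complex (lam := lam) S (one_le_kabs hk₁ k₃)
      (by positivity) fun g hg hgL hgL' => ?_
    rw [div_mul_eq_mul_div, le_div_iff₀' hk₁']
    exact residual g hg hgL hgL'
  refine le_of_sq_le_sq ?_ (by positivity)
  calc (smallness ^ 2 * (q * hk k₁ k₃ φ)) ^ 2
      = ν * |(k₁ : ℝ)| * (smallness ^ 4 * hk k₁ k₃ φ ^ 2) := by
        rw [← sq_sqrt (by positivity : 0 ≤ ν * |(k₁ : ℝ)|), ← hq]
        ring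
    _ ≤ ν * |(k₁ : ℝ)| * (2 * (2 * Q / |(k₁ : ℝ)| * hk k₁ k₃ w)) := by gcongr
    _ = 4 * Q * (ν * hk k₁ k₃ w) := by
        field_simp
        ring
    _ ≤ 4 * Q * Q := by gcongr
    _ = (2 * Q) ^ 2 := by ring

end OrrSommerfeldProblem

end OrrSommerfeld

theorem OS_slip_velocity_Hm1_general :
    ∃ ε₀ C : ℝ, 0 < ε₀ ∧ ε₀ < 1 ∧ 0 < C ∧
      ∀ (ν ε lam : ℝ) (k₁ k₃ : ℤ) (w φ F : ℝ → ℂ),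
        0 < ν → |ε| ≤ ε₀ → 1 ≤ |k₁| → OSslipE ν k₁ k₃ (lam : ℂ) ε w φ F →
        hk k₁ k₃ φ ≤ C * (Real.sqrt (ν * |(k₁ : ℝ)|))⁻¹ * hm1 k₁ k₃ F := by
  have ω0 := OrrSommerfeld.smallness_pos
  refine ⟨OrrSommerfeld.smallness ^ 2 / 4, 4 / OrrSommerfeld.smallness ^ 2, by positivity,
    by nlinarith [OrrSommerfeld.smallness_le], by positivity, ?_⟩
  intro ν ε lam k₁ k₃ w φ F hν hε hk₁ P
  have estimate := OrrSommerfeld.smallness_sq_mul_hk_stream_le P hν.le hk₁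
  set q := √(ν * |(k₁ : ℝ)|)
  have hq : 0 < q := sqrt_pos.2 (mul_pos hν (by exact_mod_cast one_pos.trans_le hk₁))
  have hE := OrrSommerfeld.hk_nonneg k₁ k₃ φ
  have absorbed : |ε| * q * hk k₁ k₃ φ ≤ OrrSommerfeld.smallness ^ 2 / 4 * q * hk k₁ k₃ φ := by
    gcongr
  rw [← div_eq_mul_inv, div_div, div_mul_eq_mul_div, le_div_iff₀ (by positivity)]
  linarith

/-- **Weak-type velocity estimate with Navier-slip boundary condition,
`F ∈ H⁻¹_k`** (Corollary 2.15): `‖u‖_{L²} ≤ C(ν|k₁|)^{-1/2}‖F‖_{H⁻¹_k}`. -/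
theorem OS_slip_velocity_Hm1 :
    ∃ ε₀ ν₀ C : ℝ, 0 < ε₀ ∧ ε₀ < 1 ∧ 0 < ν₀ ∧ ν₀ < 1 ∧ 0 < C ∧
      ∀ (ν ε lam : ℝ) (k₁ k₃ : ℤ) (w φ F : ℝ → ℂ),
        0 < ν → ν ≤ ν₀ → 0 < ε → ε ≤ ε₀ → 1 ≤ |k₁| →
        IntervalIntegrable (fun y => ‖F y‖ ^ 2) MeasureTheory.volume (-1) 1 →
        OSslipE ν k₁ k₃ (lam : ℂ) ε w φ F →
        hk k₁ k₃ φ ≤ C * (Real.sqrt (ν * |(k₁ : ℝ)|))⁻¹ * hm1 k₁ k₃ F := by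
  obtain ⟨ε₀, C, hε₀, hε₁, hC, estimate⟩ := OS_slip_velocity_Hm1_general
  exact ⟨ε₀, 1 / 2, C, hε₀, hε₁, by norm_num, by norm_num, hC,
    fun ν ε lam k₁ k₃ w φ F hν _ hε hε' hk₁ _ P =>
      estimate ν ε lam k₁ k₃ w φ F hν (by rwa [abs_of_pos hε]) hk₁ P⟩

end
end

section
/- For every f ∈ H¹₀(−1,1) (i.e. f ∈ H¹(−1,1) with f(±1) = 0) the following hold: (i) ∫_{−1}^{1} |f(y)|²/(1−y²)² dy ≤ 4 ∫_{−1}^{1} |f'(y)|² dy; (ii) ∫_{−1}^{1} |f(y)|²/(1−y²) dy ≤ (1/2) ∫_{−1}^{1} |f'(y)|² dy; (iii) there is an absolute constant C > 0 such that ‖f‖²_{L²} ≤ ‖(1−y²)^{1/2} f‖^{4/3}_{L²} ‖(1−y²)^{−1} f‖^{2/3}_{L²} ≤ C ‖(1−y²)^{1/2} f‖^{4/3}_{L²} ‖f'‖^{2/3}_{L²}. -/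
open Real MeasureTheory

/-!
The substitution behind Hardy's inequality is `0 ≤ ‖f' + φ f‖²`: integrating by parts gives
`∫ (φ' - φ²) ‖f‖² ≤ ∫ ‖f'‖²` for every multiplier `φ` regular up to the endpoints and every `f`
vanishing there. With `φ = c y / (1 - y²)` the potential `φ' - φ²` is `1 / (1 - y²)²` for `c = 1`
and `2 / (1 - y²)` for `c = 2`. This `φ` is singular at `±1`, so we take `c y / (r - y²)` with
`r > 1` instead and let `r ↓ 1` by Fatou's lemma; in particular the boundary behaviour of `f`
never has to be estimated. The interpolation inequality is Hölder's inequality for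
`‖f‖² = ((1 - y²) ‖f‖²) ^ (2/3) * (‖f‖² / (1 - y²)²) ^ (1/3)`.
-/

open Set Filter Topology Interval

section MeasureSpace

variable {α : Type*} [MeasurableSpace α] {μ : Measure α}

theorem integrable_and_integral_le_of_tendsto {F : ℕ → α → ℝ} {g : α → ℝ} {I : ℝ}
    (hF : ∀ n, Integrable (F n) μ) (hF_nonneg : ∀ n, 0 ≤ᵐ[μ] F n)
    (hlim : ∀ᵐ x ∂μ, Tendsto (F · x) atTop (𝓝 (g x))) (hle : ∀ n, ∫ x, F n x ∂μ ≤ I) :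
    Integrable g μ ∧ ∫ x, g x ∂μ ≤ I := by
  have hI : 0 ≤ I := (integral_nonneg_of_ae (hF_nonneg 0)).trans (hle 0)
  have hg_meas : AEStronglyMeasurable g μ :=
    aestronglyMeasurable_of_tendsto_ae atTop (fun n => (hF n).aestronglyMeasurable) hlim
  have hg_nonneg : 0 ≤ᵐ[μ] g := by
    filter_upwards [hlim, ae_all_iff.2 hF_nonneg] with x hx hx_nonneg
    exact ge_of_tendsto' hx hx_nonneg
  have hfatou : ∫⁻ x, ENNReal.ofReal (g x) ∂μ ≤ ENNReal.ofReal I :=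
    calc ∫⁻ x, ENNReal.ofReal (g x) ∂μ
        = ∫⁻ x, liminf (fun n => ENNReal.ofReal (F n x)) atTop ∂μ :=
          lintegral_congr_ae <| hlim.mono fun x hx => (ENNReal.tendsto_ofReal hx).liminf_eq.symm
      _ ≤ liminf (fun n => ∫⁻ x, ENNReal.ofReal (F n x) ∂μ) atTop :=
          lintegral_liminf_le' fun n => (hF n).aemeasurable.ennreal_ofReal
      _ ≤ ENNReal.ofReal I := liminf_le_of_le (by isBoundedDefault) fun c hc => by
          obtain ⟨n, hn⟩ := hc.exists
          refine hn.trans ?_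
          rw [← ofReal_integral_eq_lintegral_ofReal (hF n) (hF_nonneg n)]
          exact ENNReal.ofReal_le_ofReal (hle n)
  refine ⟨(lintegral_ofReal_ne_top_iff_integrable hg_meas hg_nonneg).1
    (hfatou.trans_lt ENNReal.ofReal_lt_top).ne, ?_⟩
  rw [integral_eq_lintegral_of_nonneg_ae hg_nonneg hg_meas]
  exact ENNReal.toReal_le_of_le_ofReal hI hfatou

theorem integral_rpow_mul_rpow_le {u v : α → ℝ} {p q : ℝ} (hp : 0 ≤ p) (hq : 0 ≤ q)
    (hpq : p + q = 1) (hu : Integrable u μ) (hv : Integrable v μ) (hu_nonneg : 0 ≤ᵐ[μ] u)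
    (hv_nonneg : 0 ≤ᵐ[μ] v) :
    ∫ x, u x ^ p * v x ^ q ∂μ ≤ (∫ x, u x ∂μ) ^ p * (∫ x, v x ∂μ) ^ q := by
  have hu_integral := integral_nonneg_of_ae hu_nonneg
  have hv_integral := integral_nonneg_of_ae hv_nonneg
  have huv_nonneg : 0 ≤ᵐ[μ] fun x => u x ^ p * v x ^ q := by
    filter_upwards [hu_nonneg, hv_nonneg] with x hux hvx
    exact mul_nonneg (rpow_nonneg hux p) (rpow_nonneg hvx q)
  rw [integral_eq_lintegral_of_nonneg_ae huv_nonneg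
    ((hu.aemeasurable.pow_const p).mul (hv.aemeasurable.pow_const q)).aestronglyMeasurable]
  refine ENNReal.toReal_le_of_le_ofReal (by positivity) ?_
  calc ∫⁻ x, ENNReal.ofReal (u x ^ p * v x ^ q) ∂μ
      = ∫⁻ x, ENNReal.ofReal (u x) ^ p * ENNReal.ofReal (v x) ^ q ∂μ := by
        refine lintegral_congr_ae ?_
        filter_upwards [hu_nonneg, hv_nonneg] with x hux hvx
        rw [ENNReal.ofReal_mul (rpow_nonneg hux p), ENNReal.ofReal_rpow_of_nonneg hux hp,
          ENNReal.ofReal_rpow_of_nonneg hvx hq]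
    _ ≤ (∫⁻ x, ENNReal.ofReal (u x) ∂μ) ^ p * (∫⁻ x, ENNReal.ofReal (v x) ∂μ) ^ q :=
        ENNReal.lintegral_mul_norm_pow_le hu.aemeasurable.ennreal_ofReal
          hv.aemeasurable.ennreal_ofReal hp hq hpq
    _ = ENNReal.ofReal ((∫ x, u x ∂μ) ^ p * (∫ x, v x ∂μ) ^ q) := by
        rw [← ofReal_integral_eq_lintegral_ofReal hu hu_nonneg,
          ← ofReal_integral_eq_lintegral_ofReal hv hv_nonneg,
          ENNReal.ofReal_mul (rpow_nonneg hu_integral p),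
          ENNReal.ofReal_rpow_of_nonneg hu_integral hp,
          ENNReal.ofReal_rpow_of_nonneg hv_integral hq]

theorem eq_mul_rpow_mul_div_sq_rpow {w s : ℝ} (hw : 0 < w) (hs : 0 ≤ s) :
    s = (w * s) ^ ((2 : ℝ) / 3) * (s / w ^ 2) ^ ((1 : ℝ) / 3) := by
  have hw_pow : (w ^ 2) ^ ((1 : ℝ) / 3) = w ^ ((2 : ℝ) / 3) := by
    rw [← rpow_natCast, ← rpow_mul hw.le]
    norm_num
  have hs_pow : s ^ ((2 : ℝ) / 3) * s ^ ((1 : ℝ) / 3) = s := by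
    rw [← rpow_add_of_nonneg hs (by norm_num) (by norm_num)]
    norm_num
  rw [mul_rpow hw.le hs, div_rpow hs (by positivity), hw_pow]
  have hw_ne : w ^ ((2 : ℝ) / 3) ≠ 0 := (rpow_pos_of_pos hw _).ne'
  field_simp
  exact hs_pow.symm

theorem integral_le_sqrt_rpow_mul_sqrt_rpow {w s : α → ℝ}
    (hw : ∀ᵐ x ∂μ, 0 < w x) (hs : 0 ≤ᵐ[μ] s) (hws : Integrable (fun x => w x * s x) μ)
    (hsw : Integrable (fun x => s x / w x ^ 2) μ) :
    ∫ x, s x ∂μ ≤ √(∫ x, w x * s x ∂μ) ^ ((4 : ℝ) / 3) *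
      √(∫ x, s x / w x ^ 2 ∂μ) ^ ((2 : ℝ) / 3) := by
  have hws_nonneg : 0 ≤ᵐ[μ] fun x => w x * s x := by
    filter_upwards [hw, hs] with x hwx hsx using mul_nonneg hwx.le hsx
  have hsw_nonneg : 0 ≤ᵐ[μ] fun x => s x / w x ^ 2 := by
    filter_upwards [hs] with x hsx using div_nonneg hsx (sq_nonneg _)
  calc ∫ x, s x ∂μ
      = ∫ x, (w x * s x) ^ ((2 : ℝ) / 3) * (s x / w x ^ 2) ^ ((1 : ℝ) / 3) ∂μ := by
        refine integral_congr_ae ?_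
        filter_upwards [hw, hs] with x hwx hsx using eq_mul_rpow_mul_div_sq_rpow hwx hsx
    _ ≤ (∫ x, w x * s x ∂μ) ^ ((2 : ℝ) / 3) * (∫ x, s x / w x ^ 2 ∂μ) ^ ((1 : ℝ) / 3) :=
        integral_rpow_mul_rpow_le (by norm_num) (by norm_num) (by norm_num) hws hsw
          hws_nonneg hsw_nonneg
    _ = √(∫ x, w x * s x ∂μ) ^ ((4 : ℝ) / 3) * √(∫ x, s x / w x ^ 2 ∂μ) ^ ((2 : ℝ) / 3) := by
        rw [← rpow_div_two_eq_sqrt _ (integral_nonneg_of_ae hws_nonneg),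
          ← rpow_div_two_eq_sqrt _ (integral_nonneg_of_ae hsw_nonneg)]
        norm_num

end MeasureSpace

theorem absolutelyContinuousOnInterval_norm {F : Type*} [SeminormedAddCommGroup F] {f : ℝ → F}
    {a b : ℝ} (hf : AbsolutelyContinuousOnInterval f a b) :
    AbsolutelyContinuousOnInterval (fun y => ‖f y‖) a b :=
  squeeze_zero (fun _ => Finset.sum_nonneg fun _ _ => dist_nonneg)
    (fun _ => Finset.sum_le_sum fun _ _ =>
      (dist_norm_norm_le _ _).trans_eq (dist_eq_norm _ _).symm) hf

/-- `f` is (the absolutely continuous representative of) an element of the Sobolev space `H¹(a, b)`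
and `f'` is its derivative. The derivative is only prescribed almost everywhere, and is a separate
argument because vector-valued absolutely continuous functions need not have one. -/
structure HasH1Deriv {F : Type*} [NormedAddCommGroup F] [NormedSpace ℝ F] (f f' : ℝ → F)
    (a b : ℝ) : Prop where
  absolutelyContinuousOnInterval : AbsolutelyContinuousOnInterval f a b
  ae_hasDerivAt : ∀ᵐ y, y ∈ [[a, b]] → HasDerivAt f (f' y) y
  intervalIntegrable_norm_sq : IntervalIntegrable (fun y => ‖f' y‖ ^ 2) volume a b

theorem hasH1Deriv_deriv_of_contDiff {F : Type*} [NormedAddCommGroup F] [NormedSpace ℝ F]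
    {f : ℝ → F} (hf : ContDiff ℝ 1 f) (a b : ℝ) : HasH1Deriv f (deriv f) a b where
  absolutelyContinuousOnInterval := hf.contDiffOn.absolutelyContinuousOnInterval
  ae_hasDerivAt := ae_of_all _ fun y _ => (hf.differentiable one_ne_zero y).hasDerivAt
  intervalIntegrable_norm_sq :=
    ((hf.continuous_deriv le_rfl).norm.pow 2).intervalIntegrable _ _

section Multiplier

variable {E : Type*} [NormedAddCommGroup E] [InnerProductSpace ℝ E] {f f' : ℝ → E} {a b : ℝ}

theorem sub_sq_mul_norm_sq_le (x v : E) (p q : ℝ) :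
    (q - p ^ 2) * ‖x‖ ^ 2 ≤ ‖v‖ ^ 2 + (q * ‖x‖ ^ 2 + p * (2 * inner ℝ x v)) := by
  have hsq : 0 ≤ ‖v + p • x‖ ^ 2 := sq_nonneg _
  rw [norm_add_sq_real, norm_smul, inner_smul_right, real_inner_comm, mul_pow, norm_eq_abs,
    sq_abs] at hsq
  linarith

theorem HasH1Deriv.absolutelyContinuousOnInterval_norm_sq (hf : HasH1Deriv f f' a b) :
    AbsolutelyContinuousOnInterval (fun y => ‖f y‖ ^ 2) a b := by
  simpa only [pow_two] using
    (absolutelyContinuousOnInterval_norm hf.absolutelyContinuousOnInterval).fun_mul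
      (absolutelyContinuousOnInterval_norm hf.absolutelyContinuousOnInterval)

theorem HasH1Deriv.integral_deriv_sub_sq_mul_norm_sq_le (hab : a ≤ b) (hf : HasH1Deriv f f' a b)
    {φ : ℝ → ℝ} (hφ : AbsolutelyContinuousOnInterval φ a b) :
    ∫ y in a..b, (deriv φ y - φ y ^ 2) * ‖f y‖ ^ 2 ≤
      (∫ y in a..b, ‖f' y‖ ^ 2) + (φ b * ‖f b‖ ^ 2 - φ a * ‖f a‖ ^ 2) := by
  have hnorm := hf.absolutelyContinuousOnInterval_norm_sq
  have hderiv_mul : IntervalIntegrable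
      (fun y => deriv φ y * ‖f y‖ ^ 2 + φ y * deriv (fun y => ‖f y‖ ^ 2) y) volume a b :=
    (hφ.intervalIntegrable_deriv.mul_continuousOn hnorm.continuousOn).add
      (hnorm.intervalIntegrable_deriv.continuousOn_mul hφ.continuousOn)
  rw [← hφ.integral_deriv_mul_eq_sub hnorm,
    ← intervalIntegral.integral_add hf.intervalIntegrable_norm_sq hderiv_mul]
  refine intervalIntegral.integral_mono_ae_restrict hab
    ((hφ.intervalIntegrable_deriv.sub (hφ.continuousOn.pow 2).intervalIntegrable).mul_continuousOn
      hnorm.continuousOn) (hf.intervalIntegrable_norm_sq.add hderiv_mul) ?_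
  rw [← uIcc_of_le hab]
  refine (ae_restrict_iff' measurableSet_uIcc).2 ?_
  filter_upwards [hf.ae_hasDerivAt] with y hy hy_mem
  have hderiv : deriv (fun y => ‖f y‖ ^ 2) y = 2 * inner ℝ (f y) (f' y) :=
    (hy hy_mem).norm_sq.deriv
  rw [hderiv]
  exact sub_sq_mul_norm_sq_le _ _ _ _

end Multiplier

section HardyPotential

/-- The potential `φ' - φ²` of the multiplier `φ y = c y / (r - y²)`; for `r > 1` it regularizes
the singular Hardy weight `hardyPotential c 1` on `(-1, 1)`. -/
noncomputable def hardyPotential (c r y : ℝ) : ℝ :=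
  c * (r + (1 - c) * y ^ 2) / (r - y ^ 2) ^ 2

theorem deriv_sub_sq_eq_hardyPotential {c r y : ℝ} (hy : r - y ^ 2 ≠ 0) :
    deriv (fun y => c * y / (r - y ^ 2)) y - (c * y / (r - y ^ 2)) ^ 2 = hardyPotential c r y := by
  have hderiv := ((hasDerivAt_id' y).const_mul c).fun_div ((hasDerivAt_pow 2 y).const_sub r) hy
  rw [hderiv.deriv, hardyPotential]
  field_simp
  push_cast
  ring

theorem hardyPotential_nonneg {c r y : ℝ} (hc_nonneg : 0 ≤ c) (hc_le : c ≤ 2) (hy : y ^ 2 ≤ r) :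
    0 ≤ hardyPotential c r y :=
  div_nonneg (mul_nonneg hc_nonneg (by nlinarith [sq_nonneg y])) (sq_nonneg _)

theorem hardyPotential_one_one (y : ℝ) : hardyPotential 1 1 y = 1 / (1 - y ^ 2) ^ 2 := by
  simp [hardyPotential]

theorem hardyPotential_two_one (y : ℝ) : hardyPotential 2 1 y = 2 / (1 - y ^ 2) := by
  rcases eq_or_ne (1 - y ^ 2) 0 with hy | hy
  · simp [hardyPotential, hy]
  · rw [hardyPotential]
    field_simp
    ring

theorem tendsto_hardyPotential {c r y : ℝ} (hy : r - y ^ 2 ≠ 0) {ι : Type*} {l : Filter ι}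
    {ρ : ι → ℝ} (hρ : Tendsto ρ l (𝓝 r)) :
    Tendsto (fun i => hardyPotential c (ρ i) y) l (𝓝 (hardyPotential c r y)) :=
  ((hρ.add_const _).const_mul c).div ((hρ.sub_const _).pow 2) (pow_ne_zero 2 hy)

theorem ae_restrict_Ioc_one_sub_sq_pos :
    ∀ᵐ y ∂volume.restrict (Ioc (-1 : ℝ) 1), 0 < 1 - y ^ 2 := by
  rw [← restrict_Ioo_eq_restrict_Ioc]
  filter_upwards [ae_restrict_mem measurableSet_Ioo] with y hy
  nlinarith [hy.1, hy.2]

theorem sub_sq_ne_zero_of_mem_uIcc {r y : ℝ} (hr : 1 < r) (hy : y ∈ [[(-1 : ℝ), 1]]) :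
    r - y ^ 2 ≠ 0 := by
  rw [uIcc_of_le (by norm_num)] at hy
  nlinarith [hy.1, hy.2]

theorem continuousOn_hardyPotential {c r : ℝ} (hr : 1 < r) :
    ContinuousOn (hardyPotential c r) [[-1, 1]] :=
  .div (by fun_prop) (by fun_prop) fun _ hy => pow_ne_zero 2 (sub_sq_ne_zero_of_mem_uIcc hr hy)

end HardyPotential

section UnitInterval

variable {E : Type*} [NormedAddCommGroup E] [InnerProductSpace ℝ E] {f f' : ℝ → E}

theorem HasH1Deriv.integral_hardyPotential_le_of_one_lt (hf : HasH1Deriv f f' (-1) 1)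
    (hleft : f (-1) = 0) (hright : f 1 = 0) {c r : ℝ} (hr : 1 < r) :
    ∫ y in (-1 : ℝ)..1, hardyPotential c r y * ‖f y‖ ^ 2 ≤ ∫ y in (-1 : ℝ)..1, ‖f' y‖ ^ 2 := by
  have hφ : AbsolutelyContinuousOnInterval (fun y => c * y / (r - y ^ 2)) (-1) 1 :=
    ContDiffOn.absolutelyContinuousOnInterval
      (.div (by fun_prop) (by fun_prop) fun _ => sub_sq_ne_zero_of_mem_uIcc hr)
  calc ∫ y in (-1 : ℝ)..1, hardyPotential c r y * ‖f y‖ ^ 2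
      = ∫ y in (-1 : ℝ)..1, (deriv (fun y => c * y / (r - y ^ 2)) y -
          (c * y / (r - y ^ 2)) ^ 2) * ‖f y‖ ^ 2 :=
        intervalIntegral.integral_congr fun y hy => by
          rw [deriv_sub_sq_eq_hardyPotential (sub_sq_ne_zero_of_mem_uIcc hr hy)]
    _ ≤ ∫ y in (-1 : ℝ)..1, ‖f' y‖ ^ 2 := by
        simpa [hleft, hright] using hf.integral_deriv_sub_sq_mul_norm_sq_le (by norm_num) hφ

theorem HasH1Deriv.integrableOn_and_integral_hardyPotential_le (hf : HasH1Deriv f f' (-1) 1)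
    (hleft : f (-1) = 0) (hright : f 1 = 0) {c : ℝ} (hc_nonneg : 0 ≤ c) (hc_le : c ≤ 2) :
    IntegrableOn (fun y => hardyPotential c 1 y * ‖f y‖ ^ 2) (Ioc (-1) 1) ∧
      ∫ y in (-1 : ℝ)..1, hardyPotential c 1 y * ‖f y‖ ^ 2 ≤ ∫ y in (-1 : ℝ)..1, ‖f' y‖ ^ 2 := by
  obtain ⟨r, -, hr, hr_lim⟩ := exists_seq_strictAnti_tendsto (1 : ℝ)
  have hle n := hf.integral_hardyPotential_le_of_one_lt hleft hright (c := c) (hr n)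
  simp only [intervalIntegral.integral_of_le (show (-1 : ℝ) ≤ 1 by norm_num)] at hle ⊢
  refine integrable_and_integral_le_of_tendsto (fun n => ?_) (fun n => ?_) ?_ hle
  · exact ((continuousOn_hardyPotential (hr n)).mul
      hf.absolutelyContinuousOnInterval_norm_sq.continuousOn).intervalIntegrable.1
  · filter_upwards [ae_restrict_Ioc_one_sub_sq_pos] with y hy
    have hy_le : y ^ 2 ≤ r n := by linarith [hr n]
    exact mul_nonneg (hardyPotential_nonneg hc_nonneg hc_le hy_le) (sq_nonneg _)
  · filter_upwards [ae_restrict_Ioc_one_sub_sq_pos] with y hy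
    exact (tendsto_hardyPotential hy.ne' hr_lim).mul_const _

theorem HasH1Deriv.integrableOn_and_integral_norm_sq_div_one_sub_sq_sq_le
    (hf : HasH1Deriv f f' (-1) 1) (hleft : f (-1) = 0) (hright : f 1 = 0) :
    IntegrableOn (fun y => ‖f y‖ ^ 2 / (1 - y ^ 2) ^ 2) (Ioc (-1) 1) ∧
      ∫ y in (-1 : ℝ)..1, ‖f y‖ ^ 2 / (1 - y ^ 2) ^ 2 ≤ ∫ y in (-1 : ℝ)..1, ‖f' y‖ ^ 2 := by
  simpa only [hardyPotential_one_one, one_div_mul_eq_div] using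
    hf.integrableOn_and_integral_hardyPotential_le hleft hright zero_le_one one_le_two

theorem HasH1Deriv.integrableOn_and_integral_norm_sq_div_one_sub_sq_le
    (hf : HasH1Deriv f f' (-1) 1) (hleft : f (-1) = 0) (hright : f 1 = 0) :
    IntegrableOn (fun y => ‖f y‖ ^ 2 / (1 - y ^ 2)) (Ioc (-1) 1) ∧
      ∫ y in (-1 : ℝ)..1, ‖f y‖ ^ 2 / (1 - y ^ 2) ≤
        (1 / 2) * ∫ y in (-1 : ℝ)..1, ‖f' y‖ ^ 2 := by
  have hweight : ∀ y, ‖f y‖ ^ 2 / (1 - y ^ 2) = 1 / 2 * (hardyPotential 2 1 y * ‖f y‖ ^ 2) :=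
    fun y => by rw [hardyPotential_two_one]; ring
  obtain ⟨hint, hle⟩ :=
    hf.integrableOn_and_integral_hardyPotential_le hleft hright zero_le_two le_rfl
  simp only [hweight, intervalIntegral.integral_const_mul]
  exact ⟨hint.const_mul _, by gcongr⟩

theorem HasH1Deriv.integral_norm_sq_le_rpow_mul_rpow (hf : HasH1Deriv f f' (-1) 1)
    (hleft : f (-1) = 0) (hright : f 1 = 0) :
    ∫ y in (-1 : ℝ)..1, ‖f y‖ ^ 2 ≤
      √(∫ y in (-1 : ℝ)..1, (1 - y ^ 2) * ‖f y‖ ^ 2) ^ ((4 : ℝ) / 3) *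
        √(∫ y in (-1 : ℝ)..1, ‖f y‖ ^ 2 / (1 - y ^ 2) ^ 2) ^ ((2 : ℝ) / 3) := by
  have hweighted : IntervalIntegrable (fun y => (1 - y ^ 2) * ‖f y‖ ^ 2) volume (-1) 1 :=
    (ContinuousOn.mul (by fun_prop)
      hf.absolutelyContinuousOnInterval_norm_sq.continuousOn).intervalIntegrable
  simp only [intervalIntegral.integral_of_le (show (-1 : ℝ) ≤ 1 by norm_num)]
  exact integral_le_sqrt_rpow_mul_sqrt_rpow
    ae_restrict_Ioc_one_sub_sq_pos (ae_of_all _ fun _ => sq_nonneg _) hweighted.1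
    (hf.integrableOn_and_integral_norm_sq_div_one_sub_sq_sq_le hleft hright).1

theorem hardy_type_inequalities_general (hf : HasH1Deriv f f' (-1) 1) (hleft : f (-1) = 0)
    (hright : f 1 = 0) :
    (IntegrableOn (fun y => ‖f y‖ ^ 2 / (1 - y ^ 2) ^ 2) (Ioc (-1) 1) ∧
      ∫ y in (-1 : ℝ)..1, ‖f y‖ ^ 2 / (1 - y ^ 2) ^ 2 ≤ ∫ y in (-1 : ℝ)..1, ‖f' y‖ ^ 2) ∧
    (IntegrableOn (fun y => ‖f y‖ ^ 2 / (1 - y ^ 2)) (Ioc (-1) 1) ∧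
      ∫ y in (-1 : ℝ)..1, ‖f y‖ ^ 2 / (1 - y ^ 2) ≤
        (1 / 2) * ∫ y in (-1 : ℝ)..1, ‖f' y‖ ^ 2) ∧
    (∫ y in (-1 : ℝ)..1, ‖f y‖ ^ 2 ≤
      √(∫ y in (-1 : ℝ)..1, (1 - y ^ 2) * ‖f y‖ ^ 2) ^ ((4 : ℝ) / 3) *
        √(∫ y in (-1 : ℝ)..1, ‖f y‖ ^ 2 / (1 - y ^ 2) ^ 2) ^ ((2 : ℝ) / 3)) ∧
    (√(∫ y in (-1 : ℝ)..1, (1 - y ^ 2) * ‖f y‖ ^ 2) ^ ((4 : ℝ) / 3) *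
        √(∫ y in (-1 : ℝ)..1, ‖f y‖ ^ 2 / (1 - y ^ 2) ^ 2) ^ ((2 : ℝ) / 3) ≤
      √(∫ y in (-1 : ℝ)..1, (1 - y ^ 2) * ‖f y‖ ^ 2) ^ ((4 : ℝ) / 3) *
        √(∫ y in (-1 : ℝ)..1, ‖f' y‖ ^ 2) ^ ((2 : ℝ) / 3)) := by
  have hhardy := hf.integrableOn_and_integral_norm_sq_div_one_sub_sq_sq_le hleft hright
  have hle := hhardy.2
  exact ⟨hhardy, hf.integrableOn_and_integral_norm_sq_div_one_sub_sq_le hleft hright,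
    hf.integral_norm_sq_le_rpow_mul_rpow hleft hright, by gcongr⟩

end UnitInterval

/-- **Hardy-type inequalities on `(-1,1)`** (Lemma B.3): for every
`f ∈ H¹₀(-1,1)`,
(i) `‖f/(1-y²)‖²_{L²} ≤ 4‖f'‖²_{L²}`,
(ii) `‖f/(1-y²)^{1/2}‖²_{L²} ≤ (1/2)‖f'‖²_{L²}`,
(iii) `‖f‖²_{L²} ≤ ‖(1-y²)^{1/2}f‖^{4/3}_{L²}‖(1-y²)^{-1}f‖^{2/3}_{L²}
        ≤ C‖(1-y²)^{1/2}f‖^{4/3}_{L²}‖f'‖^{2/3}_{L²}`. -/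
theorem hardy_type_inequalities :
    ∃ C : ℝ, 0 < C ∧
      ∀ f : ℝ → ℂ, ContDiff ℝ 1 f → f (-1) = 0 → f 1 = 0 →
        ((∫ y in (-1:ℝ)..1, ‖f y‖ ^ 2 / (1 - y ^ 2) ^ 2) ≤
            4 * ∫ y in (-1:ℝ)..1, ‖deriv f y‖ ^ 2) ∧
        ((∫ y in (-1:ℝ)..1, ‖f y‖ ^ 2 / (1 - y ^ 2)) ≤
            (1/2) * ∫ y in (-1:ℝ)..1, ‖deriv f y‖ ^ 2) ∧
        ((∫ y in (-1:ℝ)..1, ‖f y‖ ^ 2) ≤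
            (Real.sqrt (∫ y in (-1:ℝ)..1, (1 - y ^ 2) * ‖f y‖ ^ 2)) ^ ((4:ℝ)/3) *
              (Real.sqrt (∫ y in (-1:ℝ)..1, ‖f y‖ ^ 2 / (1 - y ^ 2) ^ 2)) ^ ((2:ℝ)/3)) ∧
        ((Real.sqrt (∫ y in (-1:ℝ)..1, (1 - y ^ 2) * ‖f y‖ ^ 2)) ^ ((4:ℝ)/3) *
            (Real.sqrt (∫ y in (-1:ℝ)..1, ‖f y‖ ^ 2 / (1 - y ^ 2) ^ 2)) ^ ((2:ℝ)/3) ≤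
          C * (Real.sqrt (∫ y in (-1:ℝ)..1, (1 - y ^ 2) * ‖f y‖ ^ 2)) ^ ((4:ℝ)/3) *
            (Real.sqrt (∫ y in (-1:ℝ)..1, ‖deriv f y‖ ^ 2)) ^ ((2:ℝ)/3)) := by
  refine ⟨1, one_pos, fun f hf hleft hright => ?_⟩
  obtain ⟨⟨-, hquadratic⟩, ⟨-, hlinear⟩, hinterpolation⟩ :=
    hardy_type_inequalities_general (hasH1Deriv_deriv_of_contDiff hf (-1) 1) hleft hright
  have hderiv_nonneg : 0 ≤ ∫ y in (-1 : ℝ)..1, ‖deriv f y‖ ^ 2 :=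
    intervalIntegral.integral_nonneg (by norm_num) fun _ _ => sq_nonneg _
  exact ⟨by linarith, hlinear, by simpa only [one_mul] using hinterpolation⟩
end
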